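/- arXiv:1702.01346 — 4 statements merged into one kernel-verified Lean document; each statement's English description precedes it below -/
import Mathlib

section
/- Let G : ℝⁿ → ℝ be C¹ with |∇G(q)| = o(|q|) as |q| → 0, and suppose there exists μ > 2 such that 0 < μ·G(x) ≤ ⟨∇G(x), x⟩ for all x ≠ 0. Let a : ℝ → ℝ be continuous with inf_{t∈ℝ} a(t) > 0, set M := sup{a(t)·G(x) : t ∈ ℝ, |x| = 1}, and assume M < 1/2. Let f : ℝ → ℝⁿ be continuous, bounded and square integrable with (∫_ℝ |f(t)|² dt)^{1/2} < (1/(2√2))·(1 − 2M). Then there exists a C² function q : ℝ → ℝⁿ satisfying q̈(t) − q(t) + a(t)·∇G(q(t)) = f(t) for all t ∈ ℝ, and lim_{t→±∞} q(t) = lim_{t→±∞} q̇(t) = 0. -/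
/-!
The solution is found as the limit of interior minimizers of truncated action functionals; no
mountain pass argument is needed.

For `u ∈ L²(ℝ; E)` let `q = potential u` be the solution of `q̇ + q = u` vanishing at `-∞`, that is,
the convolution of `u` with the causal exponential. Then `∫ |q̇|² + |q|² = ‖u‖²`, so `u` is an
isometric coordinate on `H¹(ℝ; E)`, and Jensen's inequality gives `‖q‖_∞ ≤ ‖u‖` and `‖q‖₂ ≤ ‖u‖`.
In this coordinate the action, with forces truncated to `[-T, T]`, reads
`½‖u‖² - ∫_{[-T,T]} (a G(q) - ⟪f, q⟫)`.

The superquadratic growth condition makes `s ↦ G(s e) / s²` nondecreasing, hence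
`a(t) G(x) ≤ M |x|²` for `|x| ≤ 1` (`growth`). On the unit ball of `L²` the truncated potential
energy is therefore at most `M + δ` for any `δ` above the `L²` norm of `f` (`energy_le`), and
`M + δ < 1/2` for a suitable `δ` because `1/(2√2) ≤ 1/2`. So the action is positive on the unit
sphere and zero at the origin. Point evaluations `u ↦ q(t)` are continuous linear functionals, so the
truncated potential energy is weakly sequentially continuous on the ball; a minimizer over the ball
exists and lies in the interior (`exists_critical`).

Testing the Euler-Lagrange equation with the representers of the point evaluations, whose
reproducing kernel is `½ e^{-|t-τ|}`, gives
`q(τ) = ∫_{[-T,T]} ½ e^{-|t-τ|} (a ∇G(q) - f) dt` (`exists_truncated`). The solutions stay in the unit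
ball, so a weak limit as `T → ∞` exists, and dominated convergence yields the same equation on the
whole line (`exists_solution`). Since `½ e^{-|·|}` is the Green function of `1 - d²/dt²`, the limit
`q` is `C²` and solves the equation (`green_hasDerivAt`). Finally `q → 0` at `±∞` because `u ∈ L²`
(`tendsto_potential_zero`), and `q̇ → 0` because in addition `q̈` is bounded (`tendsto_deriv_zero`).
-/

open Real MeasureTheory Filter Topology InnerProductSpace

noncomputable section

namespace Homoclinic

/-! ### The causal exponential kernel and its potentials -/

/-- The causal exponential kernel `e^{-r}` for `r ≥ 0`, extended by zero: the fundamental solution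
of `d/dt + 1`. -/
def ker (r : ℝ) : ℝ := (Set.Ici (0 : ℝ)).indicator (fun r => exp (-r)) r

lemma ker_of_nonneg {r : ℝ} (h : 0 ≤ r) : ker r = exp (-r) := by
  simp [ker, h]

lemma ker_of_neg {r : ℝ} (h : r < 0) : ker r = 0 := by
  simp [ker, h]

lemma ker_nonneg (r : ℝ) : 0 ≤ ker r := by
  unfold ker
  exact Set.indicator_nonneg (fun _ _ => (exp_pos _).le) r

lemma ker_le_one (r : ℝ) : ker r ≤ 1 := by
  rcases lt_or_ge r 0 with h | h
  · simp [ker_of_neg h]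
  · simpa [ker_of_nonneg h] using h

lemma measurable_ker : Measurable ker :=
  (measurable_exp.comp measurable_neg).indicator measurableSet_Ici

lemma integrable_ker : Integrable ker := by
  have : IntegrableOn (fun r : ℝ => exp (-r)) (Set.Ici 0) :=
    (integrableOn_Ici_iff_integrableOn_Ioi).2 (integrableOn_exp_neg_Ioi 0)
  exact this.integrable_indicator measurableSet_Ici

lemma integral_ker : ∫ r, ker r = 1 := by
  unfold ker
  rw [integral_indicator measurableSet_Ici, integral_Ici_eq_integral_Ioi, integral_exp_neg_Ioi_zero]

lemma integrable_ker_sub (t : ℝ) : Integrable (fun s => ker (t - s)) :=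
  integrable_ker.comp_sub_left t

lemma integral_ker_sub (t : ℝ) : ∫ s, ker (t - s) = 1 := by
  rw [integral_sub_left_eq_self ker volume t, integral_ker]

/-- The composition of the causal kernel with its adjoint is the Green function `½ e^{-|t|}` of
`1 - d²/dt²`. -/
lemma integral_ker_mul_ker (t τ : ℝ) :
    ∫ s, ker (t - s) * ker (τ - s) = exp (-|t - τ|) / 2 := by
  have h : (fun s => ker (t - s) * ker (τ - s)) =
      (Set.Iic (min t τ)).indicator (fun s => exp (-(t + τ)) * exp (2 * s)) := by
    funext s
    by_cases hs : s ≤ min t τ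
    · have h1 := le_min_iff.1 hs
      rw [Set.indicator_of_mem (Set.mem_Iic.2 hs), ker_of_nonneg (by linarith),
        ker_of_nonneg (by linarith), ← exp_add, ← exp_add]
      ring_nf
    · rw [Set.indicator_of_notMem (by simpa using hs)]
      rcases not_and_or.1 (fun h => hs (le_min_iff.2 h)) with h1 | h1
      · rw [ker_of_neg (r := t - s) (by linarith), zero_mul]
      · rw [ker_of_neg (r := τ - s) (by linarith), mul_zero]
  rw [h, integral_indicator measurableSet_Iic, integral_const_mul,
    integral_exp_mul_Iic (by norm_num) (min t τ), mul_div_assoc', ← exp_add]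
  congr 2
  rcases le_total t τ with h | h
  · rw [min_eq_left h, abs_of_nonpos (by linarith)]; ring
  · rw [min_eq_right h, abs_of_nonneg (by linarith)]; ring

lemma integrable_ker_mul_ker (t τ : ℝ) : Integrable (fun s => ker (t - s) * ker (τ - s)) := by
  refine (integrable_ker_sub t).mono' ?_ (ae_of_all _ fun s => ?_)
  · exact ((measurable_ker.comp (measurable_const.sub measurable_id)).mul
      (measurable_ker.comp (measurable_const.sub measurable_id))).aestronglyMeasurable
  · rw [norm_of_nonneg (mul_nonneg (ker_nonneg _) (ker_nonneg _))]
    exact mul_le_of_le_one_right (ker_nonneg _) (ker_le_one _)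

variable {E : Type*} [NormedAddCommGroup E] [InnerProductSpace ℝ E]

lemma aesm_ker_smul {u : ℝ → E} (hu : AEStronglyMeasurable u) (t : ℝ) :
    AEStronglyMeasurable (fun s => ker (t - s) • u s) :=
  (measurable_ker.comp (measurable_const.sub measurable_id)).aestronglyMeasurable.smul hu

lemma integrable_ker_smul {u : ℝ → E} (hu : MemLp u 2) (t : ℝ) :
    Integrable (fun s => ker (t - s) • u s) := by
  have h2 := (memLp_two_iff_integrable_sq_norm hu.1).1 hu
  refine ((integrable_ker_sub t).add h2).mono' (aesm_ker_smul hu.1 t) (ae_of_all _ fun s => ?_)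
  have h0 := ker_nonneg (t - s)
  have h1 := ker_le_one (t - s)
  rw [norm_smul, norm_of_nonneg h0]
  simp only [Pi.add_apply]
  nlinarith [sq_nonneg (‖u s‖ - 1), norm_nonneg (u s), sq_nonneg (‖u s‖ - ker (t - s))]

omit [InnerProductSpace ℝ E] in
lemma integrable_ker_mul_sq {u : ℝ → E} (hu : MemLp u 2) (t : ℝ) :
    Integrable (fun s => ker (t - s) * ‖u s‖ ^ 2) := by
  have h2 := (memLp_two_iff_integrable_sq_norm hu.1).1 hu
  refine h2.mono' ((measurable_ker.comp
    (measurable_const.sub measurable_id)).aestronglyMeasurable.mul h2.1) (ae_of_all _ fun s => ?_)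
  rw [norm_of_nonneg (mul_nonneg (ker_nonneg _) (sq_nonneg _))]
  exact mul_le_of_le_one_left (sq_nonneg _) (ker_le_one _)

/-- `potential u` is the solution `q` of `q̇ + q = u` that decays at `-∞`. For `u ∈ L²` one has
`∫ |q̇|² + |q|² = ∫ |u|²`, so `u` is an isometric coordinate of `q ∈ H¹(ℝ)`. -/
def potential (u : ℝ → E) (t : ℝ) : E := ∫ s, ker (t - s) • u s

/-- Jensen's inequality for the probability density `s ↦ ker (t - s)`. -/
lemma norm_potential_sq_le [CompleteSpace E] {u : ℝ → E} (hu : MemLp u 2) (t : ℝ) :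
    ‖potential u t‖ ^ 2 ≤ ∫ s, ker (t - s) * ‖u s‖ ^ 2 := by
  set p := potential u t with hp
  have h1 : ‖p‖ ^ 2 = ∫ s, ⟪p, ker (t - s) • u s⟫_ℝ := by
    rw [integral_inner (integrable_ker_smul hu t), ← potential, ← hp, real_inner_self_eq_norm_sq]
  have h2 : ∫ s, ⟪p, ker (t - s) • u s⟫_ℝ ≤
      ∫ s, (ker (t - s) * (‖p‖ ^ 2 / 2) + ker (t - s) * ‖u s‖ ^ 2 / 2) := by
    refine integral_mono ((integrable_ker_smul hu t).const_inner p)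
      (((integrable_ker_sub t).mul_const _).add ((integrable_ker_mul_sq hu t).div_const 2))
      fun s => ?_
    have := real_inner_le_norm p (u s)
    rw [inner_smul_right]
    have h3 : ⟪p, u s⟫_ℝ ≤ ‖p‖ ^ 2 / 2 + ‖u s‖ ^ 2 / 2 := by
      nlinarith [sq_nonneg (‖p‖ - ‖u s‖)]
    have := mul_le_mul_of_nonneg_left h3 (ker_nonneg (t - s))
    simp only
    linarith
  rw [integral_add ((integrable_ker_sub t).mul_const _)
    ((integrable_ker_mul_sq hu t).div_const 2), integral_mul_const, integral_ker_sub,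
    integral_div, ← h1] at h2
  linarith

lemma norm_potential_sq_le_integral [CompleteSpace E] {u : ℝ → E} (hu : MemLp u 2) (t : ℝ) :
    ‖potential u t‖ ^ 2 ≤ ∫ s, ‖u s‖ ^ 2 := by
  refine (norm_potential_sq_le hu t).trans
    (integral_mono (integrable_ker_mul_sq hu t) ((memLp_two_iff_integrable_sq_norm hu.1).1 hu)
      fun s => ?_)
  exact mul_le_of_le_one_left (sq_nonneg _) (ker_le_one _)

lemma stronglyMeasurable_potential {u : ℝ → E} (hu : StronglyMeasurable u) :
    StronglyMeasurable (potential u) := by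
  have : StronglyMeasurable (fun p : ℝ × ℝ => ker (p.1 - p.2) • u p.2) :=
    (measurable_ker.comp (measurable_fst.sub measurable_snd)).stronglyMeasurable.smul
      (hu.comp_measurable measurable_snd)
  exact this.integral_prod_right

/-- Young's inequality `‖ker ⋆ u‖₂ ≤ ‖u‖₂`, by Jensen and Tonelli. -/
lemma potential_sq_integrable [CompleteSpace E] {u : ℝ → E} (hu : MemLp u 2)
    (hm : StronglyMeasurable u) :
    Integrable (fun t => ‖potential u t‖ ^ 2) ∧
      ∫ t, ‖potential u t‖ ^ 2 ≤ ∫ s, ‖u s‖ ^ 2 := by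
  have h2 := (memLp_two_iff_integrable_sq_norm hu.1).1 hu
  have hI := h2.integrable_convolution (ContinuousLinearMap.mul ℝ ℝ) integrable_ker
  have hE := integral_convolution (ContinuousLinearMap.mul ℝ ℝ) h2 integrable_ker
    (μ := volume) (ν := volume)
  have hc : ∀ t, ‖potential u t‖ ^ 2 ≤
      convolution (fun s => ‖u s‖ ^ 2) ker (ContinuousLinearMap.mul ℝ ℝ) volume t := by
    intro t
    refine (norm_potential_sq_le hu t).trans_eq ?_
    simp only [convolution, ContinuousLinearMap.mul_apply', mul_comm]
  have hi : Integrable (fun t => ‖potential u t‖ ^ 2) := by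
    refine hI.mono' ((stronglyMeasurable_potential hm).norm.pow 2).aestronglyMeasurable
      (ae_of_all _ fun t => ?_)
    rw [norm_of_nonneg (sq_nonneg _)]
    exact hc t
  refine ⟨hi, (integral_mono hi hI hc).trans_eq ?_⟩
  rw [hE, integral_ker]
  simp

lemma tendsto_potential_zero [CompleteSpace E] {u : ℝ → E} (hu : MemLp u 2) {l : Filter ℝ}
    [l.IsCountablyGenerated] (hl : ∀ s : ℝ, Tendsto (fun t => ker (t - s)) l (𝓝 0)) :
    Tendsto (potential u) l (𝓝 0) := by
  have h2 := (memLp_two_iff_integrable_sq_norm hu.1).1 hu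
  have h0 : Tendsto (fun t => ∫ s, ker (t - s) * ‖u s‖ ^ 2) l (𝓝 (∫ _ : ℝ, (0 : ℝ))) := by
    refine tendsto_integral_filter_of_dominated_convergence (fun s => ‖u s‖ ^ 2)
      (Eventually.of_forall fun t => (integrable_ker_mul_sq hu t).1)
      (Eventually.of_forall fun t => ae_of_all _ fun s => ?_) h2 (ae_of_all _ fun s => ?_)
    · rw [norm_of_nonneg (mul_nonneg (ker_nonneg _) (sq_nonneg _))]
      exact mul_le_of_le_one_left (sq_nonneg _) (ker_le_one _)
    · simpa using (hl s).mul_const (‖u s‖ ^ 2)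
  rw [integral_zero] at h0
  have h3 : Tendsto (fun t => ‖potential u t‖ ^ 2) l (𝓝 0) :=
    squeeze_zero (fun t => sq_nonneg _) (fun t => norm_potential_sq_le hu t) h0
  rw [tendsto_zero_iff_norm_tendsto_zero]
  simpa [Real.sqrt_sq (norm_nonneg _)] using (h3.sqrt)

lemma tendsto_ker_atTop (s : ℝ) : Tendsto (fun t => ker (t - s)) atTop (𝓝 0) := by
  have : Tendsto (fun t : ℝ => exp (-(t - s))) atTop (𝓝 0) :=
    tendsto_exp_neg_atTop_nhds_zero.comp (tendsto_atTop_add_const_right _ (-s) tendsto_id)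
  refine this.congr' ?_
  filter_upwards [eventually_ge_atTop s] with t ht
  rw [ker_of_nonneg (by linarith)]

lemma tendsto_ker_atBot (s : ℝ) : Tendsto (fun t => ker (t - s)) atBot (𝓝 0) := by
  refine tendsto_const_nhds.congr' ?_
  filter_upwards [eventually_lt_atBot s] with t ht
  rw [ker_of_neg (by linarith)]

/-! ### The evaluation operators on `L²` -/

/-- The Hilbert space `L²(ℝ; E)`, which parametrizes `H¹(ℝ; E)` through `potential`. -/
abbrev L2E (E : Type*) [NormedAddCommGroup E] := Lp E 2 (volume : Measure ℝ)

lemma norm_L2E_sq (u : L2E E) : ‖u‖ ^ 2 = ∫ s, ‖u s‖ ^ 2 := by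
  rw [← real_inner_self_eq_norm_sq, L2.inner_def]
  simp

/-- Evaluation at time `t` of the function in `H¹` with coordinate `u ∈ L²`. -/
def evalAt [CompleteSpace E] (t : ℝ) : L2E E →L[ℝ] E :=
  LinearMap.mkContinuous
    { toFun := fun u => potential u t
      map_add' := fun u v => by
        unfold potential
        rw [← integral_add (integrable_ker_smul (Lp.memLp u) t)
          (integrable_ker_smul (Lp.memLp v) t)]
        refine integral_congr_ae ?_
        filter_upwards [Lp.coeFn_add u v] with s hs
        rw [hs, Pi.add_apply, smul_add]
      map_smul' := fun c u => by
        unfold potential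
        rw [RingHom.id_apply, ← integral_smul]
        refine integral_congr_ae ?_
        filter_upwards [Lp.coeFn_smul c u] with s hs
        rw [hs, Pi.smul_apply, smul_comm] } 1 (fun u => by
    have := norm_potential_sq_le_integral (Lp.memLp u) t
    rw [← norm_L2E_sq] at this
    rw [one_mul]
    exact abs_le_of_sq_le_sq' this (norm_nonneg _) |>.2)

lemma evalAt_apply [CompleteSpace E] (t : ℝ) (u : L2E E) : evalAt t u = potential u t := rfl

lemma norm_evalAt_le [CompleteSpace E] (t : ℝ) (u : L2E E) : ‖evalAt t u‖ ≤ ‖u‖ := by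
  have := norm_potential_sq_le_integral (Lp.memLp u) t
  rw [← norm_L2E_sq] at this
  exact abs_le_of_sq_le_sq' this (norm_nonneg _) |>.2

lemma measurable_evalAt [CompleteSpace E] (u : L2E E) :
    StronglyMeasurable (fun t => evalAt t u) :=
  stronglyMeasurable_potential (Lp.stronglyMeasurable u)

lemma memLp_ker_smul (τ : ℝ) (x : E) : MemLp (fun s => ker (τ - s) • x) 2 (volume : Measure ℝ) := by
  have hm : AEStronglyMeasurable (fun s => ker (τ - s) • x) (volume : Measure ℝ) :=
    aesm_ker_smul aestronglyMeasurable_const τ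
  rw [memLp_two_iff_integrable_sq_norm hm]
  refine ((integrable_ker_mul_ker τ τ).mul_const (‖x‖ ^ 2)).congr (ae_of_all _ fun s => ?_)
  simp only [norm_smul, norm_of_nonneg (ker_nonneg _)]
  ring

/-- The representer of the functional `u ↦ ⟪evalAt τ u, x⟫`. -/
def representer (τ : ℝ) (x : E) : L2E E := (memLp_ker_smul τ x).toLp _

lemma inner_representer [CompleteSpace E] (τ : ℝ) (x : E) (u : L2E E) :
    ⟪representer τ x, u⟫_ℝ = ⟪x, evalAt τ u⟫_ℝ := by
  rw [L2.inner_def, evalAt_apply, potential, ← integral_inner (integrable_ker_smul (Lp.memLp u) τ)]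
  refine integral_congr_ae ?_
  filter_upwards [(memLp_ker_smul τ x).coeFn_toLp] with s hs
  rw [representer, hs, inner_smul_right, inner_smul_left]
  simp

/-- The reproducing kernel of `H¹(ℝ)` is `½ e^{-|t - τ|}`. -/
lemma evalAt_representer [CompleteSpace E] (t τ : ℝ) (x : E) :
    evalAt t (representer τ x) = (exp (-|t - τ|) / 2) • x := by
  rw [← integral_ker_mul_ker, ← integral_smul_const, evalAt_apply, potential]
  refine integral_congr_ae ?_
  filter_upwards [(memLp_ker_smul τ x).coeFn_toLp] with s hs
  rw [representer, hs, smul_smul]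

/-! ### Constrained minimization in a Hilbert space -/

section Hilbert

variable {H : Type*} [NormedAddCommGroup H] [InnerProductSpace ℝ H]

/-- Weak convergence of a sequence, tested through the inner product. -/
def WeakTendsto (u : ℕ → H) (v : H) : Prop :=
  ∀ w, Tendsto (fun k => ⟪u k, w⟫_ℝ) atTop (𝓝 ⟪v, w⟫_ℝ)

lemma exists_weak_subseq [CompleteSpace H] [TopologicalSpace.SeparableSpace H] (u : ℕ → H)
    (hu : ∀ k, ‖u k‖ ≤ 1) :
    ∃ v, ‖v‖ ≤ 1 ∧ ∃ φ : ℕ → ℕ, StrictMono φ ∧ WeakTendsto (u ∘ φ) v := by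
  have hc := WeakDual.isSeqCompact_closedBall ℝ H (0 : StrongDual ℝ H) 1
  have hmem : ∀ k, StrongDual.toWeakDual (InnerProductSpace.toDual ℝ H (u k)) ∈
      WeakDual.toStrongDual ⁻¹' Metric.closedBall (0 : StrongDual ℝ H) 1 := by
    intro k
    rw [Set.mem_preimage, mem_closedBall_zero_iff]
    exact ((InnerProductSpace.toDual ℝ H).norm_map (u k)).trans_le (hu k)
  obtain ⟨L, hL, φ, hφ, hlim⟩ := hc hmem
  refine ⟨(InnerProductSpace.toDual ℝ H).symm (WeakDual.toStrongDual L), ?_, φ, hφ, fun w => ?_⟩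
  · rw [LinearIsometryEquiv.norm_map]
    simpa using hL
  · rw [InnerProductSpace.toDual_symm_apply]
    exact ((WeakDual.eval_continuous w).tendsto L).comp hlim

/-- If `N` is weakly sequentially continuous on the unit ball and bounded there by a constant below
`1/2`, then `½‖u‖² - N u` attains its minimum over the ball in the interior, where `N` has gradient
`u`. -/
lemma exists_critical [CompleteSpace H] [TopologicalSpace.SeparableSpace H] (N : H → ℝ) {c : ℝ}
    (hc : c < 1 / 2) (h0 : N 0 = 0) (hN : ∀ u, ‖u‖ ≤ 1 → N u ≤ c)
    (hw : ∀ (u : ℕ → H) (v : H), (∀ k, ‖u k‖ ≤ 1) → ‖v‖ ≤ 1 → WeakTendsto u v →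
      Tendsto (fun k => N (u k)) atTop (𝓝 (N v))) :
    ∃ u, ‖u‖ < 1 ∧ ∀ v D, HasDerivAt (fun ε : ℝ => N (u + ε • v)) D 0 → ⟪u, v⟫_ℝ = D := by
  set J : H → ℝ := fun u => ‖u‖ ^ 2 / 2 - N u with hJ
  set S : Set ℝ := J '' Metric.closedBall 0 1 with hS
  have hbdd : BddBelow S := by
    refine ⟨-c, ?_⟩
    rintro _ ⟨u, hu, rfl⟩
    have := hN u (by simpa using hu)
    simp only [hJ]
    nlinarith [sq_nonneg ‖u‖]
  have h0S : J 0 ∈ S := ⟨0, by simp, rfl⟩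
  obtain ⟨y, -, hy, hyS⟩ := exists_seq_tendsto_sInf ⟨_, h0S⟩ hbdd
  choose x hx hxy using hyS
  have hx1 : ∀ k, ‖x k‖ ≤ 1 := fun k => by simpa using hx k
  obtain ⟨u, hu1, φ, hφ, hlim⟩ := exists_weak_subseq x hx1
  have hNl := hw _ u (fun k => hx1 (φ k)) hu1 hlim
  -- `‖x‖²/2 ≥ ⟪x, u⟫ - ‖u‖²/2` gives weak lower semicontinuity of the quadratic part.
  have hle : J u ≤ sInf S := by
    have h1 : Tendsto (fun k => ⟪(x ∘ φ) k, u⟫_ℝ - ‖u‖ ^ 2 / 2 - N ((x ∘ φ) k)) atTop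
        (𝓝 (⟪u, u⟫_ℝ - ‖u‖ ^ 2 / 2 - N u)) := ((hlim u).sub_const _).sub hNl
    have h2 := hy.comp hφ.tendsto_atTop
    have h3 := le_of_tendsto_of_tendsto h1 h2 (Eventually.of_forall fun k => by
      simp only [Function.comp, ← hxy, hJ]
      have := real_inner_le_norm (x (φ k)) u
      nlinarith [sq_nonneg (‖x (φ k)‖ - ‖u‖)])
    rw [real_inner_self_eq_norm_sq] at h3
    simp only [hJ]
    linarith
  have hmin : ∀ v, ‖v‖ ≤ 1 → J u ≤ J v := fun v hv =>
    hle.trans (csInf_le hbdd ⟨v, by simpa using hv, rfl⟩)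
  have hlt : ‖u‖ < 1 := by
    refine lt_of_le_of_ne hu1 fun h => ?_
    have h1 := hmin 0 (by simp)
    have h2 := hN u hu1
    simp only [hJ, h0, h, norm_zero] at h1
    norm_num at h1
    linarith
  refine ⟨u, hlt, fun v D hD => ?_⟩
  have hloc : IsLocalMin (fun ε : ℝ => J (u + ε • v)) 0 := by
    have hcont : Continuous (fun ε : ℝ => ‖u + ε • v‖) := by fun_prop
    have : ∀ᶠ ε : ℝ in 𝓝 0, ‖u + ε • v‖ < 1 :=
      hcont.continuousAt.eventually_lt continuousAt_const (by simpa using hlt)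
    filter_upwards [this] with ε hε
    simpa using hmin _ hε.le
  have hd : HasDerivAt (fun ε : ℝ => J (u + ε • v)) (⟪u, v⟫_ℝ - D) 0 := by
    have h1 : HasDerivAt (fun ε : ℝ => u + ε • v) v 0 := by
      simpa using ((hasDerivAt_id (0 : ℝ)).smul_const v).const_add u
    have h2 := (h1.norm_sq.div_const 2).sub hD
    exact h2.congr_deriv (by simp)
  have := hloc.hasDerivAt_eq_zero hd
  linarith

end Hilbert

/-! ### The problem with forces truncated in time -/

instance separableSpace_L2E [FiniteDimensional ℝ E] : TopologicalSpace.SeparableSpace (L2E E) := by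
  have : Fact ((2 : ENNReal) ≠ ⊤) := ⟨by simp⟩
  have := Lp.SecondCountableTopology (X := ℝ) (E := E) (μ := volume) (p := 2)
  infer_instance

lemma tendsto_evalAt [FiniteDimensional ℝ E] {u : ℕ → L2E E} {v : L2E E} (h : WeakTendsto u v)
    (t : ℝ) : Tendsto (fun k => evalAt t (u k)) atTop (𝓝 (evalAt t v)) := by
  set b := stdOrthonormalBasis ℝ E
  have key : ∀ w : L2E E, evalAt t w = ∑ i, ⟪w, representer t (b i)⟫_ℝ • b i := by
    intro w
    conv_lhs => rw [← b.sum_repr' (evalAt t w)]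
    refine Finset.sum_congr rfl fun i _ => ?_
    rw [← inner_representer, real_inner_comm]
  simp_rw [key]
  exact tendsto_finsetSum _ fun i _ => (h _).smul_const _

lemma exists_bound [FiniteDimensional ℝ E] {F : Type*} [NormedAddCommGroup F] {Ψ : ℝ × E → F}
    (hΨ : Continuous Ψ) (T R : ℝ) :
    ∃ C, 0 ≤ C ∧ ∀ t ∈ Set.Icc (-T) T, ∀ x, ‖x‖ ≤ R → ‖Ψ (t, x)‖ ≤ C := by
  obtain ⟨C, hC⟩ := (isCompact_Icc.prod (isCompact_closedBall (0 : E) R)).exists_bound_of_continuousOn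
    (s := Set.Icc (-T) T ×ˢ Metric.closedBall (0 : E) R) hΨ.continuousOn
  exact ⟨max C 0, le_max_right _ _, fun t ht x hx =>
    (hC (t, x) ⟨ht, by simpa using hx⟩).trans (le_max_left _ _)⟩

lemma aesm_comp_evalAt [CompleteSpace E] {F : Type*} [NormedAddCommGroup F] {Ψ : ℝ × E → F}
    (hΨ : Continuous Ψ) (u : L2E E) (ν : Measure ℝ) :
    AEStronglyMeasurable (fun t => Ψ (t, evalAt t u)) ν :=
  (hΨ.comp_stronglyMeasurable
    (measurable_id.stronglyMeasurable.prodMk (measurable_evalAt u))).aestronglyMeasurable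

lemma integrableOn_comp_evalAt [FiniteDimensional ℝ E] {F : Type*} [NormedAddCommGroup F]
    {Ψ : ℝ × E → F} (hΨ : Continuous Ψ) (u : L2E E) (T : ℝ) :
    IntegrableOn (fun t => Ψ (t, evalAt t u)) (Set.Icc (-T) T) := by
  obtain ⟨C, -, hC⟩ := exists_bound hΨ T ‖u‖
  refine Measure.integrableOn_of_bounded (M := C) (by simp) (aesm_comp_evalAt hΨ u _) ?_
  filter_upwards [ae_restrict_mem measurableSet_Icc] with t ht
  exact hC t ht _ (norm_evalAt_le t u)

/-- Weak continuity on the unit ball of the truncated potential energy. -/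
lemma tendsto_integral_comp_evalAt [FiniteDimensional ℝ E] {F : Type*} [NormedAddCommGroup F]
    [NormedSpace ℝ F] {Ψ : ℝ × E → F} (hΨ : Continuous Ψ) (T : ℝ) {u : ℕ → L2E E} {v : L2E E}
    (hu : ∀ k, ‖u k‖ ≤ 1) (h : WeakTendsto u v) :
    Tendsto (fun k => ∫ t in Set.Icc (-T) T, Ψ (t, evalAt t (u k))) atTop
      (𝓝 (∫ t in Set.Icc (-T) T, Ψ (t, evalAt t v))) := by
  obtain ⟨C, -, hC⟩ := exists_bound hΨ T 1
  refine tendsto_integral_of_dominated_convergence (fun _ => C)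
    (fun k => aesm_comp_evalAt hΨ (u k) _) (integrableOn_const (by simp)) (fun k => ?_) ?_
  · filter_upwards [ae_restrict_mem measurableSet_Icc] with t ht
    exact hC t ht _ ((norm_evalAt_le t _).trans (hu k))
  · refine ae_of_all _ fun t => ?_
    exact (hΨ.tendsto _).comp (tendsto_const_nhds.prodMk_nhds (tendsto_evalAt h t))

/-- The truncated potential energy is below `1/2` on the unit ball, because `‖q‖_∞ ≤ 1` and
`‖q‖₂ ≤ 1` there. -/
lemma energy_le [FiniteDimensional ℝ E] {a : ℝ → ℝ} {f : ℝ → E} {G : E → ℝ} {M δ : ℝ}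
    (ha : Continuous a) (hf : Continuous f) (hGc : Continuous G) (hM0 : 0 ≤ M)
    (hGM : ∀ t x, ‖x‖ ≤ 1 → a t * G x ≤ M * ‖x‖ ^ 2)
    (hf2 : Integrable (fun t => ‖f t‖ ^ 2)) (hδ : √(∫ t, ‖f t‖ ^ 2) < δ) (T : ℝ) (u : L2E E)
    (hu : ‖u‖ ≤ 1) :
    ∫ t in Set.Icc (-T) T, (a t * G (evalAt t u) - ⟪f t, evalAt t u⟫_ℝ) ≤ M + δ := by
  have hδ0 : 0 < δ := (Real.sqrt_nonneg _).trans_lt hδ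
  obtain ⟨hq, hq1⟩ := potential_sq_integrable (Lp.memLp u) (Lp.stronglyMeasurable u)
  rw [← norm_L2E_sq] at hq1
  change Integrable (fun t => ‖evalAt t u‖ ^ 2) at hq
  change ∫ t, ‖evalAt t u‖ ^ 2 ≤ _ at hq1
  have hq2 : ∫ t, ‖evalAt t u‖ ^ 2 ≤ 1 := hq1.trans (by nlinarith [norm_nonneg u])
  have hF : ∫ t, ‖f t‖ ^ 2 ≤ δ ^ 2 := by
    have h0 : 0 ≤ ∫ t, ‖f t‖ ^ 2 := integral_nonneg fun t => sq_nonneg _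
    calc ∫ t, ‖f t‖ ^ 2 = √(∫ t, ‖f t‖ ^ 2) ^ 2 := (Real.sq_sqrt h0).symm
      _ ≤ δ ^ 2 := by gcongr
  have hB : Integrable (fun t => (M + δ / 2) * ‖evalAt t u‖ ^ 2 + ‖f t‖ ^ 2 * (1 / (2 * δ))) :=
    (hq.const_mul _).add (hf2.mul_const _)
  have hΨ : Continuous (fun p : ℝ × E => a p.1 * G p.2 - ⟪f p.1, p.2⟫_ℝ) := by fun_prop
  calc ∫ t in Set.Icc (-T) T, (a t * G (evalAt t u) - ⟪f t, evalAt t u⟫_ℝ)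
      ≤ ∫ t in Set.Icc (-T) T,
          ((M + δ / 2) * ‖evalAt t u‖ ^ 2 + ‖f t‖ ^ 2 * (1 / (2 * δ))) := by
        refine integral_mono (integrableOn_comp_evalAt hΨ u T) hB.integrableOn fun t => ?_
        have h1 := hGM t _ ((norm_evalAt_le t u).trans hu)
        have h2 := (abs_le.1 (abs_real_inner_le_norm (f t) (evalAt t u))).1
        have h3 : ‖f t‖ * ‖evalAt t u‖ ≤
            δ / 2 * ‖evalAt t u‖ ^ 2 + ‖f t‖ ^ 2 * (1 / (2 * δ)) := by
          have : δ / 2 * ‖evalAt t u‖ ^ 2 + ‖f t‖ ^ 2 * (1 / (2 * δ)) - ‖f t‖ * ‖evalAt t u‖ =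
              (δ * ‖evalAt t u‖ - ‖f t‖) ^ 2 * (1 / (2 * δ)) := by
            field_simp
            ring
          have h4 : 0 ≤ (δ * ‖evalAt t u‖ - ‖f t‖) ^ 2 * (1 / (2 * δ)) := by positivity
          linarith
        simp only
        linarith
    _ ≤ ∫ t, ((M + δ / 2) * ‖evalAt t u‖ ^ 2 + ‖f t‖ ^ 2 * (1 / (2 * δ))) :=
        setIntegral_le_integral hB (ae_of_all _ fun t => by
          have : 0 ≤ M + δ / 2 := by positivity
          positivity)
    _ = (M + δ / 2) * (∫ t, ‖evalAt t u‖ ^ 2) + (∫ t, ‖f t‖ ^ 2) * (1 / (2 * δ)) := by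
        rw [integral_add (hq.const_mul _) (hf2.mul_const _), integral_const_mul, integral_mul_const]
    _ ≤ (M + δ / 2) * 1 + δ ^ 2 * (1 / (2 * δ)) := by gcongr
    _ = M + δ := by field_simp; ring

lemma hasDerivAt_energy [FiniteDimensional ℝ E] {a : ℝ → ℝ} {f : ℝ → E} {G : E → ℝ} {g : E → E}
    (ha : Continuous a) (hf : Continuous f) (hG : ∀ x, HasGradientAt G (g x) x)
    (hg : Continuous g) (T : ℝ) (u v : L2E E) :
    HasDerivAt (fun ε : ℝ => ∫ t in Set.Icc (-T) T,
        (a t * G (evalAt t (u + ε • v)) - ⟪f t, evalAt t (u + ε • v)⟫_ℝ))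
      (∫ t in Set.Icc (-T) T, ⟪a t • g (evalAt t u) - f t, evalAt t v⟫_ℝ) 0 := by
  have hGc : Continuous G := continuous_iff_continuousAt.2 fun x => (hG x).continuousAt
  have hΨ : Continuous (fun p : ℝ × E => a p.1 * G p.2 - ⟪f p.1, p.2⟫_ℝ) := by fun_prop
  have hΓ : Continuous (fun p : ℝ × E => a p.1 • g p.2 - f p.1) := by fun_prop
  obtain ⟨C, hC0, hC⟩ := exists_bound hΓ T (‖u‖ + ‖v‖)
  have h := hasDerivAt_integral_of_dominated_loc_of_deriv_le
    (μ := volume.restrict (Set.Icc (-T) T)) (s := Metric.ball (0 : ℝ) 1) (x₀ := (0 : ℝ))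
    (F := fun ε t => a t * G (evalAt t (u + ε • v)) - ⟪f t, evalAt t (u + ε • v)⟫_ℝ)
    (F' := fun ε t => ⟪a t • g (evalAt t (u + ε • v)) - f t, evalAt t v⟫_ℝ)
    (bound := fun _ => C * ‖v‖)
    (Metric.ball_mem_nhds _ one_pos)
    (Eventually.of_forall fun ε => aesm_comp_evalAt hΨ _ _)
    (integrableOn_comp_evalAt hΨ _ T)
    ((aesm_comp_evalAt hΓ _ _).inner (measurable_evalAt v).aestronglyMeasurable)
    ?_ (integrableOn_const (by simp)) ?_
  · simpa using h.2
  · filter_upwards [ae_restrict_mem measurableSet_Icc] with t ht ε hε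
    refine (norm_inner_le_norm _ _).trans ?_
    have hε1 : |ε| ≤ 1 := by simpa using (mem_ball_zero_iff.1 hε).le
    have h1 : ‖evalAt t (u + ε • v)‖ ≤ ‖u‖ + ‖v‖ := by
      refine (norm_evalAt_le t _).trans ((norm_add_le _ _).trans ?_)
      rw [norm_smul, Real.norm_eq_abs]
      gcongr
      exact mul_le_of_le_one_left (norm_nonneg _) hε1
    exact mul_le_mul (hC t ht _ h1) (norm_evalAt_le t v) (norm_nonneg _) hC0
  · refine ae_of_all _ fun t ε _ => ?_
    have hp : HasDerivAt (fun ε : ℝ => evalAt t (u + ε • v)) (evalAt t v) ε := by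
      simp only [map_add, map_smul]
      simpa using ((hasDerivAt_id ε).smul_const (evalAt t v)).const_add (evalAt t u)
    have h1 := (hG (evalAt t (u + ε • v))).hasFDerivAt.comp_hasDerivAt ε hp
    have h2 := (h1.const_mul (a t)).sub ((hasDerivAt_const ε (f t)).inner ℝ hp)
    refine h2.congr_deriv ?_
    simp [inner_sub_left, inner_smul_left]

/-- Existence for the truncated problem `q̈ - q + 1_{[-T,T]} (a ∇G(q) - f) = 0`, in the form of the
integral equation with Green function `½ e^{-|t - τ|}`. -/
lemma exists_truncated [FiniteDimensional ℝ E] {a : ℝ → ℝ} {f : ℝ → E} {G : E → ℝ} {g : E → E}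
    {M : ℝ} (ha : Continuous a) (hf : Continuous f) (hG : ∀ x, HasGradientAt G (g x) x)
    (hg : Continuous g) (hG0 : G 0 = 0) (hM0 : 0 ≤ M)
    (hGM : ∀ t x, ‖x‖ ≤ 1 → a t * G x ≤ M * ‖x‖ ^ 2)
    (hf2 : Integrable (fun t => ‖f t‖ ^ 2)) (hfs : √(∫ t, ‖f t‖ ^ 2) < 1 / 2 - M) (T : ℝ) :
    ∃ u : L2E E, ‖u‖ ≤ 1 ∧ ∀ τ, evalAt τ u = ∫ t in Set.Icc (-T) T,
      (exp (-|t - τ|) / 2) • (a t • g (evalAt t u) - f t) := by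
  have hGc : Continuous G := continuous_iff_continuousAt.2 fun x => (hG x).continuousAt
  have hΨ : Continuous (fun p : ℝ × E => a p.1 * G p.2 - ⟪f p.1, p.2⟫_ℝ) := by fun_prop
  have hΓ : Continuous (fun p : ℝ × E => a p.1 • g p.2 - f p.1) := by fun_prop
  obtain ⟨δ, hδ1, hδ2⟩ := exists_between hfs
  obtain ⟨u, hu, hcrit⟩ := exists_critical
    (fun u : L2E E => ∫ t in Set.Icc (-T) T, (a t * G (evalAt t u) - ⟪f t, evalAt t u⟫_ℝ))
    (c := M + δ) (by linarith) (by simp [hG0])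
    (fun u hu => energy_le ha hf hGc hM0 hGM hf2 hδ1 T u hu)
    (fun u v hu _ h => tendsto_integral_comp_evalAt hΨ T hu h)
  refine ⟨u, hu.le, fun τ => ext_inner_left ℝ fun x => ?_⟩
  have h1 := hcrit (representer τ x) _ (hasDerivAt_energy ha hf hG hg T u _)
  have hi : IntegrableOn (fun t => (exp (-|t - τ|) / 2) • (a t • g (evalAt t u) - f t))
      (Set.Icc (-T) T) :=
    integrableOn_comp_evalAt
      (Ψ := fun p : ℝ × E => (exp (-|p.1 - τ|) / 2) • (a p.1 • g p.2 - f p.1)) (by fun_prop) u T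
  rw [← inner_representer, real_inner_comm, h1, ← integral_inner hi]
  refine integral_congr_ae (ae_of_all _ fun t => ?_)
  simp only [evalAt_representer, inner_smul_right]
  rw [real_inner_comm]

/-! ### Passage to the limit and regularity -/

lemma integrable_green (τ : ℝ) : Integrable (fun t => exp (-|t - τ|) / 2) := by
  have h : Integrable (fun t : ℝ => exp (-|t|) / 2) := by
    refine (integrable_ker.add integrable_ker.comp_neg).mono'
      (by fun_prop : Continuous fun t : ℝ => exp (-|t|) / 2).aestronglyMeasurable
      (ae_of_all _ fun t => ?_)
    have h1 := ker_nonneg t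
    have h2 := ker_nonneg (-t)
    have h3 := exp_pos (-|t|)
    rw [norm_of_nonneg (by positivity), Pi.add_apply]
    rcases le_total 0 t with h | h
    · rw [abs_of_nonneg h] at *
      rw [ker_of_nonneg h]; linarith
    · rw [abs_of_nonpos h] at *
      rw [ker_of_nonneg (r := -t) (by linarith)]; linarith
  exact h.comp_sub_right τ

/-- Weak limits of the truncated solutions solve the integral equation on the whole line. -/
lemma exists_solution [FiniteDimensional ℝ E] {a : ℝ → ℝ} {f : ℝ → E} {G : E → ℝ} {g : E → E}
    {M B : ℝ} (ha : Continuous a) (hf : Continuous f) (hG : ∀ x, HasGradientAt G (g x) x)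
    (hg : Continuous g) (hG0 : G 0 = 0) (hM0 : 0 ≤ M)
    (hGM : ∀ t x, ‖x‖ ≤ 1 → a t * G x ≤ M * ‖x‖ ^ 2)
    (hf2 : Integrable (fun t => ‖f t‖ ^ 2)) (hfs : √(∫ t, ‖f t‖ ^ 2) < 1 / 2 - M)
    (hB : ∀ t x, ‖x‖ ≤ 1 → ‖a t • g x - f t‖ ≤ B) :
    ∃ u : L2E E, ‖u‖ ≤ 1 ∧ ∀ τ, evalAt τ u = ∫ t,
      (exp (-|t - τ|) / 2) • (a t • g (evalAt t u) - f t) := by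
  choose u hu1 hu using fun k : ℕ =>
    exists_truncated ha hf hG hg hG0 hM0 hGM hf2 hfs (k : ℝ)
  obtain ⟨v, hv1, φ, hφ, hlim⟩ := exists_weak_subseq u hu1
  refine ⟨v, hv1, fun τ => ?_⟩
  have hΛ : Continuous (fun p : ℝ × E => (exp (-|p.1 - τ|) / 2) • (a p.1 • g p.2 - f p.1)) := by
    fun_prop
  refine tendsto_nhds_unique (tendsto_evalAt hlim τ) ?_
  have hk : ∀ k, evalAt τ ((u ∘ φ) k) = ∫ t, (Set.Icc (-(φ k : ℝ)) (φ k)).indicator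
      (fun t => (exp (-|t - τ|) / 2) • (a t • g (evalAt t (u (φ k))) - f t)) t := by
    intro k
    rw [integral_indicator measurableSet_Icc]
    exact hu (φ k) τ
  simp_rw [hk]
  refine tendsto_integral_of_dominated_convergence (fun t => exp (-|t - τ|) / 2 * B)
    (fun k => (aesm_comp_evalAt hΛ _ _).indicator measurableSet_Icc)
    ((integrable_green τ).mul_const B) (fun k => ae_of_all _ fun t => ?_) (ae_of_all _ fun t => ?_)
  · refine (norm_indicator_le_norm_self _ _).trans ?_
    rw [norm_smul, norm_of_nonneg (by positivity)]
    gcongr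
    exact hB t _ ((norm_evalAt_le t _).trans (hu1 _))
  · have h1 : Tendsto (fun k => (exp (-|t - τ|) / 2) • (a t • g (evalAt t (u (φ k))) - f t)) atTop
        (𝓝 ((exp (-|t - τ|) / 2) • (a t • g (evalAt t v) - f t))) :=
      ((((hg.tendsto _).comp (tendsto_evalAt hlim t)).const_smul (a t)).sub_const (f t)).const_smul _
    refine h1.congr' ?_
    have h2 : Tendsto (fun k => (φ k : ℝ)) atTop atTop :=
      tendsto_natCast_atTop_atTop.comp hφ.tendsto_atTop
    filter_upwards [h2.eventually_ge_atTop |t|] with k hk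
    rw [Set.indicator_of_mem (Set.mem_Icc.2 (abs_le.1 hk))]

/-- Only measurability of `h` is assumed, so that the integral equation can be used to show that the
measurable function `q` it involves is continuous. -/
lemma continuous_green [CompleteSpace E] {h : ℝ → E} {B : ℝ} (hm : AEStronglyMeasurable h)
    (hB : ∀ t, ‖h t‖ ≤ B) : Continuous (fun τ => ∫ t, (exp (-|t - τ|) / 2) • h t) := by
  refine continuous_iff_continuousAt.2 fun τ₀ => ?_
  refine continuousAt_of_dominated (bound := fun t => exp 1 * (exp (-|t - τ₀|) / 2) * B)
    (Eventually.of_forall fun τ => ?_) ?_ (((integrable_green τ₀).const_mul _).mul_const B) ?_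
  · exact (by fun_prop : Continuous fun t : ℝ => exp (-|t - τ|) / 2).aestronglyMeasurable.smul hm
  · filter_upwards [Metric.ball_mem_nhds τ₀ one_pos] with τ hτ
    refine ae_of_all _ fun t => ?_
    rw [norm_smul, norm_of_nonneg (by positivity)]
    have h1 : -|t - τ| ≤ 1 + -|t - τ₀| := by
      have h2 : |τ - τ₀| < 1 := by simpa [Real.dist_eq] using hτ
      have := abs_sub_le t τ τ₀
      linarith
    have h3 : exp (-|t - τ|) ≤ exp 1 * exp (-|t - τ₀|) := by
      rw [← exp_add]; exact exp_le_exp.2 h1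
    have h4 : exp (-|t - τ|) / 2 ≤ exp 1 * (exp (-|t - τ₀|) / 2) := by linarith
    exact mul_le_mul h4 (hB t) (norm_nonneg _) (by positivity)
  · refine ae_of_all _ fun t => ?_
    exact (by fun_prop : Continuous fun τ : ℝ => (exp (-|t - τ|) / 2) • h t).continuousAt

lemma hasDerivAt_integral_Iic [CompleteSpace E] {F : ℝ → E} (hF : Continuous F)
    (hI : ∀ t, IntegrableOn F (Set.Iic t)) (t : ℝ) :
    HasDerivAt (fun τ => ∫ s in Set.Iic τ, F s) (F t) t := by
  have h : (fun τ => ∫ s in Set.Iic τ, F s) =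
      fun τ => (∫ s in Set.Iic 0, F s) + ∫ s in (0 : ℝ)..τ, F s := by
    funext τ
    rw [← intervalIntegral.integral_Iic_sub_Iic (hI 0) (hI τ)]
    abel
  rw [h]
  exact (intervalIntegral.integral_hasDerivAt_right (hF.intervalIntegrable _ _)
    (hF.stronglyMeasurableAtFilter _ _) hF.continuousAt).const_add _

/-- `½ e^{-|·|}` is the Green function of `1 - d²/dt²`. -/
lemma green_hasDerivAt [CompleteSpace E] {h q : ℝ → E} {B : ℝ} (hc : Continuous h)
    (hB : ∀ t, ‖h t‖ ≤ B) (hq : ∀ τ, q τ = ∫ t, (exp (-|t - τ|) / 2) • h t) :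
    ∃ p : ℝ → E, (∀ τ, HasDerivAt q (p τ) τ) ∧ ∀ τ, HasDerivAt p (q τ - h τ) τ := by
  have key : ∀ k : ℝ → E, Continuous k → (∀ t, ‖k t‖ ≤ B) → ∀ τ,
      IntegrableOn (fun t => exp t • k t) (Set.Iic τ) := by
    intro k hk hkB τ
    refine ((integrableOn_exp_Iic τ).mul_const B).mono'
      (by fun_prop : Continuous fun t => exp t • k t).aestronglyMeasurable (ae_of_all _ fun t => ?_)
    rw [norm_smul, norm_of_nonneg (exp_pos t).le]
    gcongr
    exact hkB t
  have hcn : Continuous (fun t => h (-t)) := by fun_prop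
  set P : ℝ → E := fun τ => ∫ t in Set.Iic τ, exp t • h t with hP
  set R : ℝ → E := fun τ => ∫ t in Set.Iic τ, exp t • h (-t) with hR
  have hPd : ∀ τ, HasDerivAt P (exp τ • h τ) τ :=
    hasDerivAt_integral_Iic (by fun_prop) (key h hc hB)
  have hRd : ∀ τ, HasDerivAt R (exp τ • h (-τ)) τ :=
    hasDerivAt_integral_Iic (by fun_prop) (key _ hcn fun t => hB _)
  have hRd' : ∀ τ, HasDerivAt (fun τ => R (-τ)) (-(exp (-τ) • h τ)) τ := by
    intro τ
    have := (hRd (-τ)).scomp τ (hasDerivAt_neg τ)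
    exact this.congr_deriv (by simp)
  have he : ∀ τ : ℝ, HasDerivAt (fun τ : ℝ => exp (-τ) / 2) (-(exp (-τ) / 2)) τ := by
    intro τ
    exact ((hasDerivAt_neg τ).exp.div_const 2).congr_deriv (by ring)
  have he' : ∀ τ : ℝ, HasDerivAt (fun τ : ℝ => exp τ / 2) (exp τ / 2) τ := by
    intro τ
    exact (Real.hasDerivAt_exp τ).div_const 2
  have hone : ∀ τ : ℝ, exp (-τ) * exp τ = 1 := fun τ => by rw [← exp_add]; simp
  have hqe : q = fun τ => (exp (-τ) / 2) • P τ + (exp τ / 2) • R (-τ) := by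
    funext τ
    have hint : Integrable (fun t => (exp (-|t - τ|) / 2) • h t) := by
      refine ((integrable_green τ).mul_const B).mono'
        (by fun_prop : Continuous fun t => (exp (-|t - τ|) / 2) • h t).aestronglyMeasurable
        (ae_of_all _ fun t => ?_)
      rw [norm_smul, norm_of_nonneg (by positivity)]
      gcongr
      exact hB t
    rw [hq τ, ← integral_add_compl (measurableSet_Iic (a := τ)) hint, Set.compl_Iic]
    congr 1
    · rw [hP]
      simp only
      rw [← integral_smul]
      refine setIntegral_congr_fun measurableSet_Iic fun t (ht : t ≤ τ) => ?_
      rw [abs_of_nonpos (by linarith), smul_smul, div_mul_eq_mul_div, ← exp_add]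
      ring_nf
    · rw [hR]
      simp only
      rw [← integral_smul, ← integral_comp_neg_Ioi]
      refine setIntegral_congr_fun measurableSet_Ioi fun t (ht : τ < t) => ?_
      rw [abs_of_pos (by linarith), smul_smul, div_mul_eq_mul_div, ← exp_add, neg_neg]
      ring_nf
  refine ⟨fun τ => (exp τ / 2) • R (-τ) - (exp (-τ) / 2) • P τ, fun τ => ?_, fun τ => ?_⟩
  · rw [hqe]
    refine (((he τ).smul (hPd τ)).add ((he' τ).smul (hRd' τ))).congr_deriv ?_
    simp only [smul_neg, smul_smul, neg_smul]
    rw [show exp (-τ) / 2 * exp τ = 1 / 2 by rw [div_mul_eq_mul_div, hone],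
      show exp τ / 2 * exp (-τ) = 1 / 2 by rw [div_mul_eq_mul_div, mul_comm, hone]]
    abel
  · rw [hqe]
    refine (((he' τ).smul (hRd' τ)).sub ((he τ).smul (hPd τ))).congr_deriv ?_
    simp only [smul_neg, smul_smul, neg_smul]
    rw [show exp (-τ) / 2 * exp τ = 1 / 2 by rw [div_mul_eq_mul_div, hone],
      show exp τ / 2 * exp (-τ) = 1 / 2 by rw [div_mul_eq_mul_div, mul_comm, hone]]
    module

/-- If `q → 0` and `q̈` is bounded then `q̇ → 0`. -/
lemma tendsto_deriv_zero {q p r : ℝ → E} {C : ℝ} (hq : ∀ t, HasDerivAt q (p t) t)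
    (hp : ∀ t, HasDerivAt p (r t) t) (hr : ∀ t, ‖r t‖ ≤ C) {l : Filter ℝ}
    (hl : ∀ c, Tendsto (fun t : ℝ => t + c) l l) (h0 : Tendsto q l (𝓝 0)) :
    Tendsto p l (𝓝 0) := by
  have hC : 0 ≤ C := (norm_nonneg _).trans (hr 0)
  -- first order Taylor expansion with remainder
  have key : ∀ t c, 0 < c → c * ‖p t‖ ≤ ‖q (t + c) - q t‖ + C * c * c := by
    intro t c hc
    have h1 : ∀ s ∈ Set.Icc t (t + c), ‖p s - p t‖ ≤ C * c := by
      intro s hs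
      have := convex_univ.norm_image_sub_le_of_norm_hasDerivWithin_le (f := p) (f' := r) (C := C)
        (fun x _ => (hp x).hasDerivWithinAt) (fun x _ => hr x) (Set.mem_univ t) (Set.mem_univ s)
      refine this.trans ?_
      rw [Real.norm_eq_abs, abs_of_nonneg (by linarith [hs.1])]
      gcongr
      linarith [hs.2]
    have h2 := (convex_Icc t (t + c)).norm_image_sub_le_of_norm_hasDerivWithin_le
      (f := fun s => q s - s • p t) (f' := fun s => p s - p t) (C := C * c)
      (fun x _ => ((hq x).sub (by simpa using (hasDerivAt_id x).smul_const (p t))).hasDerivWithinAt)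
      h1 (Set.left_mem_Icc.2 (by linarith)) (Set.right_mem_Icc.2 (by linarith))
    have h3 : c • p t = (q (t + c) - q t) -
        ((q (t + c) - (t + c) • p t) - (q t - t • p t)) := by module
    have h4 : c * ‖p t‖ = ‖c • p t‖ := by rw [norm_smul, norm_of_nonneg hc.le]
    have h5 : ‖(t + c) - t‖ = c := by rw [add_sub_cancel_left, norm_of_nonneg hc.le]
    rw [h5] at h2
    rw [h4, h3]
    exact (norm_sub_le _ _).trans (by gcongr)
  rw [Metric.tendsto_nhds]
  intro ε hε
  set c := ε / (2 * (C + 1)) with hc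
  have hc0 : 0 < c := by positivity
  have h1 : Tendsto (fun t => ‖q (t + c) - q t‖) l (𝓝 0) := by
    simpa using ((h0.comp (hl c)).sub h0).norm
  filter_upwards [h1.eventually_lt_const (show 0 < c * (ε / 2) by positivity)] with t ht
  rw [dist_zero_right]
  have h2 := key t c hc0
  have h3 : C * c ≤ ε / 2 := by
    have : (C + 1) * c = ε / 2 := by rw [hc]; field_simp
    nlinarith
  have h4 : c * ‖p t‖ < c * ε := by nlinarith
  exact lt_of_mul_lt_mul_left h4 hc0.le

/-- The superquadratic growth condition makes `s ↦ G (s e) / s²` nondecreasing, which gives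
`G x ≤ ‖x‖² G (x / ‖x‖)` in the unit ball. -/
lemma growth {G : E → ℝ} {g : E → E} [CompleteSpace E] {μ : ℝ}
    (hG : ∀ x, HasGradientAt G (g x) x) (hμ : 2 < μ)
    (hAR : ∀ x, x ≠ 0 → 0 < μ * G x ∧ μ * G x ≤ ⟪g x, x⟫_ℝ) {x : E} (hx0 : x ≠ 0)
    (hx1 : ‖x‖ ≤ 1) : G x ≤ ‖x‖ ^ 2 * G (‖x‖⁻¹ • x) := by
  have hn : 0 < ‖x‖ := norm_pos_iff.2 hx0
  set e := ‖x‖⁻¹ • x with he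
  have hxe : ‖x‖ • e = x := by rw [he, smul_smul, mul_inv_cancel₀ hn.ne', one_smul]
  have he0 : e ≠ 0 := fun h => hx0 (by rw [← hxe, h, smul_zero])
  have hd : ∀ s : ℝ, 0 < s → HasDerivAt (fun s : ℝ => G (s • e) / s ^ 2)
      ((⟪g (s • e), e⟫_ℝ * s ^ 2 - G (s • e) * (2 * s)) / (s ^ 2) ^ 2) s := by
    intro s hs
    have h1 : HasDerivAt (fun s : ℝ => s • e) e s := by
      simpa using (hasDerivAt_id s).smul_const e
    have h2 := (hG (s • e)).hasFDerivAt.comp_hasDerivAt s h1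
    have h3 := h2.div (hasDerivAt_pow 2 s) (by positivity)
    refine h3.congr_deriv ?_
    simp
  have hmono : MonotoneOn (fun s : ℝ => G (s • e) / s ^ 2) (Set.Icc ‖x‖ 1) := by
    have hpos : ∀ s ∈ Set.Icc ‖x‖ 1, 0 < s := fun s hs => hn.trans_le hs.1
    refine monotoneOn_of_deriv_nonneg (convex_Icc _ _)
      (fun s hs => (hd s (hpos s hs)).continuousAt.continuousWithinAt)
      (fun s hs => (hd s (hpos s (interior_subset hs))).differentiableAt.differentiableWithinAt)
      fun s hs => ?_
    have hs0 := hpos s (interior_subset hs)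
    rw [(hd s hs0).deriv]
    obtain ⟨h1, h2⟩ := hAR (s • e) (smul_ne_zero hs0.ne' he0)
    have h3 : 0 < G (s • e) := pos_of_mul_pos_right h1 (by linarith)
    rw [inner_smul_right] at h2
    have h4 : 2 * G (s • e) ≤ s * ⟪g (s • e), e⟫_ℝ := by nlinarith
    refine div_nonneg ?_ (by positivity)
    nlinarith
  have := hmono (Set.left_mem_Icc.2 hx1) (Set.right_mem_Icc.2 hx1) hx1
  simp only [hxe, one_smul, one_pow, div_one] at this
  rwa [div_le_iff₀ (by positivity), mul_comm] at this

end Homoclinic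

end

/-! ### Existence of a homoclinic type solution -/

/-- Theorem 1.2 (main theorem): existence of a homoclinic type solution for the
forced second order Lagrangian system `q̈ - q + a(t)∇G(q) = f(t)`. -/
theorem homoclinic_type_solution_of_forced_lagrangian
    (n : ℕ) (hn : 1 ≤ n)
    (G : EuclideanSpace ℝ (Fin n) → ℝ)
    (a : ℝ → ℝ) (f : ℝ → EuclideanSpace ℝ (Fin n)) (μ M : ℝ)
    -- (C1)
    (hG : ContDiff ℝ 1 G)
    (hGo : (fun x : EuclideanSpace ℝ (Fin n) => ‖gradient G x‖)
      =o[nhds (0 : EuclideanSpace ℝ (Fin n))] (fun x => ‖x‖))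
    -- (C2)
    (hμ : 2 < μ)
    (hAR : ∀ x : EuclideanSpace ℝ (Fin n), x ≠ 0 →
      0 < μ * G x ∧ μ * G x ≤ ⟪gradient G x, x⟫_ℝ)
    -- (C3)
    (ha : Continuous a)
    (hainf : 0 < ⨅ t, a t)
    -- (C4)
    (hMdef : M = sSup {y : ℝ | ∃ t : ℝ, ∃ x : EuclideanSpace ℝ (Fin n), ‖x‖ = 1 ∧ y = a t * G x})
    (hMbdd : BddAbove {y : ℝ | ∃ t : ℝ, ∃ x : EuclideanSpace ℝ (Fin n), ‖x‖ = 1 ∧ y = a t * G x})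
    (hM : M < 1 / 2)
    -- assumptions on the forcing term f, including (C5)
    (hfc : Continuous f)
    (hfb : ∃ C, ∀ t, ‖f t‖ ≤ C)
    (hf2 : Integrable (fun t => ‖f t‖ ^ 2))
    (hfs : Real.sqrt (∫ t, ‖f t‖ ^ 2) < 1 / (2 * Real.sqrt 2) * (1 - 2 * M)) :
    ∃ q : ℝ → EuclideanSpace ℝ (Fin n), ContDiff ℝ 2 q ∧
      (∀ t, deriv (deriv q) t - q t + a t • gradient G (q t) = f t) ∧
      Tendsto q atTop (nhds 0) ∧ Tendsto q atBot (nhds 0) ∧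
      Tendsto (deriv q) atTop (nhds 0) ∧ Tendsto (deriv q) atBot (nhds 0) := by
  have : Nontrivial (EuclideanSpace ℝ (Fin n)) := by
    have : Nonempty (Fin n) := ⟨⟨0, hn⟩⟩
    infer_instance
  set g := gradient G with hgdef
  have hGg : ∀ x, HasGradientAt G (g x) x := fun x =>
    (hG.differentiable one_ne_zero x).hasGradientAt
  have hg : Continuous g :=
    (InnerProductSpace.toDual ℝ (EuclideanSpace ℝ (Fin n))).symm.continuous.comp
      (hG.continuous_fderiv one_ne_zero)
  have hGc : Continuous G := hG.continuous
  -- The growth condition extends to `x = 0` by density and forces `G 0 = 0`.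
  have hG0 : G 0 = 0 := by
    have hd : Dense ({0}ᶜ : Set (EuclideanSpace ℝ (Fin n))) := dense_compl_singleton 0
    have h1 : IsClosed {x : EuclideanSpace ℝ (Fin n) | 0 ≤ μ * G x} :=
      isClosed_le (by fun_prop) (by fun_prop)
    have h2 : IsClosed {x : EuclideanSpace ℝ (Fin n) | μ * G x ≤ ⟪g x, x⟫_ℝ} :=
      isClosed_le (by fun_prop) (by fun_prop)
    have h3 : (0 : EuclideanSpace ℝ (Fin n)) ∈ {x | 0 ≤ μ * G x} :=
      h1.closure_subset_iff.2 (fun x hx => (hAR x hx).1.le) (hd 0)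
    have h4 : (0 : EuclideanSpace ℝ (Fin n)) ∈ {x | μ * G x ≤ ⟪g x, x⟫_ℝ} :=
      h2.closure_subset_iff.2 (fun x hx => (hAR x hx).2) (hd 0)
    have h5 : μ * G 0 = 0 := le_antisymm (by simpa using h4) h3
    exact (mul_eq_zero.1 h5).resolve_left (by linarith)
  have hGpos : ∀ x : EuclideanSpace ℝ (Fin n), x ≠ 0 → 0 < G x := fun x hx =>
    pos_of_mul_pos_right (hAR x hx).1 (by linarith)
  have haG : ∀ t (x : EuclideanSpace ℝ (Fin n)), ‖x‖ = 1 → a t * G x ≤ M := fun t x hx => by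
    rw [hMdef]
    exact le_csSup hMbdd ⟨t, x, hx, rfl⟩
  -- A family not bounded below would have the junk infimum `0`.
  have hab : BddBelow (Set.range a) := by
    by_contra h
    rw [Real.iInf_of_not_bddBelow h] at hainf
    exact lt_irrefl _ hainf
  have hapos : ∀ t, 0 < a t := fun t => hainf.trans_le (ciInf_le hab t)
  obtain ⟨e, he⟩ := exists_norm_eq (EuclideanSpace ℝ (Fin n)) zero_le_one
  have he0 : e ≠ 0 := fun h => by simp [h] at he
  have hM0 : 0 ≤ M := (mul_pos (hapos 0) (hGpos e he0)).le.trans (haG 0 e he)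
  have haA : ∀ t, a t ≤ M / G e := fun t => (le_div_iff₀ (hGpos e he0)).2 (haG t e he)
  have hGM : ∀ t (x : EuclideanSpace ℝ (Fin n)), ‖x‖ ≤ 1 → a t * G x ≤ M * ‖x‖ ^ 2 := by
    intro t x hx
    rcases eq_or_ne x 0 with rfl | hx0
    · simp [hG0]
    · have h1 := Homoclinic.growth hGg hμ hAR hx0 hx
      have h2 := haG t (‖x‖⁻¹ • x) (by
        rw [norm_smul, norm_inv, norm_norm, inv_mul_cancel₀ (norm_ne_zero_iff.2 hx0)])
      calc a t * G x ≤ a t * (‖x‖ ^ 2 * G (‖x‖⁻¹ • x)) := by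
            gcongr
            exact (hapos t).le
        _ = (a t * G (‖x‖⁻¹ • x)) * ‖x‖ ^ 2 := by ring
        _ ≤ M * ‖x‖ ^ 2 := by gcongr
  have hfs' : √(∫ t, ‖f t‖ ^ 2) < 1 / 2 - M := by
    refine hfs.trans_le ?_
    have h1 : (1 : ℝ) ≤ √2 := Real.one_le_sqrt.2 (by norm_num)
    have h2 : 1 / (2 * √2) ≤ 1 / 2 := by
      apply one_div_le_one_div_of_le <;> linarith
    nlinarith
  obtain ⟨Cf, hCf⟩ := hfb
  obtain ⟨Cg, hCg⟩ :=
    (isCompact_closedBall (0 : EuclideanSpace ℝ (Fin n)) 1).exists_bound_of_continuousOn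
      hg.continuousOn
  have hB : ∀ t (x : EuclideanSpace ℝ (Fin n)), ‖x‖ ≤ 1 →
      ‖a t • g x - f t‖ ≤ M / G e * Cg + Cf := by
    intro t x hx
    refine (norm_sub_le _ _).trans (add_le_add ?_ (hCf t))
    rw [norm_smul, norm_of_nonneg (hapos t).le]
    exact mul_le_mul (haA t) (hCg x (by simpa using hx)) (norm_nonneg _)
      ((hapos t).le.trans (haA t))
  obtain ⟨u, hu1, hu⟩ :=
    Homoclinic.exists_solution ha hfc hGg hg hG0 hM0 hGM hf2 hfs' hB
  set q : ℝ → EuclideanSpace ℝ (Fin n) := fun t => Homoclinic.evalAt t u with hq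
  have hq1 : ∀ t, ‖q t‖ ≤ 1 := fun t => (Homoclinic.norm_evalAt_le t u).trans hu1
  have hhB : ∀ t, ‖a t • g (q t) - f t‖ ≤ M / G e * Cg + Cf := fun t => hB t _ (hq1 t)
  have hqc : Continuous q := by
    have h := Homoclinic.continuous_green
      (h := fun t => a t • g (q t) - f t)
      (Homoclinic.aesm_comp_evalAt
        (Ψ := fun p : ℝ × EuclideanSpace ℝ (Fin n) => a p.1 • g p.2 - f p.1)
        (by fun_prop) u volume) hhB
    exact h.congr fun τ => (hu τ).symm
  obtain ⟨p, hp, hp'⟩ := Homoclinic.green_hasDerivAt (h := fun t => a t • g (q t) - f t)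
    (q := q) (by fun_prop) hhB hu
  have hdq : deriv q = p := funext fun t => (hp t).deriv
  have hdp : deriv p = fun t => q t - (a t • g (q t) - f t) := funext fun t => (hp' t).deriv
  have hr : ∀ t, ‖q t - (a t • g (q t) - f t)‖ ≤ 1 + (M / G e * Cg + Cf) := fun t =>
    (norm_sub_le _ _).trans (add_le_add (hq1 t) (hhB t))
  have htop : Tendsto q atTop (𝓝 0) :=
    Homoclinic.tendsto_potential_zero (Lp.memLp u) Homoclinic.tendsto_ker_atTop
  have hbot : Tendsto q atBot (𝓝 0) :=
    Homoclinic.tendsto_potential_zero (Lp.memLp u) Homoclinic.tendsto_ker_atBot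
  refine ⟨q, ?_, fun t => ?_, htop, hbot, ?_, ?_⟩
  · have hC1 : ContDiff ℝ 1 p := by
      rw [contDiff_one_iff_deriv, hdp]
      exact ⟨fun t => (hp' t).differentiableAt, by fun_prop⟩
    rw [show (2 : WithTop ℕ∞) = 1 + 1 by norm_num, contDiff_succ_iff_deriv, hdq]
    exact ⟨fun t => (hp t).differentiableAt, by simp, hC1⟩
  · rw [hdq, hdp]
    have h : ∀ x y z : EuclideanSpace ℝ (Fin n), x - (y - z) - x + y = z := fun x y z => by abel
    exact h _ _ _
  · rw [hdq]
    exact Homoclinic.tendsto_deriv_zero hp hp' hr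
      (fun c => tendsto_atTop_add_const_right _ c tendsto_id) htop
  · rw [hdq]
    exact Homoclinic.tendsto_deriv_zero hp hp' hr
      (fun c => tendsto_atBot_add_const_right _ c tendsto_id) hbot
end

section
/- Let G : ℝⁿ → ℝ be C² and suppose there exists μ > 2 such that 0 < μ·G(x) ≤ ⟨∇G(x), x⟩ for all x ≠ 0. Let a : ℝ → ℝ be continuous with inf_{t∈ℝ} a(t) > 0, and assume a is almost periodic in the sense of Bohr, i.e. for every ε > 0 there exist finitely many frequencies λ₁,…,λ_m ∈ ℝ and coefficients c₁,…,c_m, d₁,…,d_m ∈ ℝ such that sup_{t∈ℝ} |a(t) − Σ_{j=1}^{m} (c_j cos(λ_j t) + d_j sin(λ_j t))| < ε. Then there exists a nonzero C² function q : ℝ → ℝⁿ satisfying q̈(t) − q(t) + a(t)·∇G(q(t)) = 0 for all t ∈ ℝ, and lim_{t→±∞} q(t) = lim_{t→±∞} q̇(t) = 0. -/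
/-!
Homoclinic solutions are the nonzero critical points of
`φ(u) = ‖u‖² / 2 - ∫ a G(u)` on `H¹(ℝ, ℝⁿ)`, whose gradient is `D u = u - green (a ∇G(u))`, where
`green f` is the bounded solution of `w - w'' = f`. The superquadratic growth of `G` gives `φ` a
mountain-pass geometry and bounded Palais–Smale sequences. What is missing is compactness: a
Palais–Smale sequence may drift to infinity, and then its translates converge to a solution of an
equation with another coefficient in the hull of `a`. Almost periodicity has to prevent this.

The Palais–Smale sequence is chosen as an orbit `u_k` of gradient descent with a fixed step
(`mountain_pass_descent`), so that besides `D u_k → 0` the increments `u_{k+1} - u_k` tend to zero.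
It does not vanish: there is `δ > 0` such that `sup |u_k| > δ` for all large `k`
(`SuperQuad.exists_palaisSmale`).

Translates of `u_k` along shifts `τ_k` with `a(· + τ_k) → a` pointwise have limits that do solve the
original equation (`SuperQuad.exists_homoclinic_of_translates`): pointwise limits suffice, since
`green` is continuous under bounded pointwise convergence, and the limit is square integrable, hence
vanishes at infinity with its derivative. Suppose now that no homoclinic solution exists. Then
`|u_k|` is small, for all large `k`, at every sufficiently good almost period of `a`
(`SuperQuad.small_at_almostPeriods`); these points are barriers, and there are such points
arbitrarily far to the left and to the right (`IsAlmostPeriodic.exists_almostPeriod`). Fix a `k` and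
barriers `±τ` around a point where `|u_k| > δ`. As `|u_k| ≤ δ` makes the linear part of the equation
dominate, the maximum principle (`norm_green_le_of_isLocalMax`) shows that the maximum of `|u_k|` on
`[-τ, τ]` is either small or above `δ`; as the increments are small, it stays above `δ` for all
later `k`. The untranslated sequence therefore has a nonzero limit, a contradiction.

The space `H¹` is replaced by its dense subspace of `C¹` functions, which is enough because neither
the descent nor the passage to the limit uses completeness.
-/

open Real MeasureTheory Filter Topology InnerProductSpace

/-! ### Gradient descent at a mountain-pass level -/

/-- Mountain-pass principle in the form of a gradient descent. If `φ` has the gradient `D`, a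
mountain-pass geometry, and satisfies the Ambrosetti–Rabinowitz inequality `hAR`, then some orbit of
the descent `u ↦ u - h D u` with a fixed small step stays above the mountain-pass level. It is a
bounded Palais–Smale sequence, and its increments `h D u` tend to zero. No compactness or
completeness is needed. -/
theorem mountain_pass_descent {X : Type*} [NormedAddCommGroup X] [InnerProductSpace ℝ X]
    (φ : X → ℝ) (D : X → X)
    (hD : ∀ R : ℝ, ∃ L : ℝ, ∀ u v, ‖u‖ ≤ R → ‖v‖ ≤ R → ‖D u - D v‖ ≤ L * ‖u - v‖)
    (hφ : ∀ R : ℝ, ∃ L : ℝ, ∀ u w, ‖u‖ ≤ R → ‖w‖ ≤ R →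
      |φ (u + w) - φ u - ⟪D u, w⟫_ℝ| ≤ L * ‖w‖ ^ 2)
    (κ θ : ℝ) (hκ : 0 < κ) (hθ : 0 < θ)
    (hAR : ∀ u, κ * ‖u‖ ^ 2 ≤ φ u - θ * ⟪D u, u⟫_ℝ)
    (hD0 : D 0 = 0) (ρ b : ℝ) (hρ : 0 < ρ) (hb : 0 < b)
    (hball : ∀ u, ‖u‖ ≤ ρ → 0 ≤ φ u) (hsph : ∀ u, ‖u‖ = ρ → b ≤ φ u)
    (e : X) (he : φ e < 0) :
    ∃ (R : ℝ) (u : ℕ → X), (∀ k, ‖u k‖ ≤ R) ∧ Tendsto (fun k => ‖D (u k)‖) atTop (𝓝 0) ∧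
      Tendsto (fun k => ‖u (k + 1) - u k‖) atTop (𝓝 0) ∧ ∀ k, b ≤ φ (u k) := by
  have hDc : Continuous D := by
    rw [continuous_iff_continuousAt]
    intro u
    obtain ⟨L, hL⟩ := hD (‖u‖ + 1)
    rw [ContinuousAt, tendsto_iff_norm_sub_tendsto_zero]
    have h1 : Tendsto (fun v => L * ‖v - u‖) (𝓝 u) (𝓝 0) := by
      have : Continuous (fun v => L * ‖v - u‖) := by fun_prop
      simpa using this.tendsto u
    refine squeeze_zero' (Eventually.of_forall fun _ => norm_nonneg _) ?_ h1
    filter_upwards [Metric.ball_mem_nhds u one_pos] with v hv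
    refine hL v u ?_ (by linarith)
    rw [mem_ball_iff_norm] at hv
    have := norm_sub_norm_le v u
    linarith
  have hφc : Continuous φ := by
    rw [continuous_iff_continuousAt]
    intro u
    obtain ⟨L, hL⟩ := hφ (‖u‖ + 1)
    rw [ContinuousAt, tendsto_iff_norm_sub_tendsto_zero]
    have h1 : Tendsto (fun v => L * ‖v - u‖ ^ 2 + ‖D u‖ * ‖v - u‖) (𝓝 u) (𝓝 0) := by
      have : Continuous (fun v => L * ‖v - u‖ ^ 2 + ‖D u‖ * ‖v - u‖) := by fun_prop
      simpa using this.tendsto u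
    refine squeeze_zero' (Eventually.of_forall fun _ => norm_nonneg _) ?_ h1
    filter_upwards [Metric.ball_mem_nhds u one_pos] with v hv
    rw [mem_ball_iff_norm] at hv
    have h2 := hL u (v - u) (by linarith) (by linarith [norm_nonneg u])
    rw [add_sub_cancel] at h2
    have h3 := abs_real_inner_le_norm (D u) (v - u)
    rw [Real.norm_eq_abs]
    calc |φ v - φ u| = |(φ v - φ u - ⟪D u, v - u⟫_ℝ) + ⟪D u, v - u⟫_ℝ| := by ring_nf
      _ ≤ _ := (abs_add_le _ _).trans (add_le_add h2 h3)
  -- an upper bound for `φ` on the segment from `0` to `e`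
  obtain ⟨C, hC0, hC⟩ : ∃ C : ℝ, 0 ≤ C ∧ ∀ s ∈ Set.Icc (0 : ℝ) 1, φ (s • e) ≤ C := by
    obtain ⟨C, hC⟩ := (isCompact_Icc (a := (0 : ℝ)) (b := 1)).bddAbove_image
      (f := fun s : ℝ => φ (s • e)) (by fun_prop)
    refine ⟨max 0 C, le_max_left _ _, fun s hs => le_max_of_le_right (hC ⟨s, hs, rfl⟩)⟩
  -- by `hAR`, points below the level `C` at which the gradient is at most `1` lie in a fixed ball
  set M : ℝ := max 1 ((C + θ) / κ) with hM
  have hMb : ∀ u, φ u ≤ C → ‖D u‖ ≤ 1 → ‖u‖ ≤ M := by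
    intro u hu hDu
    by_contra! hlt
    have h1 : 1 < ‖u‖ := (le_max_left _ _).trans_lt hlt
    have h2 : (C + θ) / κ < ‖u‖ := (le_max_right _ _).trans_lt hlt
    rw [div_lt_iff₀ hκ] at h2
    have h3 := hAR u
    have h4 : |⟪D u, u⟫_ℝ| ≤ ‖u‖ := (abs_real_inner_le_norm _ _).trans
      (mul_le_of_le_one_left (norm_nonneg _) hDu)
    have h5 := (abs_le.1 h4).1
    nlinarith
  set R₀ : ℝ := max ‖e‖ (M + 1) with hR₀
  have hR₀0 : 0 ≤ R₀ := (norm_nonneg e).trans (le_max_left _ _)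
  set R₁ : ℝ := R₀ + 2 * C with hR₁
  have hR₁0 : 0 ≤ R₁ := by positivity
  obtain ⟨L₁, hL₁⟩ := hD (R₁ + 1)
  obtain ⟨L₂, hL₂⟩ := hφ (R₁ + 1)
  set B : ℝ := |L₁| * (R₁ + 1) + 2 * |L₂| + 1 with hB
  have hB1 : 1 ≤ B := by
    have : 0 ≤ |L₁| * (R₁ + 1) := by positivity
    have := abs_nonneg L₂
    linarith
  set h : ℝ := B⁻¹ with hh
  have hh0 : 0 < h := by positivity
  have hh1 : h ≤ 1 := inv_le_one_of_one_le₀ hB1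
  have hhB : h * B = 1 := inv_mul_cancel₀ (by positivity)
  have hhD : ∀ u, ‖u‖ ≤ R₁ + 1 → h * ‖D u‖ ≤ 1 := by
    intro u hu
    have h1 := hL₁ u 0 hu (by simp; linarith)
    rw [hD0, sub_zero, sub_zero] at h1
    have h2 : ‖D u‖ ≤ B := by
      have : L₁ * ‖u‖ ≤ |L₁| * (R₁ + 1) :=
        mul_le_mul (le_abs_self _) hu (norm_nonneg _) (abs_nonneg _)
      have := abs_nonneg L₂
      linarith
    calc h * ‖D u‖ ≤ h * B := by gcongr
      _ = 1 := hhB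
  have hhL : h * L₂ ≤ 1 / 2 := by
    have h1 : L₂ ≤ B / 2 := by
      have : 0 ≤ |L₁| * (R₁ + 1) := by positivity
      have := le_abs_self L₂
      linarith
    calc h * L₂ ≤ h * (B / 2) := by gcongr
      _ = 1 / 2 := by rw [← mul_div_assoc, hhB]
  -- the step size is cut off outside a large ball, so that one step always lowers `φ`
  set σ : X → ℝ := fun u => h * max 0 (min 1 (R₁ + 1 - ‖u‖)) with hσ
  have hσc : Continuous σ := by fun_prop
  have hσ0 : ∀ u, 0 ≤ σ u := fun u => by positivity
  have hσh : ∀ u, σ u ≤ h := fun u =>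
    mul_le_of_le_one_right hh0.le (max_le zero_le_one (min_le_left _ _))
  have hσ1 : ∀ u, ‖u‖ ≤ R₁ → σ u = h := by
    intro u hu
    simp only [hσ]
    rw [min_eq_left (by linarith), max_eq_right zero_le_one, mul_one]
  set Φ : X → X := fun u => u - σ u • D u with hΦ
  have hΦc : Continuous Φ := by fun_prop
  have hdec : ∀ u, φ (Φ u) ≤ φ u - σ u / 2 * ‖D u‖ ^ 2 := by
    intro u
    by_cases hu : ‖u‖ ≤ R₁ + 1
    · have h1 : ‖-(σ u • D u)‖ ≤ R₁ + 1 := by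
        rw [norm_neg, norm_smul, Real.norm_of_nonneg (hσ0 u)]
        have : σ u * ‖D u‖ ≤ h * ‖D u‖ := by gcongr; exact hσh u
        linarith [hhD u hu]
      have h2 := (abs_le.1 (hL₂ u (-(σ u • D u)) hu h1)).2
      rw [norm_neg, norm_smul, Real.norm_of_nonneg (hσ0 u), inner_neg_right, inner_smul_right,
        real_inner_self_eq_norm_sq, ← sub_eq_add_neg] at h2
      have h3 : σ u * L₂ ≤ 1 / 2 := by
        rcases le_or_gt L₂ 0 with hl | hl
        · have := mul_nonpos_of_nonneg_of_nonpos (hσ0 u) hl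
          linarith
        · exact (mul_le_mul_of_nonneg_right (hσh u) hl.le).trans hhL
      have h4 : L₂ * (σ u * ‖D u‖) ^ 2 ≤ 1 / 2 * (σ u * ‖D u‖ ^ 2) := by
        calc L₂ * (σ u * ‖D u‖) ^ 2 = (σ u * L₂) * (σ u * ‖D u‖ ^ 2) := by ring
          _ ≤ _ := by gcongr
      simp only [hΦ]
      linarith
    · have h1 : σ u = 0 := by
        simp only [hσ]
        rw [max_eq_left (min_le_of_right_le (by linarith)), mul_zero]
      simp [hΦ, h1]
  have hdec' : ∀ u, φ (Φ u) ≤ φ u := fun u => (hdec u).trans (by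
    have := mul_nonneg (hσ0 u) (sq_nonneg ‖D u‖); linarith)
  have hiter : ∀ k u, φ (Φ^[k] u) ≤ φ u := by
    intro k
    induction k with
    | zero => intro u; simp
    | succ k ih => intro u; rw [Function.iterate_succ_apply']; exact (hdec' _).trans (ih u)
  have hΦ0 : ∀ k, Φ^[k] 0 = 0 := by
    intro k
    apply Function.iterate_fixed
    simp [hΦ, hD0]
  have hic : ∀ k, Continuous (fun s : ℝ => Φ^[k] (s • e)) := fun k =>
    (hΦc.iterate k).comp (by fun_prop)
  -- a starting point on the segment whose whole orbit stays above level `b`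
  obtain ⟨s, hs⟩ : ∃ s, s ∈ ⋂ k, {s ∈ Set.Icc (0 : ℝ) 1 | b ≤ φ (Φ^[k] (s • e))} := by
    have hcl : ∀ k, IsClosed {s ∈ Set.Icc (0 : ℝ) 1 | b ≤ φ (Φ^[k] (s • e))} := fun k =>
      isClosed_Icc.inter (isClosed_le continuous_const (hφc.comp (hic k)))
    apply IsCompact.nonempty_iInter_of_sequence_nonempty_isCompact_isClosed
    · intro k s hs
      refine ⟨hs.1, hs.2.trans ?_⟩
      rw [Function.iterate_succ_apply']
      exact hdec' _
    · intro k
      have h1 : ρ ≤ ‖Φ^[k] ((1 : ℝ) • e)‖ := by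
        by_contra! hlt
        have := hball _ hlt.le
        have h2 := hiter k ((1 : ℝ) • e)
        rw [one_smul] at this h2
        linarith
      obtain ⟨s, hs, hs'⟩ := intermediate_value_Icc (zero_le_one (α := ℝ))
        ((hic k).norm.continuousOn) (show ρ ∈ Set.Icc _ _ from ⟨by simp [hΦ0, hρ.le], h1⟩)
      exact ⟨s, hs, hsph _ hs'⟩
    · exact isCompact_Icc.of_isClosed_subset (hcl 0) (fun s hs => hs.1)
    · exact hcl
  rw [Set.mem_iInter] at hs
  set u : ℕ → X := fun k => Φ^[k] (s • e) with hu
  have hus : ∀ k, u (k + 1) = u k - σ (u k) • D (u k) := fun k => by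
    simp only [hu]; rw [Function.iterate_succ_apply']
  have hub : ∀ k, b ≤ φ (u k) := fun k => (hs k).2
  have huC : ∀ k, φ (u k) ≤ C := fun k => (hiter k _).trans (hC s (hs 0).1)
  -- the orbit is bounded: a step with `‖D u‖ ≤ 1` starts inside the ball of radius `M`, and any other
  -- step moves by at most `h ‖D u‖ ^ 2`, twice the decrease of `φ`
  have hinv : ∀ k, ‖u k‖ ≤ R₀ + 2 * (C - φ (u k)) := by
    intro k
    induction k with
    | zero =>
      have h1 : ‖u 0‖ ≤ ‖e‖ := by
        simp only [hu, Function.iterate_zero, id]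
        rw [norm_smul, Real.norm_of_nonneg (hs 0).1.1]
        exact mul_le_of_le_one_left (norm_nonneg _) (hs 0).1.2
      have := huC 0
      have := le_max_left ‖e‖ (M + 1)
      linarith
    | succ k ih =>
      have hk : ‖u k‖ ≤ R₁ := by have := hub k; linarith
      have h1 := hdec (u k)
      rw [hσ1 _ hk] at h1
      have h2 := hus k
      rw [hσ1 _ hk] at h2
      have h3 : ‖u (k + 1)‖ ≤ ‖u k‖ + h * ‖D (u k)‖ := by
        rw [h2]
        refine (norm_sub_le _ _).trans ?_
        rw [norm_smul, Real.norm_of_nonneg hh0.le]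
      have h4 : φ (u (k + 1)) ≤ φ (u k) - h / 2 * ‖D (u k)‖ ^ 2 := by
        rw [h2]; simpa only [hΦ, hσ1 _ hk] using h1
      rcases le_or_gt ‖D (u k)‖ 1 with h5 | h5
      · have h6 := hMb _ (huC k) h5
        have h7 : h * ‖D (u k)‖ ≤ 1 := mul_le_one₀ hh1 (norm_nonneg _) h5
        have := huC (k + 1)
        have := le_max_right ‖e‖ (M + 1)
        linarith
      · have h6 : h * ‖D (u k)‖ ≤ h * ‖D (u k)‖ ^ 2 := by
          gcongr; nlinarith
        linarith
  have hR : ∀ k, ‖u k‖ ≤ R₁ := fun k => by have := hinv k; have := hub k; linarith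
  have hstep : ∀ k, h / 2 * ‖D (u k)‖ ^ 2 ≤ φ (u k) - φ (u (k + 1)) := fun k => by
    have h1 := hdec (u k)
    rw [hσ1 _ (hR k)] at h1
    have h2 := hus k
    have : φ (u (k + 1)) = φ (Φ (u k)) := by rw [h2]
    linarith
  have hlim : Tendsto (fun k => ‖D (u k)‖) atTop (𝓝 0) := by
    have hanti : Antitone (fun k => φ (u k)) := antitone_nat_of_succ_le fun k => by
      have := hstep k
      have : 0 ≤ h / 2 * ‖D (u k)‖ ^ 2 := by positivity
      linarith
    have h1 := tendsto_atTop_ciInf hanti ⟨b, by rintro _ ⟨k, rfl⟩; exact hub k⟩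
    have h2 := h1.sub ((tendsto_add_atTop_iff_nat 1).2 h1)
    rw [sub_self] at h2
    have h3 : Tendsto (fun k => ‖D (u k)‖ ^ 2) atTop (𝓝 0) := by
      refine squeeze_zero (fun _ => by positivity) (fun k => ?_)
        (by simpa using h2.const_mul (2 / h))
      have := hstep k
      rw [div_mul_eq_mul_div, le_div_iff₀ hh0]
      linarith
    have h4 := h3.sqrt
    simpa [Real.sqrt_sq] using h4
  refine ⟨R₁, u, hR, hlim, ?_, hub⟩
  have h1 : ∀ k, ‖u (k + 1) - u k‖ = h * ‖D (u k)‖ := fun k => by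
    rw [hus k, hσ1 _ (hR k), sub_sub_cancel_left, norm_neg, norm_smul, Real.norm_of_nonneg hh0.le]
  simp_rw [h1]
  simpa using hlim.const_mul h

/-! ### The Sobolev space of the line -/

section SquareIntegrable

variable {E : Type*} [NormedAddCommGroup E]

lemma integrable_norm_mul_of_sq {u v : ℝ → E} (hu : Continuous u) (hv : Continuous v)
    (hu2 : Integrable fun t => ‖u t‖ ^ 2) (hv2 : Integrable fun t => ‖v t‖ ^ 2) :
    Integrable fun t => ‖u t‖ * ‖v t‖ := by
  refine (hu2.add hv2).mono' (by fun_prop) (Eventually.of_forall fun t => ?_)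
  rw [Real.norm_of_nonneg (by positivity), Pi.add_apply]
  nlinarith [sq_nonneg (‖u t‖ - ‖v t‖), sq_nonneg (‖u t‖ + ‖v t‖)]

lemma integrable_add_sq {u v : ℝ → E} (hu : Continuous u) (hv : Continuous v)
    (hu2 : Integrable fun t => ‖u t‖ ^ 2) (hv2 : Integrable fun t => ‖v t‖ ^ 2) :
    Integrable fun t => ‖u t + v t‖ ^ 2 := by
  refine ((hu2.add hv2).const_mul 2).mono' (by fun_prop) (Eventually.of_forall fun t => ?_)
  rw [Real.norm_of_nonneg (by positivity), Pi.add_apply]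
  have h1 := norm_add_le (u t) (v t)
  have h2 : ‖u t + v t‖ ^ 2 ≤ (‖u t‖ + ‖v t‖) ^ 2 := by gcongr
  nlinarith [sq_nonneg (‖u t‖ - ‖v t‖)]

lemma tendsto_zero_of_norm_sq {l : Filter ℝ} {u : ℝ → E} (h : Tendsto (fun t => ‖u t‖ ^ 2) l (𝓝 0)) :
    Tendsto u l (𝓝 0) := by
  rw [tendsto_zero_iff_norm_tendsto_zero]
  simpa [Real.sqrt_sq] using h.sqrt

end SquareIntegrable

section Sobolev

variable {E : Type*} [NormedAddCommGroup E] [InnerProductSpace ℝ E]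

lemma integrable_inner_of_sq {u v : ℝ → E} (hu : Continuous u) (hv : Continuous v)
    (hu2 : Integrable fun t => ‖u t‖ ^ 2) (hv2 : Integrable fun t => ‖v t‖ ^ 2) :
    Integrable fun t => ⟪u t, v t⟫_ℝ := by
  refine (hu2.add hv2).mono' (by fun_prop) (Eventually.of_forall fun t => ?_)
  have h1 := abs_real_inner_le_norm (u t) (v t)
  rw [Real.norm_eq_abs, Pi.add_apply]
  nlinarith [sq_nonneg (‖u t‖ - ‖v t‖), sq_nonneg (‖u t‖ + ‖v t‖)]

variable (E) in
/-- The `C¹` functions `ℝ → E` that are square integrable together with their derivative. -/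
def sobolevSubmodule : Submodule ℝ (ℝ → E) where
  carrier := {u | ContDiff ℝ 1 u ∧ Integrable (fun t => ‖u t‖ ^ 2) ∧
    Integrable (fun t => ‖deriv u t‖ ^ 2)}
  add_mem' := by
    rintro u v ⟨hu, hu1, hu2⟩ ⟨hv, hv1, hv2⟩
    refine ⟨hu.add hv, integrable_add_sq hu.continuous hv.continuous hu1 hv1, ?_⟩
    have h : deriv (u + v) = fun t => deriv u t + deriv v t := by
      ext t
      exact deriv_add (hu.differentiable one_ne_zero t) (hv.differentiable one_ne_zero t)
    rw [h]
    exact integrable_add_sq (hu.continuous_deriv le_rfl) (hv.continuous_deriv le_rfl) hu2 hv2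
  zero_mem' := by
    refine ⟨contDiff_const, by simp, ?_⟩
    have : deriv (0 : ℝ → E) = 0 := by ext t; exact deriv_const t 0
    simp [this]
  smul_mem' := by
    rintro c u ⟨hu, hu1, hu2⟩
    refine ⟨contDiff_const.smul hu, ?_, ?_⟩
    · simpa [norm_smul, mul_pow, sq_abs] using hu1.const_mul (c ^ 2)
    · have h : deriv (c • u) = fun t => c • deriv u t := by
        ext t
        exact deriv_const_smul c (hu.differentiable one_ne_zero t)
      rw [h]
      simpa [norm_smul, mul_pow, sq_abs] using hu2.const_mul (c ^ 2)

variable (E) in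
/-- The pre-Hilbert space of `C¹` functions with finite `H¹` norm. It is a type of its own, rather
than the coercion of `sobolevSubmodule`, so that it does not carry the topology of pointwise
convergence. It is not complete, and completeness is never needed. -/
def H1 : Type _ := sobolevSubmodule E

noncomputable instance : AddCommGroup (H1 E) := inferInstanceAs (AddCommGroup (sobolevSubmodule E))
noncomputable instance : Module ℝ (H1 E) := inferInstanceAs (Module ℝ (sobolevSubmodule E))

/-- The underlying function of an element of `H1 E`. -/
def H1.toFun (u : H1 E) : ℝ → E := Subtype.val (p := (· ∈ sobolevSubmodule E)) u

instance : CoeFun (H1 E) (fun _ => ℝ → E) := ⟨H1.toFun⟩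

namespace H1

/-- The element of `H1 E` given by a function with the required regularity. -/
def mk (u : ℝ → E) (h : u ∈ sobolevSubmodule E) : H1 E := ⟨u, h⟩

@[simp] lemma mk_apply (u : ℝ → E) (h : u ∈ sobolevSubmodule E) (t : ℝ) : mk u h t = u t := rfl

lemma ext' {u v : H1 E} (h : ∀ t, u t = v t) : u = v := Subtype.ext (funext h)

lemma contDiff (u : H1 E) : ContDiff ℝ 1 u := u.2.1
lemma continuous (u : H1 E) : Continuous u := u.2.1.continuous
lemma continuous_deriv (u : H1 E) : Continuous (deriv u) := u.2.1.continuous_deriv le_rfl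
lemma differentiable (u : H1 E) : Differentiable ℝ u := u.2.1.differentiable one_ne_zero
lemma hasDerivAt (u : H1 E) (t : ℝ) : HasDerivAt u (deriv u t) t := (u.differentiable t).hasDerivAt
lemma int_sq (u : H1 E) : Integrable fun t => ‖u t‖ ^ 2 := u.2.2.1
lemma int_deriv_sq (u : H1 E) : Integrable fun t => ‖deriv u t‖ ^ 2 := u.2.2.2

@[simp] lemma add_apply (u v : H1 E) (t : ℝ) : (u + v) t = u t + v t := rfl
@[simp] lemma sub_apply (u v : H1 E) (t : ℝ) : (u - v) t = u t - v t := rfl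
@[simp] lemma zero_apply (t : ℝ) : (0 : H1 E) t = 0 := rfl
@[simp] lemma smul_apply (c : ℝ) (u : H1 E) (t : ℝ) : (c • u) t = c • u t := rfl

lemma deriv_add_apply (u v : H1 E) (t : ℝ) : deriv (u + v) t = deriv u t + deriv v t :=
  ((u.hasDerivAt t).add (v.hasDerivAt t)).deriv

lemma deriv_smul_apply (c : ℝ) (u : H1 E) (t : ℝ) : deriv (c • u) t = c • deriv u t :=
  ((u.hasDerivAt t).const_smul c).deriv

lemma int_inner (u v : H1 E) : Integrable fun t => ⟪u t, v t⟫_ℝ :=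
  integrable_inner_of_sq u.continuous v.continuous u.int_sq v.int_sq

lemma int_deriv_inner (u v : H1 E) : Integrable fun t => ⟪deriv u t, deriv v t⟫_ℝ :=
  integrable_inner_of_sq u.continuous_deriv v.continuous_deriv u.int_deriv_sq v.int_deriv_sq

lemma int_density (u v : H1 E) :
    Integrable fun t => ⟪u t, v t⟫_ℝ + ⟪deriv u t, deriv v t⟫_ℝ :=
  (u.int_inner v).add (u.int_deriv_inner v)

/-- The `H¹` scalar product. -/
@[reducible] noncomputable def core : InnerProductSpace.Core ℝ (H1 E) where
  inner u v := ∫ t, (⟪u t, v t⟫_ℝ + ⟪deriv u t, deriv v t⟫_ℝ)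
  conj_inner_symm u v := by simp [real_inner_comm]
  re_inner_nonneg u := by
    simp only [real_inner_self_eq_norm_sq, RCLike.re_to_real]
    exact integral_nonneg fun t => by positivity
  add_left u v w := by
    rw [← integral_add (u.int_density w) (v.int_density w)]
    congr 1
    ext t
    rw [add_apply, deriv_add_apply, inner_add_left, inner_add_left]
    ring
  smul_left u v r := by
    simp only [RCLike.conj_to_real]
    rw [← integral_const_mul]
    congr 1
    ext t
    rw [smul_apply, deriv_smul_apply, real_inner_smul_left, real_inner_smul_left]
    ring
  definite u hu := by
    have hc : Continuous fun t => ⟪u t, u t⟫_ℝ + ⟪deriv u t, deriv u t⟫_ℝ :=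
      (u.continuous.inner u.continuous).add (u.continuous_deriv.inner u.continuous_deriv)
    have h1 := (integral_eq_zero_iff_of_nonneg (fun t => by
      simp only [real_inner_self_eq_norm_sq, Pi.zero_apply]; positivity) (u.int_density u)).1 hu
    have h2 := (hc.ae_eq_iff_eq (μ := volume) continuous_zero).1 h1
    refine ext' fun t => ?_
    have h3 : _ = (0 : ℝ) := congrFun h2 t
    simp only [real_inner_self_eq_norm_sq] at h3
    have h4 : ‖u t‖ = 0 := by nlinarith [sq_nonneg ‖u t‖, sq_nonneg ‖deriv u t‖]
    simpa using h4

noncomputable instance : NormedAddCommGroup (H1 E) :=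
  (core (E := E)).toNormedAddCommGroup
noncomputable instance : InnerProductSpace ℝ (H1 E) := InnerProductSpace.ofCore core.toCore

lemma inner_def (u v : H1 E) :
    ⟪u, v⟫_ℝ = ∫ t, (⟪u t, v t⟫_ℝ + ⟪deriv u t, deriv v t⟫_ℝ) := rfl

lemma norm_sq (u : H1 E) : ‖u‖ ^ 2 = ∫ t, (‖u t‖ ^ 2 + ‖deriv u t‖ ^ 2) := by
  rw [← real_inner_self_eq_norm_sq, inner_def]
  simp only [real_inner_self_eq_norm_sq]

lemma integral_sq_le (u : H1 E) : ∫ t, ‖u t‖ ^ 2 ≤ ‖u‖ ^ 2 := by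
  rw [norm_sq]
  exact integral_mono u.int_sq (u.int_sq.add u.int_deriv_sq) fun t => by simp

lemma int_sq_hasDeriv (u : H1 E) : Integrable fun t => 2 * ⟪u t, deriv u t⟫_ℝ :=
  (integrable_inner_of_sq u.continuous u.continuous_deriv u.int_sq u.int_deriv_sq).const_mul 2

lemma hasDerivAt_sq (u : H1 E) (t : ℝ) :
    HasDerivAt (fun t => ‖u t‖ ^ 2) (2 * ⟪u t, deriv u t⟫_ℝ) t :=
  (u.hasDerivAt t).norm_sq

lemma tendsto_atTop (u : H1 E) : Tendsto u atTop (𝓝 0) :=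
  tendsto_zero_of_norm_sq (tendsto_zero_of_hasDerivAt_of_integrableOn_Ioi (a := 0)
    (fun t _ => u.hasDerivAt_sq t) u.int_sq_hasDeriv.integrableOn u.int_sq.integrableOn)

lemma tendsto_sq_atBot (u : H1 E) : Tendsto (fun t => ‖u t‖ ^ 2) atBot (𝓝 0) :=
  tendsto_zero_of_hasDerivAt_of_integrableOn_Iic (a := 0)
    (fun t _ => u.hasDerivAt_sq t) u.int_sq_hasDeriv.integrableOn u.int_sq.integrableOn

lemma tendsto_atBot (u : H1 E) : Tendsto u atBot (𝓝 0) := tendsto_zero_of_norm_sq u.tendsto_sq_atBot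

/-- The embedding of `H¹` into the bounded functions, with constant `1`. -/
lemma norm_apply_le (u : H1 E) (t : ℝ) : ‖u t‖ ≤ ‖u‖ := by
  have h1 : ∫ s in Set.Iic t, 2 * ⟪u s, deriv u s⟫_ℝ = ‖u t‖ ^ 2 - 0 :=
    integral_Iic_of_hasDerivAt_of_tendsto' (fun s _ => u.hasDerivAt_sq s)
      u.int_sq_hasDeriv.integrableOn u.tendsto_sq_atBot
  have hint := u.int_sq.add u.int_deriv_sq
  have h2 : ∫ s in Set.Iic t, 2 * ⟪u s, deriv u s⟫_ℝ ≤ ‖u‖ ^ 2 := by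
    rw [norm_sq]
    calc ∫ s in Set.Iic t, 2 * ⟪u s, deriv u s⟫_ℝ
        ≤ ∫ s in Set.Iic t, (‖u s‖ ^ 2 + ‖deriv u s‖ ^ 2) := by
          refine integral_mono u.int_sq_hasDeriv.integrableOn hint.integrableOn fun s => ?_
          have := real_inner_le_norm (u s) (deriv u s)
          simp only
          nlinarith [sq_nonneg (‖u s‖ - ‖deriv u s‖)]
      _ ≤ _ := setIntegral_le_integral hint (Eventually.of_forall fun s => by
          simp only [Pi.zero_apply]; positivity)
  have h3 : ‖u t‖ ^ 2 ≤ ‖u‖ ^ 2 := by linarith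
  exact (pow_le_pow_iff_left₀ (norm_nonneg _) (norm_nonneg _) two_ne_zero).1 h3

lemma int_norm_mul (u v : H1 E) : Integrable fun t => ‖u t‖ * ‖v t‖ :=
  integrable_norm_mul_of_sq u.continuous v.continuous u.int_sq v.int_sq

lemma integral_norm_mul_le (u v : H1 E) : ∫ t, ‖u t‖ * ‖v t‖ ≤ ‖u‖ * ‖v‖ := by
  rcases eq_or_ne u 0 with rfl | hu
  · simp
  rcases eq_or_ne v 0 with rfl | hv
  · simp
  have hu' := norm_pos_iff.2 hu
  have hv' := norm_pos_iff.2 hv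
  -- Young's inequality with the weight that makes it sharp
  set c := ‖v‖ / ‖u‖ with hc
  have hc0 : 0 < c := by positivity
  calc ∫ t, ‖u t‖ * ‖v t‖ ≤ ∫ t, (c / 2 * ‖u t‖ ^ 2 + c⁻¹ / 2 * ‖v t‖ ^ 2) := by
        refine integral_mono (u.int_norm_mul v)
          ((u.int_sq.const_mul _).add (v.int_sq.const_mul _)) fun t => ?_
        have h1 : 0 ≤ c⁻¹ * (c * ‖u t‖ - ‖v t‖) ^ 2 := by positivity
        have h2 : c⁻¹ * (c * ‖u t‖ - ‖v t‖) ^ 2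
            = c * ‖u t‖ ^ 2 + c⁻¹ * ‖v t‖ ^ 2 - 2 * (‖u t‖ * ‖v t‖) := by
          field_simp; ring
        simp only
        linarith
    _ = c / 2 * (∫ t, ‖u t‖ ^ 2) + c⁻¹ / 2 * ∫ t, ‖v t‖ ^ 2 := by
        rw [integral_add (u.int_sq.const_mul _) (v.int_sq.const_mul _), integral_const_mul,
          integral_const_mul]
    _ ≤ c / 2 * ‖u‖ ^ 2 + c⁻¹ / 2 * ‖v‖ ^ 2 := by
        gcongr
        · exact u.integral_sq_le
        · exact v.integral_sq_le
    _ = ‖u‖ * ‖v‖ := by rw [hc]; field_simp; ring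

end H1

end Sobolev

/-! ### The Green operator of `1 - d²/dt²` -/

section Green

variable {E : Type*} [NormedAddCommGroup E] [InnerProductSpace ℝ E]

/-- The average `∫₀^∞ e⁻ˢ f(t - s) ds`, which is the bounded solution of `A' + A = f`. -/
noncomputable def expAvg (f : ℝ → E) (t : ℝ) : E := ∫ s in Set.Ioi (0 : ℝ), exp (-s) • f (t - s)

/-- The convolution of `f` with `e^{-|t|} / 2`, which is the bounded solution of `w - w'' = f`. -/
noncomputable def green (f : ℝ → E) (t : ℝ) : E :=
  (1 / 2 : ℝ) • (expAvg f t + expAvg (fun s => f (-s)) (-t))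

/-- The derivative of `green f`. -/
noncomputable def greenD (f : ℝ → E) (t : ℝ) : E :=
  (1 / 2 : ℝ) • (expAvg (fun s => f (-s)) (-t) - expAvg f t)

lemma integrableOn_exp_neg : IntegrableOn (fun s : ℝ => exp (-s)) (Set.Ioi 0) := by
  simpa using exp_neg_integrableOn_Ioi 0 one_pos

lemma integrableOn_expAvg {f : ℝ → E} (hf : Continuous f) {C : ℝ} (hC : ∀ t, ‖f t‖ ≤ C) (t : ℝ) :
    IntegrableOn (fun s => exp (-s) • f (t - s)) (Set.Ioi 0) := by
  refine (integrableOn_exp_neg.const_mul C).mono' (by fun_prop) (Eventually.of_forall fun s => ?_)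
  rw [norm_smul, Real.norm_of_nonneg (exp_pos _).le, mul_comm]
  gcongr
  exact hC _

lemma norm_expAvg_le {f : ℝ → E} {C : ℝ} (hC : ∀ t, ‖f t‖ ≤ C) (t : ℝ) : ‖expAvg f t‖ ≤ C := by
  have h1 : ∫ s in Set.Ioi (0 : ℝ), C * exp (-s) = C := by
    rw [integral_const_mul, integral_exp_neg_Ioi_zero, mul_one]
  rw [← h1]
  refine norm_integral_le_of_norm_le (integrableOn_exp_neg.const_mul C)
    (Eventually.of_forall fun s => ?_)
  rw [norm_smul, Real.norm_of_nonneg (exp_pos _).le, mul_comm]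
  gcongr
  exact hC _

lemma expAvg_eq (f : ℝ → E) (t : ℝ) :
    expAvg f t = exp (-t) • ∫ x in Set.Iic t, exp x • f x := by
  have h1 := (Measure.measurePreserving_sub_left (volume : Measure ℝ) t).setIntegral_preimage_emb
    (MeasurableEquiv.subLeft t).measurableEmbedding (fun x => exp (-(t - x)) • f x) (Set.Iio t)
  have h2 : (fun x => t - x) ⁻¹' Set.Iio t = Set.Ioi 0 := by ext; simp
  rw [h2] at h1
  rw [expAvg, integral_Iic_eq_integral_Iio, ← integral_smul]
  simp only [sub_sub_cancel] at h1
  rw [h1]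
  congr 1
  ext x
  rw [smul_smul, ← Real.exp_add]
  congr 2
  ring

lemma integrableOn_exp_smul {f : ℝ → E} (hf : Continuous f) {C : ℝ} (hC : ∀ t, ‖f t‖ ≤ C) (t : ℝ) :
    IntegrableOn (fun x => exp x • f x) (Set.Iic t) := by
  refine ((integrableOn_exp_Iic t).const_mul C).mono' (by fun_prop)
    (Eventually.of_forall fun s => ?_)
  rw [norm_smul, Real.norm_of_nonneg (exp_pos _).le, mul_comm]
  gcongr
  exact hC _

lemma hasDerivAt_expAvg [CompleteSpace E] {f : ℝ → E} (hf : Continuous f) {C : ℝ}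
    (hC : ∀ t, ‖f t‖ ≤ C) (t : ℝ) : HasDerivAt (expAvg f) (f t - expAvg f t) t := by
  have h1 : ∀ x, expAvg f x = exp (-x) •
      ((∫ y in Set.Iic 0, exp y • f y) + ∫ y in (0 : ℝ)..x, exp y • f y) := by
    intro x
    rw [expAvg_eq, ← intervalIntegral.integral_Iic_sub_Iic (integrableOn_exp_smul hf hC 0)
      (integrableOn_exp_smul hf hC x), add_sub_cancel]
  have h2 : HasDerivAt (fun x => ∫ y in (0 : ℝ)..x, exp y • f y) (exp t • f t) t := by
    have hc : Continuous fun y => exp y • f y := by fun_prop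
    exact intervalIntegral.integral_hasDerivAt_right (hc.intervalIntegrable _ _)
      (hc.stronglyMeasurableAtFilter _ _) hc.continuousAt
  have h3 : HasDerivAt (fun x : ℝ => exp (-x)) (-exp (-t)) t := by
    simpa using (hasDerivAt_neg t).exp
  have h4 := h3.smul (h2.const_add (∫ y in Set.Iic 0, exp y • f y))
  have h5 : expAvg f = fun x => exp (-x) •
      ((∫ y in Set.Iic 0, exp y • f y) + ∫ y in (0 : ℝ)..x, exp y • f y) := funext h1
  rw [h5]
  refine h4.congr_deriv ?_
  rw [smul_smul, ← Real.exp_add, neg_add_cancel, Real.exp_zero, one_smul, neg_smul,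
    sub_eq_add_neg]

lemma hasDerivAt_expAvg_neg [CompleteSpace E] {f : ℝ → E} (hf : Continuous f) {C : ℝ}
    (hC : ∀ t, ‖f t‖ ≤ C) (t : ℝ) :
    HasDerivAt (fun t => expAvg (fun s => f (-s)) (-t)) (expAvg (fun s => f (-s)) (-t) - f t) t := by
  have h1 := hasDerivAt_expAvg (f := fun s => f (-s)) (by fun_prop) (fun s => hC (-s)) (-t)
  have h2 := h1.scomp t (hasDerivAt_neg t)
  refine h2.congr_deriv ?_
  simp

lemma hasDerivAt_green [CompleteSpace E] {f : ℝ → E} (hf : Continuous f) {C : ℝ}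
    (hC : ∀ t, ‖f t‖ ≤ C) (t : ℝ) : HasDerivAt (green f) (greenD f t) t := by
  have h := ((hasDerivAt_expAvg hf hC t).add (hasDerivAt_expAvg_neg hf hC t)).const_smul (1 / 2 : ℝ)
  refine h.congr_deriv ?_
  rw [greenD]
  congr 1
  abel

lemma hasDerivAt_greenD [CompleteSpace E] {f : ℝ → E} (hf : Continuous f) {C : ℝ}
    (hC : ∀ t, ‖f t‖ ≤ C) (t : ℝ) : HasDerivAt (greenD f) (green f t - f t) t := by
  have h := ((hasDerivAt_expAvg_neg hf hC t).sub (hasDerivAt_expAvg hf hC t)).const_smul (1 / 2 : ℝ)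
  refine h.congr_deriv ?_
  rw [green]
  module

lemma norm_green_le {f : ℝ → E} {C : ℝ} (hC : ∀ t, ‖f t‖ ≤ C) (t : ℝ) : ‖green f t‖ ≤ C := by
  rw [green, norm_smul, Real.norm_of_nonneg (by norm_num)]
  have h1 := norm_add_le (expAvg f t) (expAvg (fun s => f (-s)) (-t))
  have h2 := norm_expAvg_le hC t
  have h3 := norm_expAvg_le (f := fun s => f (-s)) (fun s => hC (-s)) (-t)
  linarith

lemma norm_greenD_le {f : ℝ → E} {C : ℝ} (hC : ∀ t, ‖f t‖ ≤ C) (t : ℝ) : ‖greenD f t‖ ≤ C := by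
  rw [greenD, norm_smul, Real.norm_of_nonneg (by norm_num)]
  have h1 := norm_sub_le (expAvg (fun s => f (-s)) (-t)) (expAvg f t)
  have h2 := norm_expAvg_le hC t
  have h3 := norm_expAvg_le (f := fun s => f (-s)) (fun s => hC (-s)) (-t)
  linarith

lemma green_translate (f : ℝ → E) (τ t : ℝ) :
    green (fun s => f (s + τ)) t = green f (t + τ) := by
  simp only [green, expAvg]
  congr 2
  · congr 1
    ext s
    congr 2
    ring
  · congr 1
    ext s
    congr 2
    ring

lemma tendsto_expAvg {f : ℕ → ℝ → E} {g : ℝ → E} (hf : ∀ k, Continuous (f k)) {C : ℝ}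
    (hC : ∀ k t, ‖f k t‖ ≤ C) (h : ∀ t, Tendsto (fun k => f k t) atTop (𝓝 (g t))) (t : ℝ) :
    Tendsto (fun k => expAvg (f k) t) atTop (𝓝 (expAvg g t)) := by
  refine tendsto_integral_of_dominated_convergence (fun s => C * exp (-s)) (fun k => ?_)
    (integrableOn_exp_neg.const_mul C) (fun k => Eventually.of_forall fun s => ?_)
    (Eventually.of_forall fun s => (h _).const_smul _)
  · have := hf k
    fun_prop
  · rw [norm_smul, Real.norm_of_nonneg (exp_pos _).le, mul_comm]
    gcongr
    exact hC _ _

lemma tendsto_green {f : ℕ → ℝ → E} {g : ℝ → E} (hf : ∀ k, Continuous (f k)) {C : ℝ}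
    (hC : ∀ k t, ‖f k t‖ ≤ C) (h : ∀ t, Tendsto (fun k => f k t) atTop (𝓝 (g t))) (t : ℝ) :
    Tendsto (fun k => green (f k) t) atTop (𝓝 (green g t)) :=
  ((tendsto_expAvg hf hC h t).add (tendsto_expAvg (f := fun k s => f k (-s))
    (g := fun s => g (-s)) (fun k => (hf k).comp continuous_neg) (fun k s => hC k (-s))
    (fun s => h (-s)) (-t))).const_smul _

lemma deriv_green [CompleteSpace E] {f : ℝ → E} (hf : Continuous f) {C : ℝ}
    (hC : ∀ t, ‖f t‖ ≤ C) : deriv (green f) = greenD f :=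
  funext fun t => (hasDerivAt_green hf hC t).deriv

lemma continuous_green [CompleteSpace E] {f : ℝ → E} (hf : Continuous f) {C : ℝ}
    (hC : ∀ t, ‖f t‖ ≤ C) : Continuous (green f) :=
  continuous_iff_continuousAt.2 fun t => (hasDerivAt_green hf hC t).continuousAt

lemma continuous_greenD [CompleteSpace E] {f : ℝ → E} (hf : Continuous f) {C : ℝ}
    (hC : ∀ t, ‖f t‖ ≤ C) : Continuous (greenD f) :=
  continuous_iff_continuousAt.2 fun t => (hasDerivAt_greenD hf hC t).continuousAt

lemma contDiff_greenD [CompleteSpace E] {f : ℝ → E} (hf : Continuous f) {C : ℝ}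
    (hC : ∀ t, ‖f t‖ ≤ C) : ContDiff ℝ 1 (greenD f) := by
  refine contDiff_one_iff_deriv.2 ⟨fun t => (hasDerivAt_greenD hf hC t).differentiableAt, ?_⟩
  rw [show deriv (greenD f) = fun t => green f t - f t from
    funext fun t => (hasDerivAt_greenD hf hC t).deriv]
  exact (continuous_green hf hC).sub hf

lemma contDiff_green [CompleteSpace E] {f : ℝ → E} (hf : Continuous f) {C : ℝ}
    (hC : ∀ t, ‖f t‖ ≤ C) : ContDiff ℝ 2 (green f) := by
  rw [show (2 : WithTop ℕ∞) = 1 + 1 from rfl, contDiff_succ_iff_deriv]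
  refine ⟨fun t => (hasDerivAt_green hf hC t).differentiableAt, by simp, ?_⟩
  rw [deriv_green hf hC]
  exact contDiff_greenD hf hC

/-- Energy estimate: for `w = green f`, the identity `(⟪w, w'⟫)' = |w'|² + |w|² - ⟪w, f⟫` bounds
the `H¹` norm of `w` on every interval by the `L²` norm of `f` and the sup norms of `w`, `w'`. -/
lemma integrable_green_energy [CompleteSpace E] {f : ℝ → E} (hf : Continuous f) {C : ℝ}
    (hC : ∀ t, ‖f t‖ ≤ C) (hf2 : Integrable fun t => ‖f t‖ ^ 2) :
    Integrable fun t => ‖green f t‖ ^ 2 + ‖greenD f t‖ ^ 2 := by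
  have hC0 : 0 ≤ C := (norm_nonneg _).trans (hC 0)
  have hw := continuous_green hf hC
  have hw' := continuous_greenD hf hC
  have hd : ∀ t, HasDerivAt (fun t => ⟪green f t, greenD f t⟫_ℝ)
      (⟪green f t, green f t - f t⟫_ℝ + ⟪greenD f t, greenD f t⟫_ℝ) t := fun t =>
    (hasDerivAt_green hf hC t).inner ℝ (hasDerivAt_greenD hf hC t)
  have hdc : Continuous fun t =>
      ⟪green f t, green f t - f t⟫_ℝ + ⟪greenD f t, greenD f t⟫_ℝ := by fun_prop
  have hb : ∀ t, |⟪green f t, greenD f t⟫_ℝ| ≤ C * C := fun t =>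
    (abs_real_inner_le_norm _ _).trans
      (mul_le_mul (norm_green_le hC t) (norm_greenD_le hC t) (norm_nonneg _) hC0)
  have hc : Continuous fun t => ‖green f t‖ ^ 2 + ‖greenD f t‖ ^ 2 := by fun_prop
  refine integrable_of_intervalIntegral_norm_bounded (ι := ℕ) (l := atTop)
    (a := fun k => -(k : ℝ)) (b := fun k => (k : ℝ)) (4 * (C * C) + ∫ t, ‖f t‖ ^ 2)
    (fun k => hc.integrableOn_Ioc) (tendsto_neg_atTop_atBot.comp tendsto_natCast_atTop_atTop)
    tendsto_natCast_atTop_atTop (Eventually.of_forall fun k => ?_)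
  have hk : -(k : ℝ) ≤ k := by have : (0 : ℝ) ≤ k := k.cast_nonneg; linarith
  have hfc : Continuous fun t => ‖f t‖ ^ 2 := by fun_prop
  calc ∫ t in (-(k : ℝ))..k, ‖‖green f t‖ ^ 2 + ‖greenD f t‖ ^ 2‖
      ≤ ∫ t in (-(k : ℝ))..k,
        (2 * (⟪green f t, green f t - f t⟫_ℝ + ⟪greenD f t, greenD f t⟫_ℝ) + ‖f t‖ ^ 2) := by
        refine intervalIntegral.integral_mono_on hk (hc.norm.intervalIntegrable _ _)
          (((hdc.const_mul 2).add hfc).intervalIntegrable _ _) fun t _ => ?_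
        rw [Real.norm_of_nonneg (by positivity), inner_sub_right, real_inner_self_eq_norm_sq,
          real_inner_self_eq_norm_sq]
        have := real_inner_le_norm (green f t) (f t)
        nlinarith [sq_nonneg (‖green f t‖ - ‖f t‖), sq_nonneg ‖greenD f t‖]
    _ = 2 * (⟪green f k, greenD f k⟫_ℝ - ⟪green f (-k), greenD f (-k)⟫_ℝ)
        + ∫ t in (-(k : ℝ))..k, ‖f t‖ ^ 2 := by
        rw [intervalIntegral.integral_add ((hdc.const_mul 2).intervalIntegrable _ _)
          (hfc.intervalIntegrable _ _), intervalIntegral.integral_const_mul,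
          intervalIntegral.integral_eq_sub_of_hasDerivAt (fun t _ => hd t)
            (hdc.intervalIntegrable _ _)]
    _ ≤ 4 * (C * C) + ∫ t, ‖f t‖ ^ 2 := by
        have h1 := (abs_le.1 (hb k)).2
        have h2 := (abs_le.1 (hb (-k))).1
        have h3 : ∫ t in (-(k : ℝ))..k, ‖f t‖ ^ 2 ≤ ∫ t, ‖f t‖ ^ 2 := by
          rw [intervalIntegral.integral_of_le hk]
          exact setIntegral_le_integral hf2 (Eventually.of_forall fun t => by
            simp only [Pi.zero_apply]; positivity)
        linarith

lemma integrable_green_sq [CompleteSpace E] {f : ℝ → E} (hf : Continuous f) {C : ℝ}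
    (hC : ∀ t, ‖f t‖ ≤ C) (hf2 : Integrable fun t => ‖f t‖ ^ 2) :
    Integrable fun t => ‖green f t‖ ^ 2 := by
  have hw := continuous_green hf hC
  refine (integrable_green_energy hf hC hf2).mono' (by fun_prop) (Eventually.of_forall fun t => ?_)
  rw [Real.norm_of_nonneg (by positivity)]
  have := sq_nonneg ‖greenD f t‖
  linarith

lemma integrable_greenD_sq [CompleteSpace E] {f : ℝ → E} (hf : Continuous f) {C : ℝ}
    (hC : ∀ t, ‖f t‖ ≤ C) (hf2 : Integrable fun t => ‖f t‖ ^ 2) :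
    Integrable fun t => ‖greenD f t‖ ^ 2 := by
  have hw := continuous_greenD hf hC
  refine (integrable_green_energy hf hC hf2).mono' (by fun_prop) (Eventually.of_forall fun t => ?_)
  rw [Real.norm_of_nonneg (by positivity)]
  have := sq_nonneg ‖green f t‖
  linarith

lemma green_mem [CompleteSpace E] {f : ℝ → E} (hf : Continuous f) {C : ℝ}
    (hC : ∀ t, ‖f t‖ ≤ C) (hf2 : Integrable fun t => ‖f t‖ ^ 2) :
    green f ∈ sobolevSubmodule E := by
  refine ⟨(contDiff_green hf hC).of_le (by norm_num), integrable_green_sq hf hC hf2, ?_⟩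
  rw [deriv_green hf hC]
  exact integrable_greenD_sq hf hC hf2

lemma greenD_mem [CompleteSpace E] {f : ℝ → E} (hf : Continuous f) {C : ℝ}
    (hC : ∀ t, ‖f t‖ ≤ C) (hf2 : Integrable fun t => ‖f t‖ ^ 2) :
    greenD f ∈ sobolevSubmodule E := by
  refine ⟨contDiff_greenD hf hC, integrable_greenD_sq hf hC hf2, ?_⟩
  have h1 : deriv (greenD f) = fun t => green f t + (-1 : ℝ) • f t := funext fun t => by
    rw [(hasDerivAt_greenD hf hC t).deriv, neg_one_smul, sub_eq_add_neg]
  rw [h1]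
  exact integrable_add_sq (continuous_green hf hC) (by fun_prop) (integrable_green_sq hf hC hf2)
    (by simpa using hf2)

/-- `green f` is the Riesz representative in `H¹` of the `L²` functional `w ↦ ∫ ⟪f, w⟫`. -/
lemma inner_green [CompleteSpace E] {f : ℝ → E} (hf : Continuous f) {C : ℝ}
    (hC : ∀ t, ‖f t‖ ≤ C) (hf2 : Integrable fun t => ‖f t‖ ^ 2) (w : H1 E) :
    ⟪H1.mk (green f) (green_mem hf hC hf2), w⟫_ℝ = ∫ t, ⟪f t, w t⟫_ℝ := by
  set u := H1.mk (green f) (green_mem hf hC hf2) with hu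
  set v := H1.mk (greenD f) (greenD_mem hf hC hf2) with hv
  have hdu : ∀ t, deriv u t = v t := fun t => congrFun (deriv_green hf hC) t
  have hfw := integrable_inner_of_sq hf w.continuous hf2 w.int_sq
  have h0 : ∀ t, HasDerivAt (fun t => ⟪v t, w t⟫_ℝ)
      ((⟪u t, w t⟫_ℝ + ⟪deriv u t, deriv w t⟫_ℝ) - ⟪f t, w t⟫_ℝ) t := by
    intro t
    have := (hasDerivAt_greenD hf hC t).inner ℝ (w.hasDerivAt t)
    refine this.congr_deriv ?_
    rw [inner_sub_left, hdu]
    simp only [hu, hv, H1.mk_apply]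
    ring
  have h1 := integral_eq_zero_of_hasDerivAt_of_integrable h0
    ((u.int_density w).sub hfw) (v.int_inner w)
  rw [integral_sub (u.int_density w) hfw, sub_eq_zero] at h1
  rw [H1.inner_def, h1]

end Green

/-! ### Superquadratic potentials -/

section Potential

variable {E : Type*} [NormedAddCommGroup E] [InnerProductSpace ℝ E]

/-- The properties of the potential `G` and of its gradient `g` on which the variational argument
rests. -/
structure SuperQuad (G : E → ℝ) (g : E → E) (μ : ℝ) : Prop where
  two_lt : 2 < μ
  cont_G : Continuous G
  cont_g : Continuous g
  lip : ∀ R : ℝ, ∃ L : ℝ, 0 ≤ L ∧ ∀ x y, ‖x‖ ≤ R → ‖y‖ ≤ R → ‖g x - g y‖ ≤ L * ‖x - y‖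
  taylor : ∀ R : ℝ, ∃ L : ℝ, 0 ≤ L ∧ ∀ x y, ‖x‖ ≤ R → ‖x + y‖ ≤ R →
    |G (x + y) - G x - ⟪g x, y⟫_ℝ| ≤ L * ‖y‖ ^ 2
  G_zero : G 0 = 0
  g_zero : g 0 = 0
  pos : ∀ x, x ≠ 0 → 0 < G x
  ar : ∀ x, μ * G x ≤ ⟪g x, x⟫_ℝ
  growth : ∀ x (s : ℝ), 1 ≤ s → s ^ μ * G x ≤ G (s • x)
  small : ∀ η : ℝ, 0 < η → ∃ δ : ℝ, 0 < δ ∧ ∀ x, ‖x‖ ≤ δ → G x ≤ η * ‖x‖ ^ 2 ∧ ‖g x‖ ≤ η * ‖x‖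

lemma SuperQuad.nonneg {G : E → ℝ} {g : E → E} {μ : ℝ} (h : SuperQuad G g μ) (x : E) :
    0 ≤ G x := by
  rcases eq_or_ne x 0 with rfl | hx
  · rw [h.G_zero]
  · exact (h.pos x hx).le

/-- The Ambrosetti–Rabinowitz condition on a `C²` potential gives all properties in `SuperQuad`. The
first-order bound in `small` follows from the bound on `G`, because `G ≥ 0` has a locally Lipschitz
gradient. -/
theorem superQuad_of_ar [FiniteDimensional ℝ E] [Nontrivial E] {G : E → ℝ} {μ : ℝ}
    (hG : ContDiff ℝ 2 G) (hμ : 2 < μ)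
    (hAR : ∀ x : E, x ≠ 0 → 0 < μ * G x ∧ μ * G x ≤ ⟪gradient G x, x⟫_ℝ) :
    SuperQuad G (gradient G) μ := by
  have hμ0 : 0 < μ := by linarith
  set g := gradient G with hg
  have hgrad : ∀ x, HasGradientAt G (g x) x := fun x =>
    (hG.differentiable two_ne_zero x).hasGradientAt
  have hgC : ContDiff ℝ 1 g := by
    have h1 : ContDiff ℝ 1 (fderiv ℝ G) := hG.fderiv_right (by norm_num)
    exact (InnerProductSpace.toDual ℝ E).symm.contDiff.comp h1
  have hpos : ∀ x, x ≠ 0 → 0 < G x := fun x hx => pos_of_mul_pos_right (hAR x hx).1 hμ0.le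
  -- both inequalities extend to the origin by continuity
  have hdense : Dense ({0}ᶜ : Set E) := dense_compl_singleton 0
  have hnn : ∀ x, 0 ≤ G x := by
    have hcl : IsClosed {x | 0 ≤ G x} := isClosed_le continuous_const hG.continuous
    exact fun x => hcl.closure_subset_iff.2 (fun y hy => (hpos y hy).le) (hdense x)
  have har : ∀ x, μ * G x ≤ ⟪g x, x⟫_ℝ := by
    have hcl : IsClosed {x | μ * G x ≤ ⟪g x, x⟫_ℝ} :=
      isClosed_le (hG.continuous.const_mul μ |>.congr fun _ => rfl)
        (hgC.continuous.inner continuous_id)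
    exact fun x => hcl.closure_subset_iff.2 (fun y hy => (hAR y hy).2) (hdense x)
  have hG0 : G 0 = 0 := by
    have h1 := har 0
    rw [inner_zero_right] at h1
    have h2 := hnn 0
    nlinarith
  have hg0 : g 0 = 0 := by
    have hmin : IsLocalMin G 0 := Eventually.of_forall fun x => by rw [hG0]; exact hnn x
    have h1 := hmin.hasFDerivAt_eq_zero (hgrad 0).hasFDerivAt
    simpa using h1
  have hlip : ∀ R : ℝ, ∃ L : ℝ, 0 ≤ L ∧
      ∀ x y, ‖x‖ ≤ R → ‖y‖ ≤ R → ‖g x - g y‖ ≤ L * ‖x - y‖ := by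
    intro R
    obtain ⟨K, hK⟩ := hgC.contDiffOn.exists_lipschitzOnWith one_ne_zero
      (convex_closedBall (0 : E) R) (isCompact_closedBall (0 : E) R)
    refine ⟨K, K.2, fun x y hx hy => ?_⟩
    exact hK.norm_sub_le (by simpa using hx) (by simpa using hy)
  have htaylor : ∀ R : ℝ, ∃ L : ℝ, 0 ≤ L ∧ ∀ x y, ‖x‖ ≤ R → ‖x + y‖ ≤ R →
      |G (x + y) - G x - ⟪g x, y⟫_ℝ| ≤ L * ‖y‖ ^ 2 := by
    intro R
    obtain ⟨L, hL0, hL⟩ := hlip R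
    refine ⟨L, hL0, fun x y hx hxy => ?_⟩
    have h1 := Convex.norm_image_sub_le_of_norm_hasFDerivWithin_le (𝕜 := ℝ)
      (f := fun z => G z - ⟪g x, z⟫_ℝ)
      (f' := fun z => toDual ℝ E (g z) - toDual ℝ E (g x)) (C := L * ‖y‖)
      (s := segment ℝ x (x + y)) (x := x) (y := x + y)
      (fun z _ => ((hgrad z).hasFDerivAt.sub
        ((toDual ℝ E (g x)).hasFDerivAt)).hasFDerivWithinAt) ?_
      (convex_segment _ _) (left_mem_segment _ _ _) (right_mem_segment _ _ _)
    · rw [add_sub_cancel_left] at h1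
      calc |G (x + y) - G x - ⟪g x, y⟫_ℝ|
          = ‖(G (x + y) - ⟪g x, x + y⟫_ℝ) - (G x - ⟪g x, x⟫_ℝ)‖ := by
            rw [Real.norm_eq_abs, inner_add_right]; ring_nf
        _ ≤ L * ‖y‖ * ‖y‖ := h1
        _ = L * ‖y‖ ^ 2 := by ring
    · intro z hz
      rw [← map_sub, LinearIsometryEquiv.norm_map]
      have hzR : ‖z‖ ≤ R := by
        have := (convex_closedBall (0 : E) R).segment_subset (by simpa using hx)
          (by simpa using hxy) hz
        simpa using this
      refine (hL z x hzR hx).trans (mul_le_mul_of_nonneg_left ?_ hL0)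
      rw [segment_eq_image'] at hz
      obtain ⟨c, hc, rfl⟩ := hz
      rw [add_sub_cancel_left, add_sub_cancel_left, norm_smul, Real.norm_of_nonneg hc.1]
      exact mul_le_of_le_one_left (norm_nonneg _) hc.2
  -- `s ↦ s ^ (-μ) * G (s x)` is nondecreasing
  have hgrowth : ∀ x (s : ℝ), 1 ≤ s → s ^ μ * G x ≤ G (s • x) := by
    intro x s hs
    have hd : ∀ r : ℝ, 0 < r → HasDerivAt (fun r => r ^ (-μ) * G (r • x))
        (-μ * r ^ (-μ - 1) * G (r • x) + r ^ (-μ) * ⟪g (r • x), x⟫_ℝ) r := by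
      intro r hr
      have h1 := Real.hasDerivAt_rpow_const (x := r) (p := -μ) (Or.inl hr.ne')
      have h2 : HasDerivAt (fun r : ℝ => G (r • x)) (⟪g (r • x), x⟫_ℝ) r := by
        have h3 : HasDerivAt (fun r : ℝ => r • x) x r := by
          simpa using (hasDerivAt_id r).smul_const x
        have h4 := (hgrad (r • x)).hasFDerivAt.comp_hasDerivAt r h3
        exact h4.congr_deriv (by simp)
      exact h1.mul h2
    have hm : MonotoneOn (fun r : ℝ => r ^ (-μ) * G (r • x)) (Set.Ici 1) := by
      apply monotoneOn_of_deriv_nonneg (convex_Ici 1)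
      · exact fun r hr => (hd r (zero_lt_one.trans_le hr)).continuousAt.continuousWithinAt
      · rw [interior_Ici]
        exact fun r hr =>
          (hd r (zero_lt_one.trans hr)).differentiableAt.differentiableWithinAt
      · rw [interior_Ici]
        intro r hr
        have hr0 : 0 < r := zero_lt_one.trans hr
        rw [(hd r hr0).deriv]
        have h1 := har (r • x)
        rw [inner_smul_right] at h1
        have h2 : r ^ (-μ) = r ^ (-μ - 1) * r := by
          rw [← Real.rpow_add_one hr0.ne']; congr 1; ring
        rw [h2]
        have h3 : 0 < r ^ (-μ - 1) := Real.rpow_pos_of_pos hr0 _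
        nlinarith
    have h1 := hm (Set.mem_Ici.2 le_rfl) (Set.mem_Ici.2 hs) hs
    simp only [Real.one_rpow, one_smul, one_mul] at h1
    have hs0 : 0 < s := zero_lt_one.trans_le hs
    have h2 : 0 < s ^ μ := Real.rpow_pos_of_pos hs0 _
    calc s ^ μ * G x ≤ s ^ μ * (s ^ (-μ) * G (s • x)) := by gcongr
      _ = G (s • x) := by rw [← mul_assoc, ← Real.rpow_add hs0]; simp
  have hsmallG : ∀ η : ℝ, 0 < η → ∃ δ : ℝ, 0 < δ ∧ δ ≤ 1 ∧
      ∀ x, ‖x‖ ≤ δ → G x ≤ η * ‖x‖ ^ 2 := by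
    intro η hη
    obtain ⟨C, hC⟩ := (isCompact_sphere (0 : E) 1).bddAbove_image hG.continuous.continuousOn
    have hC' : ∀ x : E, ‖x‖ = 1 → G x ≤ max C 1 := fun x hx =>
      le_max_of_le_left (hC ⟨x, by simpa using hx, rfl⟩)
    set C' := max C 1
    have hC0 : 0 < C' := zero_lt_one.trans_le (le_max_right _ _)
    have ht : Tendsto (fun r : ℝ => r ^ (μ - 2)) (𝓝 0) (𝓝 0) := by
      have := (Real.continuous_rpow_const (by linarith : 0 ≤ μ - 2)).tendsto 0
      rwa [Real.zero_rpow (by linarith)] at this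
    obtain ⟨δ, hδ, hδ'⟩ := Metric.eventually_nhds_iff.1
      (ht.eventually (gt_mem_nhds (show 0 < η / C' by positivity)))
    refine ⟨min (δ / 2) 1, by positivity, min_le_right _ _, fun x hx => ?_⟩
    rcases eq_or_ne x 0 with rfl | hx0
    · simp [hG0]
    have hn := norm_pos_iff.2 hx0
    have h1 : ‖x‖ ≤ 1 := hx.trans (min_le_right _ _)
    -- `growth` from `x` to the unit vector `x / ‖x‖` gives `G x ≤ C' ‖x‖ ^ μ`
    have h2 := hgrowth x ‖x‖⁻¹ ((one_le_inv₀ hn).2 h1)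
    have h3 := hC' (‖x‖⁻¹ • x) (by rw [norm_smul, norm_inv, norm_norm, inv_mul_cancel₀ hn.ne'])
    have h4 : ‖x‖ ^ (μ - 2) < η / C' := by
      apply hδ'
      rw [dist_zero_right, norm_norm]
      exact (hx.trans (min_le_left _ _)).trans_lt (half_lt_self hδ)
    rw [lt_div_iff₀ hC0] at h4
    have h5 : ‖x‖ ^ μ = ‖x‖ ^ (μ - 2) * ‖x‖ ^ 2 := by
      rw [← Real.rpow_natCast, ← Real.rpow_add hn]; congr 1; push_cast; ring
    have h6 : G x ≤ ‖x‖ ^ μ * C' := by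
      have h7 := h2.trans h3
      rw [Real.inv_rpow hn.le, inv_mul_le_iff₀ (Real.rpow_pos_of_pos hn _)] at h7
      exact h7
    calc G x ≤ ‖x‖ ^ (μ - 2) * C' * ‖x‖ ^ 2 := by rw [h5] at h6; linarith
      _ ≤ η * ‖x‖ ^ 2 := by gcongr
  refine ⟨hμ, hG.continuous, hgC.continuous, hlip, htaylor, hG0, hg0, hpos, har, hgrowth, ?_⟩
  intro η hη
  obtain ⟨L₁, hL₁0, hL₁⟩ := hlip 2
  obtain ⟨L₂, hL₂0, hL₂⟩ := htaylor 2
  set L := L₁ + L₂ + 1 with hL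
  have hL0 : 0 < L := by positivity
  obtain ⟨δ, hδ0, hδ1, hδ⟩ := hsmallG (min η (η ^ 2 / (4 * L))) (by positivity)
  refine ⟨δ, hδ0, fun x hx => ⟨(hδ x hx).trans (by gcongr; exact min_le_left _ _), ?_⟩⟩
  have hx1 : ‖x‖ ≤ 1 := hx.trans hδ1
  have h1 : ‖g x‖ ≤ L * ‖x‖ := by
    have := hL₁ x 0 (by linarith) (by simp)
    rw [hg0, sub_zero, sub_zero] at this
    exact this.trans (by gcongr; linarith)
  -- a nonnegative function with Lipschitz gradient satisfies `|∇G|² ≤ 4 L G`: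
  -- compare with the value after a gradient step of length `1 / (2 L)`
  have hy : ‖-((2 * L)⁻¹ • g x)‖ ≤ 1 := by
    rw [norm_neg, norm_smul, Real.norm_of_nonneg (by positivity), inv_mul_le_iff₀ (by positivity)]
    nlinarith
  have h2 := (abs_le.1 (hL₂ x (-((2 * L)⁻¹ • g x)) (by linarith)
    ((norm_add_le _ _).trans (by linarith)))).2
  rw [norm_neg, norm_smul, Real.norm_of_nonneg (by positivity), inner_neg_right, inner_smul_right,
    real_inner_self_eq_norm_sq] at h2
  have h3 := hnn (x + -((2 * L)⁻¹ • g x))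
  have h4 : L₂ * ((2 * L)⁻¹ * ‖g x‖) ^ 2 ≤ (4 * L)⁻¹ * ‖g x‖ ^ 2 := by
    calc L₂ * ((2 * L)⁻¹ * ‖g x‖) ^ 2 ≤ L * ((2 * L)⁻¹ * ‖g x‖) ^ 2 := by gcongr; linarith
      _ = (4 * L)⁻¹ * ‖g x‖ ^ 2 := by field_simp; ring
  have h5 : (2 * L)⁻¹ * ‖g x‖ ^ 2 = 2 * ((4 * L)⁻¹ * ‖g x‖ ^ 2) := by field_simp; ring
  have h6 : (4 * L)⁻¹ * ‖g x‖ ^ 2 ≤ G x := by linarith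
  have h7 : G x ≤ η ^ 2 / (4 * L) * ‖x‖ ^ 2 := (hδ x hx).trans (by gcongr; exact min_le_right _ _)
  have h8 : (4 * L)⁻¹ * ‖g x‖ ^ 2 ≤ (4 * L)⁻¹ * (η * ‖x‖) ^ 2 := by
    refine (h6.trans h7).trans_eq ?_
    field_simp
  have h9 := le_of_mul_le_mul_left h8 (by positivity)
  exact (pow_le_pow_iff_left₀ (norm_nonneg _) (by positivity) two_ne_zero).1 h9

end Potential

/-! ### The action functional and its Palais–Smale sequence -/

section Functional

variable {E : Type*} [NormedAddCommGroup E] [InnerProductSpace ℝ E]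

namespace SuperQuad

variable {G : E → ℝ} {g : E → E} {μ : ℝ} {a : ℝ → ℝ} {A : ℝ}

lemma norm_le (h : SuperQuad G g μ) (R : ℝ) (hR : 0 ≤ R) :
    ∃ L : ℝ, 0 ≤ L ∧ ∀ x, ‖x‖ ≤ R → ‖g x‖ ≤ L * ‖x‖ := by
  obtain ⟨L, hL0, hL⟩ := h.lip R
  refine ⟨L, hL0, fun x hx => ?_⟩
  simpa [h.g_zero] using hL x 0 hx (by simpa using hR)

lemma G_le (h : SuperQuad G g μ) {L : ℝ} {x : E} (hx : ‖g x‖ ≤ L * ‖x‖) : G x ≤ L * ‖x‖ ^ 2 := by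
  have h1 := h.ar x
  have h2 := real_inner_le_norm (g x) x
  have h3 := h.nonneg x
  have h4 := h.two_lt
  have h5 := mul_le_mul_of_nonneg_right hx (norm_nonneg x)
  nlinarith

lemma continuous_force (h : SuperQuad G g μ) (ha : Continuous a) {u : ℝ → E} (hu : Continuous u) :
    Continuous fun t => a t • g (u t) :=
  ha.smul (h.cont_g.comp hu)

lemma norm_force_le (ha0 : ∀ t, 0 ≤ a t) (haA : ∀ t, a t ≤ A) {L : ℝ} {x : E}
    (hx : ‖g x‖ ≤ L * ‖x‖) (t : ℝ) : ‖a t • g x‖ ≤ A * L * ‖x‖ := by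
  rw [norm_smul, Real.norm_of_nonneg (ha0 t), mul_assoc]
  exact mul_le_mul (haA t) hx (norm_nonneg _) ((ha0 t).trans (haA t))

lemma force_bound (h : SuperQuad G g μ) (ha0 : ∀ t, 0 ≤ a t) (haA : ∀ t, a t ≤ A) (R : ℝ)
    (hR : 0 ≤ R) : ∃ C : ℝ, 0 ≤ C ∧ ∀ (x : E) (t : ℝ), ‖x‖ ≤ R → ‖a t • g x‖ ≤ C * ‖x‖ := by
  obtain ⟨L, hL0, hL⟩ := h.norm_le R hR
  have hA : 0 ≤ A := (ha0 0).trans (haA 0)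
  exact ⟨A * L, by positivity, fun x t hx => norm_force_le ha0 haA (hL x hx) t⟩

lemma force_sq_integrable (h : SuperQuad G g μ) (ha : Continuous a) (ha0 : ∀ t, 0 ≤ a t)
    (haA : ∀ t, a t ≤ A) {u : ℝ → E} (hu : Continuous u) {R : ℝ} (hR : ∀ t, ‖u t‖ ≤ R)
    (hu2 : Integrable fun t => ‖u t‖ ^ 2) : Integrable fun t => ‖a t • g (u t)‖ ^ 2 := by
  obtain ⟨C, hC0, hC⟩ := h.force_bound ha0 haA R ((norm_nonneg _).trans (hR 0))
  have hc := h.continuous_force ha hu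
  refine (hu2.const_mul (C ^ 2)).mono' (hc.norm.pow 2).aestronglyMeasurable
    (Eventually.of_forall fun t => ?_)
  rw [Real.norm_of_nonneg (by positivity), ← mul_pow]
  gcongr
  exact hC _ t (hR t)

/-- The Riesz representative in `H¹` of the derivative of the action functional. -/
lemma exists_gradient [CompleteSpace E] (h : SuperQuad G g μ) (ha : Continuous a)
    (ha0 : ∀ t, 0 ≤ a t) (haA : ∀ t, a t ≤ A) :
    ∃ D : H1 E → H1 E, (∀ u t, D u t = u t - green (fun s => a s • g (u s)) t) ∧
      ∀ u w, ⟪D u, w⟫_ℝ = ⟪u, w⟫_ℝ - ∫ t, ⟪a t • g (u t), w t⟫_ℝ := by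
  have hb : ∀ u : H1 E, ∃ C, ∀ t, ‖a t • g (u t)‖ ≤ C := by
    intro u
    obtain ⟨C, hC0, hC⟩ := h.force_bound ha0 haA ‖u‖ (norm_nonneg _)
    refine ⟨C * ‖u‖, fun t => (hC _ t (u.norm_apply_le t)).trans ?_⟩
    gcongr
    exact u.norm_apply_le t
  choose C hC using hb
  have hc := fun u : H1 E => h.continuous_force ha u.continuous
  have hi := fun u : H1 E => h.force_sq_integrable ha ha0 haA u.continuous u.norm_apply_le u.int_sq
  refine ⟨fun u => u - H1.mk _ (green_mem (hc u) (hC u) (hi u)), fun u t => rfl, fun u w => ?_⟩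
  rw [inner_sub_left, inner_green (hc u) (hC u) (hi u)]

lemma integrable_potential (h : SuperQuad G g μ) (ha : Continuous a)
    (ha0 : ∀ t, 0 ≤ a t) (haA : ∀ t, a t ≤ A) (u : H1 E) : Integrable fun t => a t * G (u t) := by
  obtain ⟨L, hL0, hL⟩ := h.norm_le ‖u‖ (norm_nonneg _)
  have hc : Continuous fun t => a t * G (u t) := ha.mul (h.cont_G.comp u.continuous)
  refine (u.int_sq.const_mul (A * L)).mono' hc.aestronglyMeasurable
    (Eventually.of_forall fun t => ?_)
  rw [Real.norm_of_nonneg (mul_nonneg (ha0 t) (h.nonneg _)), mul_assoc]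
  exact mul_le_mul (haA t) (h.G_le (hL _ (u.norm_apply_le t))) (h.nonneg _) ((ha0 t).trans (haA t))

lemma integrable_force_inner (h : SuperQuad G g μ) (ha : Continuous a)
    (ha0 : ∀ t, 0 ≤ a t) (haA : ∀ t, a t ≤ A) (u w : H1 E) :
    Integrable fun t => ⟪a t • g (u t), w t⟫_ℝ :=
  integrable_inner_of_sq (h.continuous_force ha u.continuous) w.continuous
    (h.force_sq_integrable ha ha0 haA u.continuous u.norm_apply_le u.int_sq) w.int_sq

lemma gradient_lipschitz (h : SuperQuad G g μ) (ha : Continuous a)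
    (ha0 : ∀ t, 0 ≤ a t) (haA : ∀ t, a t ≤ A) {D : H1 E → H1 E}
    (hD : ∀ u w, ⟪D u, w⟫_ℝ = ⟪u, w⟫_ℝ - ∫ t, ⟪a t • g (u t), w t⟫_ℝ) (R : ℝ) :
    ∃ L, ∀ u v : H1 E, ‖u‖ ≤ R → ‖v‖ ≤ R → ‖D u - D v‖ ≤ L * ‖u - v‖ := by
  obtain ⟨L, hL0, hL⟩ := h.lip R
  have hA : 0 ≤ A := (ha0 0).trans (haA 0)
  refine ⟨1 + A * L, fun u v hu hv => ?_⟩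
  set w := D u - D v with hw
  have h1 : ‖w‖ ^ 2 = ⟪u - v, w⟫_ℝ -
      ∫ t, (⟪a t • g (u t), w t⟫_ℝ - ⟪a t • g (v t), w t⟫_ℝ) := by
    rw [integral_sub (h.integrable_force_inner ha ha0 haA u w)
      (h.integrable_force_inner ha ha0 haA v w), ← real_inner_self_eq_norm_sq]
    nth_rw 1 [hw]
    rw [inner_sub_left, inner_sub_left, hD, hD]
    ring
  have h2 : |∫ t, (⟪a t • g (u t), w t⟫_ℝ - ⟪a t • g (v t), w t⟫_ℝ)|
      ≤ ∫ t, A * L * (‖(u - v) t‖ * ‖w t‖) := by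
    rw [← Real.norm_eq_abs]
    refine norm_integral_le_of_norm_le (((u - v).int_norm_mul w).const_mul _)
      (Eventually.of_forall fun t => ?_)
    rw [← inner_sub_left, ← smul_sub]
    refine (norm_inner_le_norm _ _).trans ?_
    rw [← mul_assoc, norm_smul, Real.norm_of_nonneg (ha0 t), H1.sub_apply]
    refine mul_le_mul_of_nonneg_right ?_ (norm_nonneg _)
    rw [mul_assoc]
    exact mul_le_mul (haA t)
      (hL _ _ ((u.norm_apply_le t).trans hu) ((v.norm_apply_le t).trans hv)) (norm_nonneg _) hA
  rw [integral_const_mul] at h2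
  have h3 := (u - v).integral_norm_mul_le w
  have h4 := real_inner_le_norm (u - v) w
  have h5 := mul_le_mul_of_nonneg_left h3 (show 0 ≤ A * L by positivity)
  have h6 : ‖w‖ * ‖w‖ ≤ (1 + A * L) * ‖u - v‖ * ‖w‖ := by
    have := (abs_le.1 h2).1
    nlinarith
  rcases (norm_nonneg w).eq_or_lt with h7 | h7
  · rw [← h7]; positivity
  · exact le_of_mul_le_mul_right h6 h7

/-- The action functional whose critical points are the homoclinic solutions. -/
noncomputable def action (a : ℝ → ℝ) (G : E → ℝ) (u : H1 E) : ℝ :=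
  1 / 2 * ‖u‖ ^ 2 - ∫ t, a t * G (u t)

lemma action_taylor (h : SuperQuad G g μ) (ha : Continuous a)
    (ha0 : ∀ t, 0 ≤ a t) (haA : ∀ t, a t ≤ A) {D : H1 E → H1 E}
    (hD : ∀ u w, ⟪D u, w⟫_ℝ = ⟪u, w⟫_ℝ - ∫ t, ⟪a t • g (u t), w t⟫_ℝ) (R : ℝ) :
    ∃ L, ∀ u w : H1 E, ‖u‖ ≤ R → ‖w‖ ≤ R →
      |action a G (u + w) - action a G u - ⟪D u, w⟫_ℝ| ≤ L * ‖w‖ ^ 2 := by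
  obtain ⟨L, hL0, hL⟩ := h.taylor (2 * R)
  have hA : 0 ≤ A := (ha0 0).trans (haA 0)
  refine ⟨1 / 2 + A * L, fun u w hu hw => ?_⟩
  have i1 := h.integrable_potential ha ha0 haA (u + w)
  have i2 := h.integrable_potential ha ha0 haA u
  have i3 := h.integrable_force_inner ha ha0 haA u w
  have h1 : action a G (u + w) - action a G u - ⟪D u, w⟫_ℝ = 1 / 2 * ‖w‖ ^ 2 -
      ∫ t, (a t * G ((u + w) t) - a t * G (u t) - ⟪a t • g (u t), w t⟫_ℝ) := by
    have i4 : Integrable fun t => a t * G ((u + w) t) - a t * G (u t) := i1.sub i2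
    rw [integral_sub i4 i3, integral_sub i1 i2, hD, action, action,
      norm_add_sq_real]
    ring
  have h2 : |∫ t, (a t * G ((u + w) t) - a t * G (u t) - ⟪a t • g (u t), w t⟫_ℝ)|
      ≤ ∫ t, A * L * ‖w t‖ ^ 2 := by
    rw [← Real.norm_eq_abs]
    refine norm_integral_le_of_norm_le (w.int_sq.const_mul _) (Eventually.of_forall fun t => ?_)
    have hut := (u.norm_apply_le t).trans hu
    have hwt := (w.norm_apply_le t).trans hw
    rw [real_inner_smul_left, ← mul_sub, ← mul_sub, Real.norm_eq_abs, abs_mul,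
      abs_of_nonneg (ha0 t), mul_assoc, H1.add_apply]
    exact mul_le_mul (haA t)
      (hL _ _ (by linarith [norm_nonneg (u t)]) ((norm_add_le _ _).trans (by linarith)))
      (abs_nonneg _) hA
  rw [integral_const_mul] at h2
  have h3 := mul_le_mul_of_nonneg_left w.integral_sq_le (show 0 ≤ A * L by positivity)
  rw [h1]
  refine (abs_sub _ _).trans ?_
  rw [abs_of_nonneg (by positivity : 0 ≤ 1 / 2 * ‖w‖ ^ 2)]
  linarith

lemma action_ar (h : SuperQuad G g μ) (ha : Continuous a)
    (ha0 : ∀ t, 0 ≤ a t) (haA : ∀ t, a t ≤ A) {D : H1 E → H1 E}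
    (hD : ∀ u w, ⟪D u, w⟫_ℝ = ⟪u, w⟫_ℝ - ∫ t, ⟪a t • g (u t), w t⟫_ℝ) (u : H1 E) :
    (1 / 2 - 1 / μ) * ‖u‖ ^ 2 ≤ action a G u - 1 / μ * ⟪D u, u⟫_ℝ := by
  have hμ : 0 < μ := by linarith [h.two_lt]
  have h1 : ∫ t, a t * G (u t) ≤ ∫ t, 1 / μ * ⟪a t • g (u t), u t⟫_ℝ := by
    refine integral_mono (h.integrable_potential ha ha0 haA u)
      ((h.integrable_force_inner ha ha0 haA u u).const_mul _) fun t => ?_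
    simp only [real_inner_smul_left]
    rw [one_div, ← div_eq_inv_mul, le_div_iff₀ hμ]
    have := mul_le_mul_of_nonneg_left (h.ar (u t)) (ha0 t)
    linarith
  rw [integral_const_mul] at h1
  rw [hD, action, real_inner_self_eq_norm_sq]
  linarith

lemma action_small (h : SuperQuad G g μ) (ha : Continuous a)
    (ha0 : ∀ t, 0 ≤ a t) (haA : ∀ t, a t ≤ A) (hA : 0 < A) :
    ∃ ρ, 0 < ρ ∧ ∀ u : H1 E, ‖u‖ ≤ ρ → 1 / 4 * ‖u‖ ^ 2 ≤ action a G u := by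
  obtain ⟨δ, hδ, hs⟩ := h.small (1 / (4 * A)) (by positivity)
  refine ⟨δ, hδ, fun u hu => ?_⟩
  have h1 : ∫ t, a t * G (u t) ≤ ∫ t, 1 / 4 * ‖u t‖ ^ 2 := by
    refine integral_mono (h.integrable_potential ha ha0 haA u) (u.int_sq.const_mul _) fun t => ?_
    have h2 := (hs (u t) ((u.norm_apply_le t).trans hu)).1
    calc a t * G (u t) ≤ A * (1 / (4 * A) * ‖u t‖ ^ 2) :=
          mul_le_mul (haA t) h2 (h.nonneg _) hA.le
      _ = 1 / 4 * ‖u t‖ ^ 2 := by field_simp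
  rw [integral_const_mul] at h1
  have h3 := u.integral_sq_le
  rw [action]
  linarith

/-- Far out on every ray the superquadratic potential beats the quadratic part. -/
lemma exists_action_neg [CompleteSpace E] [Nontrivial E] (h : SuperQuad G g μ) (ha : Continuous a)
    (ha0 : ∀ t, 0 < a t) (haA : ∀ t, a t ≤ A) : ∃ e : H1 E, action a G e < 0 := by
  obtain ⟨x₀, hx₀⟩ := exists_ne (0 : E)
  set f : ℝ → E := fun t => exp (-1 * t ^ 2) • x₀ with hf
  have hfc : Continuous f := by fun_prop
  have hfC : ∀ t, ‖f t‖ ≤ ‖x₀‖ := fun t => by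
    rw [hf]; simp only
    rw [norm_smul, Real.norm_of_nonneg (exp_pos _).le]
    exact mul_le_of_le_one_left (norm_nonneg _) (exp_le_one_iff.2 (by nlinarith [sq_nonneg t]))
  have hf2 : Integrable fun t => ‖f t‖ ^ 2 := by
    have h1 := (integrable_exp_neg_mul_sq (b := 2) two_pos).mul_const (‖x₀‖ ^ 2)
    refine h1.congr (Eventually.of_forall fun t => ?_)
    simp only [hf]
    rw [norm_smul, Real.norm_of_nonneg (exp_pos _).le, mul_pow, ← exp_nat_mul]
    congr 2
    push_cast
    ring
  set u := H1.mk (green f) (green_mem hfc hfC hf2) with hu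
  obtain ⟨t₀, ht₀⟩ : ∃ t, u t ≠ 0 := by
    by_contra! hall
    have h1 : green f = fun _ => 0 := funext hall
    have h2 : greenD f = fun _ => 0 := by
      rw [← deriv_green hfc hfC, h1]; simp
    have h3 := (hasDerivAt_greenD hfc hfC 0).deriv
    rw [h2, h1] at h3
    simp [hf] at h3
    exact hx₀ h3
  have ha0' := fun t => (ha0 t).le
  set I := ∫ t, a t * G (u t) with hI
  have hIpos : 0 < I := by
    have hc : Continuous fun t => a t * G (u t) := ha.mul (h.cont_G.comp u.continuous)
    refine integral_pos_of_integrable_nonneg_nonzero (x := t₀) hc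
      (h.integrable_potential ha ha0' haA u) (fun t => mul_nonneg (ha0' t) (h.nonneg _)) ?_
    exact (mul_pos (ha0 t₀) (h.pos _ ht₀)).ne'
  have hle : ∀ s : ℝ, 1 ≤ s → action a G (s • u) ≤ s ^ 2 * (1 / 2 * ‖u‖ ^ 2 - s ^ (μ - 2) * I) := by
    intro s hs
    have hs0 : 0 < s := by linarith
    have h1 : ∫ t, s ^ μ * (a t * G (u t)) ≤ ∫ t, a t * G ((s • u) t) := by
      refine integral_mono ((h.integrable_potential ha ha0' haA u).const_mul _)
        (h.integrable_potential ha ha0' haA (s • u)) fun t => ?_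
      have := mul_le_mul_of_nonneg_left (h.growth (u t) s hs) (ha0' t)
      simp only [H1.smul_apply]
      linarith
    rw [integral_const_mul] at h1
    have h2 : s ^ μ = s ^ (μ - 2) * s ^ 2 := by
      rw [← Real.rpow_natCast, ← Real.rpow_add hs0]; congr 1; push_cast; ring
    rw [h2] at h1
    rw [action, norm_smul, Real.norm_of_nonneg hs0.le]
    nlinarith
  have ht := tendsto_rpow_atTop (show 0 < μ - 2 by linarith [h.two_lt])
  obtain ⟨s, hs1, hs⟩ :=
    ((eventually_ge_atTop (1 : ℝ)).and (ht.eventually_gt_atTop (1 / 2 * ‖u‖ ^ 2 / I))).exists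
  refine ⟨s • u, (hle s hs1).trans_lt ?_⟩
  rw [div_lt_iff₀ hIpos] at hs
  exact mul_neg_of_pos_of_neg (by positivity) (by linarith)

/-- A bounded Palais–Smale sequence `u` of the action functional, with gradients `d`, which moves
slowly and does not vanish: each late term exceeds somewhere the threshold `δ` below which the
linear part of the equation dominates. -/
theorem exists_palaisSmale [CompleteSpace E] [Nontrivial E] (h : SuperQuad G g μ)
    (ha : Continuous a) (ha0 : ∀ t, 0 < a t) (haA : ∀ t, a t ≤ A) :
    ∃ (R δ : ℝ) (u d : ℕ → H1 E), 0 < δ ∧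
      (∀ x t, ‖x‖ ≤ δ → ‖a t • g x‖ ≤ 1 / 2 * ‖x‖) ∧ (∀ k, ‖u k‖ ≤ R) ∧
      Tendsto (fun k => ‖d k‖) atTop (𝓝 0) ∧ Tendsto (fun k => ‖u (k + 1) - u k‖) atTop (𝓝 0) ∧
      (∀ k t, u k t = d k t + green (fun s => a s • g (u k s)) t) ∧
      ∀ᶠ k in atTop, ∃ t, δ < ‖u k t‖ := by
  have ha0' := fun t => (ha0 t).le
  have hA : 0 < A := (ha0 0).trans_le (haA 0)
  have hμ := h.two_lt
  obtain ⟨D, hDt, hD⟩ := h.exists_gradient ha ha0' haA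
  obtain ⟨ρ, hρ, hρs⟩ := h.action_small ha ha0' haA hA
  obtain ⟨e, he⟩ := h.exists_action_neg ha ha0 haA
  obtain ⟨δ, hδ, hδs⟩ := h.small (1 / (2 * A)) (by positivity)
  have hδf : ∀ x t, ‖x‖ ≤ δ → ‖a t • g x‖ ≤ 1 / 2 * ‖x‖ := by
    intro x t hx
    refine (norm_force_le ha0' haA (hδs x hx).2 t).trans_eq ?_
    field_simp
  have hD0 : D 0 = 0 := by
    rw [← inner_self_eq_zero (𝕜 := ℝ), hD]
    simp [h.g_zero]
  obtain ⟨R, u, hR, hDu, hslow, hb⟩ := mountain_pass_descent (action a G) D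
    (h.gradient_lipschitz ha ha0' haA hD) (h.action_taylor ha ha0' haA hD) (1 / 2 - 1 / μ) (1 / μ)
    (by rw [sub_pos]; exact one_div_lt_one_div_of_lt two_pos hμ) (by positivity)
    (h.action_ar ha ha0' haA hD) hD0 ρ (1 / 4 * ρ ^ 2) hρ (by positivity)
    (fun v hv => (by positivity : 0 ≤ 1 / 4 * ‖v‖ ^ 2).trans (hρs v hv))
    (fun v hv => by rw [← hv]; exact hρs v hv.le) e he
  refine ⟨R, δ, u, fun k => D (u k), hδ, hδf, hR, hDu, hslow, fun k t => ?_, ?_⟩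
  · rw [hDt]; abel
  · filter_upwards [hDu.eventually_lt_const (show 0 < ρ / 4 by positivity)] with k hk
    by_contra! hall
    -- below the threshold `⟪D u, u⟫ ≥ ‖u‖ ^ 2 / 2`, whereas `‖u‖` is bounded below by `hb`
    have h1 : ∫ t, ⟪a t • g (u k t), u k t⟫_ℝ ≤ ∫ t, 1 / 2 * ‖u k t‖ ^ 2 := by
      refine integral_mono (h.integrable_force_inner ha ha0' haA _ _) ((u k).int_sq.const_mul _)
        fun t => ?_
      have h2 := real_inner_le_norm (a t • g (u k t)) (u k t)
      have h3 := mul_le_mul_of_nonneg_right (hδf _ t (hall t)) (norm_nonneg (u k t))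
      simp only
      nlinarith
    rw [integral_const_mul] at h1
    have h4 := (u k).integral_sq_le
    have h5 := hD (u k) (u k)
    rw [real_inner_self_eq_norm_sq] at h5
    have h6 := real_inner_le_norm (D (u k)) (u k)
    have h7 : 1 / 2 * ρ ^ 2 ≤ ‖u k‖ ^ 2 := by
      have h8 := hb k
      have h9 : 0 ≤ ∫ t, a t * G (u k t) :=
        integral_nonneg fun t => mul_nonneg (ha0' t) (h.nonneg _)
      rw [action] at h8
      linarith
    have h10 : ρ / 2 ≤ ‖u k‖ := by
      refine (pow_le_pow_iff_left₀ (by positivity) (norm_nonneg _) two_ne_zero).1 ?_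
      nlinarith
    nlinarith [norm_nonneg (u k), norm_nonneg (D (u k))]

end SuperQuad

end Functional

/-! ### Limits of translates -/

section Limit

variable {E : Type*} [NormedAddCommGroup E] [InnerProductSpace ℝ E]

/-- A nonzero solution of `q'' - q + a g(q) = 0` that vanishes, with its derivative, at `±∞`. -/
def IsHomoclinic (a : ℝ → ℝ) (g : E → E) (q : ℝ → E) : Prop :=
  q ≠ 0 ∧ ContDiff ℝ 2 q ∧ (∀ t, deriv (deriv q) t - q t + a t • g (q t) = 0) ∧
    Tendsto q atTop (𝓝 0) ∧ Tendsto q atBot (𝓝 0) ∧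
    Tendsto (deriv q) atTop (𝓝 0) ∧ Tendsto (deriv q) atBot (𝓝 0)

lemma norm_green_sub_le [CompleteSpace E] {f : ℝ → E} (hf : Continuous f) {C : ℝ}
    (hC : ∀ t, ‖f t‖ ≤ C) (s t : ℝ) : ‖green f s - green f t‖ ≤ C * |s - t| :=
  convex_univ.norm_image_sub_le_of_norm_hasDerivWithin_le
    (fun x _ => (hasDerivAt_green hf hC x).hasDerivWithinAt) (fun x _ => norm_greenD_le hC x)
    (Set.mem_univ t) (Set.mem_univ s)

/-- Arzelà–Ascoli on the line, in the form of pointwise convergence of a subsequence. -/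
lemma exists_pointwise_limit {F : Type*} [NormedAddCommGroup F] [ProperSpace F]
    {p : ℕ → ℝ → F} {C : ℝ} (hC : ∀ k t, ‖p k t‖ ≤ C)
    (hL : ∀ k s t, ‖p k s - p k t‖ ≤ C * |s - t|) :
    ∃ (φ : ℕ → ℕ) (q : ℝ → F), StrictMono φ ∧ ∀ t, Tendsto (fun k => p (φ k) t) atTop (𝓝 (q t)) := by
  have hC0 : 0 ≤ C := (norm_nonneg _).trans (hC 0 0)
  have hK : IsCompact (Set.pi Set.univ fun _ : ℚ => Metric.closedBall (0 : F) C) :=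
    isCompact_univ_pi fun _ => isCompact_closedBall _ _
  obtain ⟨y, -, φ, hφ, hy⟩ := hK.tendsto_subseq (x := fun k (r : ℚ) => p k r)
    fun k r _ => by simpa using hC k r
  rw [tendsto_pi_nhds] at hy
  have hcau : ∀ t, ∃ z, Tendsto (fun k => p (φ k) t) atTop (𝓝 z) := by
    intro t
    refine cauchySeq_tendsto_of_complete (Metric.cauchySeq_iff'.2 fun ε hε => ?_)
    obtain ⟨r, hr1, hr2⟩ := exists_rat_btwn (show t < t + ε / (4 * (C + 1)) by
      have : 0 < ε / (4 * (C + 1)) := by positivity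
      linarith)
    have hrt : ∀ k, ‖p k t - p k r‖ ≤ ε / 4 := by
      intro k
      refine (hL k t r).trans ?_
      have h1 : |t - r| ≤ ε / (4 * (C + 1)) := by
        rw [abs_sub_comm, abs_of_pos (by linarith)]; linarith
      calc C * |t - r| ≤ (C + 1) * (ε / (4 * (C + 1))) := by gcongr; linarith
        _ = ε / 4 := by field_simp
    obtain ⟨N, hN⟩ := Metric.cauchySeq_iff'.1 (hy r).cauchySeq (ε / 4) (by positivity)
    refine ⟨N, fun k hk => ?_⟩
    have h2 := hN k hk
    rw [dist_eq_norm] at h2 ⊢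
    have h3 := hrt (φ k)
    have h4 := hrt (φ N)
    rw [norm_sub_rev] at h4
    have h5 : p (φ k) t - p (φ N) t = (p (φ k) t - p (φ k) r) + (p (φ k) r - p (φ N) r) +
        (p (φ N) r - p (φ N) t) := by abel
    rw [h5]
    have h6 : ‖p (φ k) r - p (φ N) r‖ < ε / 4 := h2
    have h7 := norm_add₃_le (a := p (φ k) t - p (φ k) r) (b := p (φ k) r - p (φ N) r)
      (c := p (φ N) r - p (φ N) t)
    linarith
  choose q hq using hcau
  exact ⟨φ, q, hφ, hq⟩

namespace SuperQuad

variable {G : E → ℝ} {g : E → E} {μ : ℝ} {a : ℝ → ℝ} {A : ℝ}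

/-- A bounded `L²` fixed point of `q ↦ green (a g(q))` is a homoclinic solution. -/
lemma isHomoclinic_of_fixed [CompleteSpace E] (h : SuperQuad G g μ) (ha : Continuous a)
    (ha0 : ∀ t, 0 ≤ a t) (haA : ∀ t, a t ≤ A) {q : ℝ → E} (hqc : Continuous q) {R : ℝ}
    (hqR : ∀ t, ‖q t‖ ≤ R) (hq2 : Integrable fun t => ‖q t‖ ^ 2)
    (hfix : ∀ t, q t = green (fun s => a s • g (q s)) t) (hq0 : q ≠ 0) : IsHomoclinic a g q := by
  have hfc := h.continuous_force ha hqc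
  have hf2 := h.force_sq_integrable ha ha0 haA hqc hqR hq2
  have hR0 := (norm_nonneg _).trans (hqR 0)
  obtain ⟨C, hC0, hC⟩ := h.force_bound ha0 haA R hR0
  have hfC : ∀ t, ‖a t • g (q t)‖ ≤ C * R := fun t =>
    (hC _ t (hqR t)).trans (mul_le_mul_of_nonneg_left (hqR t) hC0)
  have hq : q = green (fun s => a s • g (q s)) := funext hfix
  have hq' : deriv q = greenD (fun s => a s • g (q s)) := by
    conv_lhs => rw [hq]
    exact deriv_green hfc hfC
  refine ⟨hq0, ?_, fun t => ?_, ?_, ?_, ?_, ?_⟩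
  · rw [hq]; exact contDiff_green hfc hfC
  · rw [hq', (hasDerivAt_greenD hfc hfC t).deriv, ← hfix]; abel
  · rw [hq]; exact (H1.mk _ (green_mem hfc hfC hf2)).tendsto_atTop
  · rw [hq]; exact (H1.mk _ (green_mem hfc hfC hf2)).tendsto_atBot
  · rw [hq']; exact (H1.mk _ (greenD_mem hfc hfC hf2)).tendsto_atTop
  · rw [hq']; exact (H1.mk _ (greenD_mem hfc hfC hf2)).tendsto_atBot

/-- Translates of a bounded Palais–Smale sequence along which `a` is asymptotically invariant have a
limit that solves the original equation, and it is nonzero if the translates do not vanish on a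
bounded interval. -/
theorem exists_homoclinic_of_translates [FiniteDimensional ℝ E] (h : SuperQuad G g μ)
    (ha : Continuous a) (ha0 : ∀ t, 0 ≤ a t) (haA : ∀ t, a t ≤ A) {R : ℝ} {u d : ℕ → H1 E}
    (hR : ∀ k, ‖u k‖ ≤ R) (hd : Tendsto (fun k => ‖d k‖) atTop (𝓝 0))
    (heq : ∀ k t, u k t = d k t + green (fun s => a s • g (u k s)) t)
    {κ : ℕ → ℕ} (hκ : Tendsto κ atTop atTop) {τ : ℕ → ℝ}
    (hτ : ∀ t, Tendsto (fun m => a (t + τ m)) atTop (𝓝 (a t))) {c T : ℝ} (hc : 0 < c) {s : ℕ → ℝ}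
    (hs : ∀ m, |s m| ≤ T) (hcs : ∀ m, c ≤ ‖u (κ m) (s m + τ m)‖) : ∃ q, IsHomoclinic a g q := by
  have := FiniteDimensional.proper_real E
  have hR0 : 0 ≤ R := (norm_nonneg _).trans (hR 0)
  obtain ⟨C₀, hC₀0, hC₀⟩ := h.force_bound ha0 haA R hR0
  have huR : ∀ k t, ‖u k t‖ ≤ R := fun k t => ((u k).norm_apply_le t).trans (hR k)
  set C := C₀ * R with hCdef
  have hfC : ∀ k t, ‖a t • g (u k t)‖ ≤ C := fun k t =>
    (hC₀ _ t (huR k t)).trans (mul_le_mul_of_nonneg_left (huR k t) hC₀0)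
  have hfc : ∀ k, Continuous fun t => a t • g (u k t) := fun k =>
    h.continuous_force ha (u k).continuous
  set p : ℕ → ℝ → E := fun m t => green (fun s => a s • g (u (κ m) s)) (t + τ m) with hp
  obtain ⟨s₀, -, ψ, hψ, hs₀⟩ := (isCompact_Icc (a := -T) (b := T)).tendsto_subseq (x := s)
    fun m => abs_le.1 (hs m)
  have hpL : ∀ m s t, ‖p m s - p m t‖ ≤ C * |s - t| := fun m s t => by
    simpa using norm_green_sub_le (hfc (κ m)) (hfC (κ m)) (s + τ m) (t + τ m)
  obtain ⟨φ, q, hφ, hq⟩ := exists_pointwise_limit (p := fun k => p (ψ k)) (C := C)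
    (fun k t => norm_green_le (hfC _) _) (fun k => hpL _)
  set χ : ℕ → ℕ := fun k => ψ (φ k) with hχ
  have hχt : Tendsto χ atTop atTop := hψ.tendsto_atTop.comp hφ.tendsto_atTop
  have hd0 : ∀ r : ℕ → ℝ, Tendsto (fun k => d (κ (χ k)) (r k)) atTop (𝓝 0) := fun r =>
    squeeze_zero_norm (fun k => (d _).norm_apply_le _) (hd.comp (hκ.comp hχt))
  have hv : ∀ t, Tendsto (fun k => u (κ (χ k)) (t + τ (χ k))) atTop (𝓝 (q t)) := by
    intro t
    have h1 := (hd0 fun k => t + τ (χ k)).add (hq t)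
    rw [zero_add] at h1
    exact h1.congr fun k => (heq _ _).symm
  have hqL : ∀ s t, ‖q s - q t‖ ≤ C * |s - t| := fun s t =>
    le_of_tendsto ((hq s).sub (hq t)).norm (Eventually.of_forall fun k => hpL _ s t)
  have hC0 : 0 ≤ C := by positivity
  have hqc : Continuous q := by
    refine (LipschitzWith.of_dist_le_mul (K := ⟨C, hC0⟩) fun s t => ?_).continuous
    rw [dist_eq_norm, Real.dist_eq]
    exact hqL s t
  have hqR : ∀ t, ‖q t‖ ≤ R := fun t =>
    le_of_tendsto (hv t).norm (Eventually.of_forall fun k => huR _ _)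
  have hfix : ∀ t, q t = green (fun s => a s • g (q s)) t := by
    intro t
    refine tendsto_nhds_unique (hq t) ?_
    have h1 := tendsto_green (f := fun k s => a (s + τ (χ k)) • g (u (κ (χ k)) (s + τ (χ k))))
      (g := fun s => a s • g (q s)) (C := C) (fun k => (hfc _).comp (continuous_id.add_const _))
      (fun k t => hfC _ _) (fun s => ((hτ s).comp hχt).smul ((h.cont_g.tendsto _).comp (hv s))) t
    refine h1.congr fun k => ?_
    exact green_translate (fun s => a s • g (u (κ (χ k)) s)) (τ (χ k)) t
  -- the `L²` bound passes to the limit on every bounded interval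
  have hq2 : Integrable fun t => ‖q t‖ ^ 2 := by
    refine integrable_of_intervalIntegral_norm_bounded (l := atTop) (a := fun N : ℕ => -(N : ℝ))
      (b := fun N : ℕ => (N : ℝ)) (R ^ 2) (fun N => ?_)
      (tendsto_neg_atTop_atBot.comp tendsto_natCast_atTop_atTop) tendsto_natCast_atTop_atTop
      (Eventually.of_forall fun N => ?_)
    · exact (Continuous.integrableOn_Icc (by fun_prop)).mono_set Set.Ioc_subset_Icc_self
    have hlim : Tendsto (fun k => ∫ t in (-(N : ℝ))..N, ‖u (κ (χ k)) (t + τ (χ k))‖ ^ 2) atTop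
        (𝓝 (∫ t in (-(N : ℝ))..N, ‖‖q t‖ ^ 2‖)) := by
      refine intervalIntegral.tendsto_integral_filter_of_dominated_convergence (fun _ => R ^ 2)
        (Eventually.of_forall fun k => ?_) (Eventually.of_forall fun k =>
          Eventually.of_forall fun t _ => ?_) intervalIntegrable_const
        (Eventually.of_forall fun t _ => ?_)
      · have := (u (κ (χ k))).continuous
        exact Continuous.aestronglyMeasurable (by fun_prop)
      · rw [Real.norm_of_nonneg (by positivity)]
        exact pow_le_pow_left₀ (norm_nonneg _) (huR _ _) 2
      · rw [Real.norm_of_nonneg (by positivity)]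
        exact (hv t).norm.pow 2
    refine le_of_tendsto hlim (Eventually.of_forall fun k => ?_)
    have h1 : Integrable fun t => ‖u (κ (χ k)) (t + τ (χ k))‖ ^ 2 :=
      (u (κ (χ k))).int_sq.comp_add_right (τ (χ k))
    rw [intervalIntegral.integral_of_le (by linarith [N.cast_nonneg (α := ℝ)])]
    calc ∫ t in Set.Ioc (-(N : ℝ)) N, ‖u (κ (χ k)) (t + τ (χ k))‖ ^ 2
        ≤ ∫ t, ‖u (κ (χ k)) (t + τ (χ k))‖ ^ 2 :=
          setIntegral_le_integral h1 (Eventually.of_forall fun t => by positivity)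
      _ = ∫ t, ‖u (κ (χ k)) t‖ ^ 2 :=
          integral_add_right_eq_self (fun t => ‖u (κ (χ k)) t‖ ^ 2) (τ (χ k))
      _ ≤ R ^ 2 := ((u _).integral_sq_le).trans (pow_le_pow_left₀ (norm_nonneg _) (hR _) 2)
  have hq0 : c ≤ ‖q s₀‖ := by
    have h1 : Tendsto (fun k => p (χ k) (s (χ k)) - p (χ k) s₀) atTop (𝓝 0) := by
      refine squeeze_zero_norm (fun k => hpL _ _ _) ?_
      have h2 := ((hs₀.comp hφ.tendsto_atTop).sub_const s₀).abs.const_mul C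
      simpa using h2
    have h3 := ((hd0 fun k => s (χ k) + τ (χ k)).add (h1.add (hq s₀))).norm
    rw [zero_add, zero_add] at h3
    refine ge_of_tendsto h3 (Eventually.of_forall fun k => ?_)
    have h4 := hcs (χ k)
    rw [heq] at h4
    refine h4.trans_eq ?_
    congr 2
    simp only [hp, hχ]
    abel
  refine ⟨q, h.isHomoclinic_of_fixed ha ha0 haA hqc hqR hq2 hfix fun h0 => ?_⟩
  rw [h0] at hq0
  simp at hq0
  linarith

end SuperQuad

end Limit

/-! ### Almost periods, barriers and the maximum principle -/

section AlmostPeriodic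

/-- `a` is a uniform limit of trigonometric polynomials. -/
def IsAlmostPeriodic (a : ℝ → ℝ) : Prop :=
  ∀ ε : ℝ, 0 < ε → ∃ (m : ℕ) (lam c d : Fin m → ℝ), ∀ t : ℝ,
    |a t - ∑ j, (c j * Real.cos (lam j * t) + d j * Real.sin (lam j * t))| < ε

lemma IsAlmostPeriodic.bddAbove {a : ℝ → ℝ} (h : IsAlmostPeriodic a) : ∃ A, ∀ t, a t ≤ A := by
  obtain ⟨m, lam, c, d, hP⟩ := h 1 one_pos
  refine ⟨1 + ∑ j, (|c j| + |d j|), fun t => ?_⟩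
  have h1 := (abs_lt.1 (hP t)).2
  have h2 : ∑ j, (c j * Real.cos (lam j * t) + d j * Real.sin (lam j * t)) ≤
      ∑ j, (|c j| + |d j|) := by
    refine Finset.sum_le_sum fun j _ => ?_
    have h3 := abs_mul (c j) (Real.cos (lam j * t))
    have h4 := abs_mul (d j) (Real.sin (lam j * t))
    have h5 := mul_le_of_le_one_right (abs_nonneg (c j)) (abs_cos_le_one (lam j * t))
    have h6 := mul_le_of_le_one_right (abs_nonneg (d j)) (abs_sin_le_one (lam j * t))
    linarith [le_abs_self (c j * Real.cos (lam j * t)), le_abs_self (d j * Real.sin (lam j * t))]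
  linarith

/-- An almost periodic function has arbitrarily large almost periods `τ`, and then `-τ` is one as
well. They are differences of two terms of a sequence along which all phases converge. -/
lemma IsAlmostPeriodic.exists_almostPeriod {a : ℝ → ℝ} (h : IsAlmostPeriodic a) {ε : ℝ}
    (hε : 0 < ε) (T : ℝ) :
    ∃ τ, T ≤ τ ∧ (∀ t, |a (t + τ) - a t| < ε) ∧ ∀ t, |a (t + -τ) - a t| < ε := by
  obtain ⟨m, lam, c, d, hP⟩ := h (ε / 3) (by positivity)
  set P : ℝ → ℝ := fun t => ∑ j, (c j * Real.cos (lam j * t) + d j * Real.sin (lam j * t)) with hPd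
  set S := max T 1 with hS
  have hS1 : 1 ≤ S := le_max_right _ _
  set x : ℕ → Fin m → ℝ × ℝ := fun n j => (Real.cos (lam j * (n * S)), Real.sin (lam j * (n * S)))
    with hx
  have hK : IsCompact (Set.pi Set.univ fun _ : Fin m => Metric.closedBall (0 : ℝ × ℝ) 1) :=
    isCompact_univ_pi fun _ => isCompact_closedBall _ _
  obtain ⟨y, -, φ, hφ, hy⟩ := hK.tendsto_subseq (x := x) fun n j _ => by
    simpa [hx, Prod.norm_def] using ⟨abs_cos_le_one _, abs_sin_le_one _⟩
  rw [tendsto_pi_nhds] at hy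
  have hlim : Tendsto (fun k => ∑ j, (|c j| + |d j|) *
      (|(x (φ (k + 1)) j).1 - (x (φ k) j).1| + |(x (φ (k + 1)) j).2 - (x (φ k) j).2|))
      atTop (𝓝 (∑ j, (|c j| + |d j|) * (|(y j).1 - (y j).1| + |(y j).2 - (y j).2|))) := by
    refine tendsto_finsetSum _ fun j _ => ?_
    have h1 := hy j
    have h2 := h1.comp (tendsto_add_atTop_nat 1)
    have h3 := ((h2.fst_nhds.sub h1.fst_nhds).abs.add (h2.snd_nhds.sub h1.snd_nhds).abs).const_mul
      (|c j| + |d j|)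
    exact h3
  simp only [sub_self, abs_zero, add_zero, mul_zero, Finset.sum_const_zero] at hlim
  obtain ⟨k, hk⟩ := (hlim.eventually_lt_const (show 0 < ε / 3 by positivity)).exists
  set s := (φ k : ℝ) * S with hs
  set s' := (φ (k + 1) : ℝ) * S with hs'
  have hPs : ∀ t, |P (t + s') - P (t + s)| < ε / 3 := by
    intro t
    refine lt_of_le_of_lt ?_ hk
    rw [hPd]
    simp only
    rw [← Finset.sum_sub_distrib]
    refine (Finset.abs_sum_le_sum_abs _ _).trans (Finset.sum_le_sum fun j _ => ?_)
    simp only [hx, ← hs, ← hs']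
    rw [mul_add, mul_add, Real.cos_add, Real.cos_add, Real.sin_add, Real.sin_add]
    set C := Real.cos (lam j * t)
    set Z := Real.sin (lam j * t)
    set p := Real.cos (lam j * s')
    set p' := Real.cos (lam j * s)
    set r := Real.sin (lam j * s')
    set r' := Real.sin (lam j * s)
    have e1 : c j * (C * p - Z * r) + d j * (Z * p + C * r) -
        (c j * (C * p' - Z * r') + d j * (Z * p' + C * r')) =
        (c j * C + d j * Z) * (p - p') + (d j * C - c j * Z) * (r - r') := by ring
    have hC : |C| ≤ 1 := abs_cos_le_one _
    have hZ : |Z| ≤ 1 := abs_sin_le_one _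
    have e2 : |c j * C + d j * Z| ≤ |c j| + |d j| := by
      refine (abs_add_le _ _).trans ?_
      rw [abs_mul, abs_mul]
      exact add_le_add (mul_le_of_le_one_right (abs_nonneg _) hC)
        (mul_le_of_le_one_right (abs_nonneg _) hZ)
    have e3 : |d j * C - c j * Z| ≤ |c j| + |d j| := by
      refine (abs_sub _ _).trans ?_
      rw [abs_mul, abs_mul, add_comm]
      exact add_le_add (mul_le_of_le_one_right (abs_nonneg _) hZ)
        (mul_le_of_le_one_right (abs_nonneg _) hC)
    rw [e1, mul_add]
    refine (abs_add_le _ _).trans ?_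
    rw [abs_mul, abs_mul]
    gcongr
  have has : ∀ t, |a (t + s') - a (t + s)| < ε := by
    intro t
    have h1 := abs_lt.1 (hPs t)
    have h2 := abs_lt.1 (hP (t + s'))
    have h3 := abs_lt.1 (hP (t + s))
    rw [abs_lt]
    simp only [hPd] at h1
    constructor <;> linarith
  refine ⟨s' - s, ?_, fun t => ?_, fun t => ?_⟩
  · have h1 : (φ k : ℝ) + 1 ≤ φ (k + 1) := by exact_mod_cast hφ (Nat.lt_succ_self k)
    have h2 : T ≤ S := le_max_left _ _
    rw [hs, hs', ← sub_mul]
    nlinarith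
  · have := has (t - s)
    rwa [sub_add_cancel, show t - s + s' = t + (s' - s) by ring] at this
  · have := has (t - s')
    rwa [sub_add_cancel, show t - s' + s = t + -(s' - s) by ring, abs_sub_comm] at this

end AlmostPeriodic

section Barrier

variable {E : Type*} [NormedAddCommGroup E] [InnerProductSpace ℝ E]

/-- Maximum principle for `w - w'' = f`. -/
lemma norm_green_le_of_isLocalMax [CompleteSpace E] {f : ℝ → E} (hf : Continuous f) {C : ℝ}
    (hC : ∀ t, ‖f t‖ ≤ C) {t : ℝ} (ht : IsLocalMax (fun s => ‖green f s‖ ^ 2) t) :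
    ‖green f t‖ ≤ ‖f t‖ := by
  by_contra! hlt
  have hF : ∀ s, HasDerivAt (fun s => ‖green f s‖ ^ 2) (2 * ⟪green f s, greenD f s⟫_ℝ) s :=
    fun s => (hasDerivAt_green hf hC s).norm_sq
  have hF' : deriv (fun s => ‖green f s‖ ^ 2) = fun s => 2 * ⟪green f s, greenD f s⟫_ℝ :=
    funext fun s => (hF s).deriv
  have hF2 := ((hasDerivAt_green hf hC t).inner ℝ (hasDerivAt_greenD hf hC t)).const_mul 2
  have hpos : 0 < deriv (deriv (fun s => ‖green f s‖ ^ 2)) t := by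
    rw [hF', hF2.deriv, inner_sub_right, real_inner_self_eq_norm_sq, real_inner_self_eq_norm_sq]
    have h1 := real_inner_le_norm (green f t) (f t)
    have h2 := (norm_nonneg (f t)).trans_lt hlt
    nlinarith [sq_nonneg ‖greenD f t‖]
  have hmin := isLocalMin_of_deriv_deriv_pos hpos ht.deriv_eq_zero (hF t).continuousAt
  have hconst : (fun s => ‖green f s‖ ^ 2) =ᶠ[𝓝 t] fun _ => ‖green f t‖ ^ 2 := by
    filter_upwards [ht, hmin] with s h1 h2 using le_antisymm h1 h2
  have h3 := hconst.deriv.deriv_eq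
  rw [h3] at hpos
  simp at hpos

namespace SuperQuad

variable {G : E → ℝ} {g : E → E} {μ : ℝ} {a : ℝ → ℝ} {A : ℝ}

/-- If there is no homoclinic solution, a Palais–Smale sequence is eventually small at all
sufficiently good almost periods. -/
lemma small_at_almostPeriods [FiniteDimensional ℝ E] (h : SuperQuad G g μ)
    (ha : Continuous a) (ha0 : ∀ t, 0 ≤ a t) (haA : ∀ t, a t ≤ A) {R : ℝ} {u d : ℕ → H1 E}
    (hR : ∀ k, ‖u k‖ ≤ R) (hd : Tendsto (fun k => ‖d k‖) atTop (𝓝 0))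
    (heq : ∀ k t, u k t = d k t + green (fun s => a s • g (u k s)) t)
    (hno : ¬ ∃ q, IsHomoclinic a g q) {c : ℝ} (hc : 0 < c) :
    ∃ ε, 0 < ε ∧ ∃ K, ∀ k, K ≤ k → ∀ τ, (∀ t, |a (t + τ) - a t| < ε) → ‖u k τ‖ < c := by
  by_contra! hcon
  have h1 : ∀ m : ℕ, ∃ k, m ≤ k ∧ ∃ τ, (∀ t, |a (t + τ) - a t| < 1 / ((m : ℝ) + 1)) ∧
      c ≤ ‖u k τ‖ := fun m => hcon _ (by positivity) m
  choose κ hκ τ hτ hcu using h1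
  refine hno (h.exists_homoclinic_of_translates ha ha0 haA hR hd heq
    (tendsto_atTop_mono hκ tendsto_id) (τ := τ) (fun t => ?_) hc (s := fun _ => 0) (T := 0)
    (by simp) (by simpa using hcu))
  rw [tendsto_iff_norm_sub_tendsto_zero]
  exact squeeze_zero (fun m => norm_nonneg _) (fun m => (hτ m t).le)
    tendsto_one_div_add_atTop_nhds_zero_nat

/-- If there were no homoclinic solution, the terms of the Palais–Smale sequence would be small at two
almost periods `±τ` enclosing a point where one term exceeds `δ`. By the maximum principle the
maximum of a late term on `[-τ, τ]` is either small or above `δ`, and by slow motion it cannot jump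
between the two regimes. So every later term exceeds `δ` in `[-τ, τ]`, and a limit is a homoclinic
solution after all. -/
theorem exists_homoclinic [FiniteDimensional ℝ E] [Nontrivial E] (h : SuperQuad G g μ)
    (ha : Continuous a) (ha0 : ∀ t, 0 < a t) (hap : IsAlmostPeriodic a) :
    ∃ q, IsHomoclinic a g q := by
  by_contra hno
  have := FiniteDimensional.complete ℝ E
  obtain ⟨A, haA⟩ := hap.bddAbove
  have ha0' := fun t => (ha0 t).le
  obtain ⟨R, δ, u, d, hδ, hδf, hR, hd, hslow, heq, hbump⟩ := h.exists_palaisSmale ha ha0 haA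
  have hδ8 : 0 < δ / 8 := by positivity
  obtain ⟨ε, hε, K, hK⟩ := h.small_at_almostPeriods ha ha0' haA hR hd heq hno hδ8
  obtain ⟨k₁, hk₁⟩ := eventually_atTop.1 ((eventually_ge_atTop K).and
    ((hd.eventually_lt_const hδ8).and ((hslow.eventually_lt_const hδ8).and hbump)))
  obtain ⟨t₁, ht₁⟩ := (hk₁ k₁ le_rfl).2.2.2
  obtain ⟨τ, hτ, hτ1, hτ2⟩ := hap.exists_almostPeriod hε |t₁|
  have hR0 : 0 ≤ R := (norm_nonneg _).trans (hR 0)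
  obtain ⟨C, hC0, hC⟩ := h.force_bound ha0' haA R hR0
  have hfC : ∀ k t, ‖a t • g (u k t)‖ ≤ C * R := fun k t =>
    have h1 := ((u k).norm_apply_le t).trans (hR k)
    (hC _ t h1).trans (mul_le_mul_of_nonneg_left h1 hC0)
  have hfc : ∀ k, Continuous fun t => a t • g (u k t) := fun k =>
    h.continuous_force ha (u k).continuous
  -- a bump of size `δ` cannot leave the interval between the barriers `-τ` and `τ`
  have hstay : ∀ m : ℕ, ∃ t, |t| ≤ τ ∧ δ < ‖u (k₁ + m) t‖ := by
    intro m
    induction m with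
    | zero => exact ⟨t₁, hτ, ht₁⟩
    | succ m ih =>
      obtain ⟨t, htτ, ht⟩ := ih
      have hτ0 : 0 ≤ τ := (abs_nonneg _).trans htτ
      set k := k₁ + m with hk
      rw [show k₁ + (m + 1) = k + 1 by omega]
      obtain ⟨hKk, hdk, -, -⟩ := hk₁ (k + 1) (by omega)
      have hsk := (hk₁ k (by omega)).2.2.1
      set p := green (fun s => a s • g (u (k + 1) s)) with hp
      -- `p` is a uniformly small perturbation of `u (k + 1)` to which the maximum principle applies
      have hpu : ∀ s, p s = u (k + 1) s - d (k + 1) s := fun s => by rw [heq]; abel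
      have hpu1 : ∀ s, ‖u (k + 1) s‖ ≤ ‖p s‖ + δ / 8 := fun s => by
        rw [heq, add_comm]
        exact (norm_add_le _ _).trans (by gcongr; exact ((d _).norm_apply_le s).trans hdk.le)
      have hpu2 : ∀ s, ‖p s‖ ≤ ‖u (k + 1) s‖ + δ / 8 := fun s => by
        rw [hpu]
        exact (norm_sub_le _ _).trans (by gcongr; exact ((d _).norm_apply_le s).trans hdk.le)
      have hpc : Continuous p := continuous_green (hfc _) (hfC _)
      obtain ⟨s, hs, hmax⟩ := (isCompact_Icc (a := -τ) (b := τ)).exists_isMaxOn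
        ⟨0, by simpa using hτ0⟩ (f := fun s => ‖p s‖ ^ 2) (by fun_prop)
      have hps : δ - 2 * (δ / 8) < ‖p s‖ := by
        have h1 : ‖p t‖ ≤ ‖p s‖ :=
          (pow_le_pow_iff_left₀ (norm_nonneg _) (norm_nonneg _) two_ne_zero).1
            (hmax (abs_le.1 htτ))
        have h2 := (u (k + 1) - u k).norm_apply_le t
        rw [H1.sub_apply] at h2
        have h3 := norm_sub_norm_le (u k t) (u (k + 1) t)
        rw [norm_sub_rev] at h3
        linarith [hpu1 t]
      refine ⟨s, abs_le.2 hs, ?_⟩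
      by_contra! hle
      have hs1 : s ≠ -τ := by
        rintro rfl
        linarith [hK (k + 1) hKk _ hτ2, hpu2 (-τ)]
      have hs2 : s ≠ τ := by
        rintro rfl
        linarith [hK (k + 1) hKk _ hτ1, hpu2 s]
      have hloc : IsLocalMax (fun s => ‖p s‖ ^ 2) s :=
        hmax.isLocalMax (Icc_mem_nhds (lt_of_le_of_ne hs.1 hs1.symm) (lt_of_le_of_ne hs.2 hs2))
      -- below the threshold, `‖p s‖ ≤ ‖f s‖ ≤ ‖u s‖ / 2` with `u` close to `p` makes `p s` small
      have h4 := norm_green_le_of_isLocalMax (hfc _) (hfC _) hloc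
      have h5 := hδf _ s hle
      linarith [hpu1 s]
  choose s hs hsu using hstay
  refine hno (h.exists_homoclinic_of_translates ha ha0' haA hR hd heq (κ := fun m => k₁ + m)
    (tendsto_atTop_mono (fun m => Nat.le_add_left m k₁) tendsto_id) (τ := fun _ => 0) (fun t => ?_)
    hδ hs (fun m => ?_))
  · simp
  · simpa using (hsu m).le

end SuperQuad

end Barrier

/-! ### The theorem -/

/-- Theorem 1.1 (Serra–Tarallo–Terracini): existence of a nonzero homoclinic
solution of `q̈ - q + a(t)∇G(q) = 0` for a Bohr almost periodic coefficient `a`. -/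
theorem homoclinic_solution_almost_periodic
    (n : ℕ) (hn : 1 ≤ n)
    (G : EuclideanSpace ℝ (Fin n) → ℝ)
    (a : ℝ → ℝ) (μ : ℝ)
    -- (C̃1)
    (hG : ContDiff ℝ 2 G)
    -- (C2)
    (hμ : 2 < μ)
    (hAR : ∀ x : EuclideanSpace ℝ (Fin n), x ≠ 0 →
      0 < μ * G x ∧ μ * G x ≤ ⟪gradient G x, x⟫_ℝ)
    -- (C̃3)
    (ha : Continuous a)
    (hainf : 0 < ⨅ t, a t)
    (hap : ∀ ε : ℝ, 0 < ε → ∃ (m : ℕ) (lam c d : Fin m → ℝ),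
      ∀ t : ℝ, |a t - ∑ j, (c j * Real.cos (lam j * t) + d j * Real.sin (lam j * t))| < ε) :
    ∃ q : ℝ → EuclideanSpace ℝ (Fin n), q ≠ 0 ∧ ContDiff ℝ 2 q ∧
      (∀ t, deriv (deriv q) t - q t + a t • gradient G (q t) = 0) ∧
      Tendsto q atTop (nhds 0) ∧ Tendsto q atBot (nhds 0) ∧
      Tendsto (deriv q) atTop (nhds 0) ∧ Tendsto (deriv q) atBot (nhds 0) := by
  have : Nonempty (Fin n) := ⟨⟨0, hn⟩⟩
  -- a function that is unbounded below has the junk infimum `0`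
  have hbdd : BddBelow (Set.range a) := by
    by_contra hb
    rw [Real.iInf_of_not_bddBelow hb] at hainf
    exact lt_irrefl _ hainf
  exact (superQuad_of_ar hG hμ hAR).exists_homoclinic ha
    (fun t => hainf.trans_le (ciInf_le hbdd t)) hap
end

section
/- Let k ∈ ℕ, k ≥ 1, and let q : ℝ → ℝⁿ be a 2k-periodic C¹ function. Then sup_{t∈ℝ} |q(t)| ≤ √2 · (∫_{−k}^{k} (|q(t)|² + |q̇(t)|²) dt)^{1/2}; in particular the constant √2 is independent of k. -/
open Real MeasureTheory Filter Topology InnerProductSpace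

/-!
Since `2k ≥ 1`, each `t` starts a unit interval `[t, t + 1]` inside one period. Integrating the
derivative of `s ↦ (s - (t + 1)) ‖q s‖²` over it gives
`‖q t‖² = ∫ (‖q‖² + (s - (t + 1)) · 2⟪q, q̇⟫)`. As `|s - (t + 1)| ≤ 1` there, the Cauchy–Schwarz
inequality and `2ab ≤ a² + b²` bound the integrand by `2 (‖q‖² + ‖q̇‖²)`. The integral of the
latter over `[t, t + 1]` is at most twice the integral over the period `[t, t + 2k]`, which by
periodicity is the one over `[-k, k]`.
-/

/-- Inequality (2.1): the sup norm of a `2k`-periodic `C¹` function is bounded by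
`√2` times its `E_k` norm, with a constant independent of `k`. -/
theorem sup_norm_le_sqrt_two_mul_sobolev_norm
    (n : ℕ) (k : ℕ) (hk : 1 ≤ k)
    (q : ℝ → EuclideanSpace ℝ (Fin n))
    (hq : ContDiff ℝ 1 q)
    (hper : Function.Periodic q (2 * (k : ℝ))) :
    ∀ t : ℝ, ‖q t‖ ≤
      Real.sqrt 2 *
        Real.sqrt (∫ t in (-(k : ℝ))..(k : ℝ), (‖q t‖ ^ 2 + ‖deriv q t‖ ^ 2)) := by
  intro t
  have hk' : (1 : ℝ) ≤ k := by exact_mod_cast hk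
  have hqc : Continuous q := hq.continuous
  have hdc : Continuous (deriv q) := hq.continuous_deriv_one
  set F : ℝ → ℝ := fun s => ‖q s‖ ^ 2 + ‖deriv q s‖ ^ 2 with hF
  have hFc : Continuous F := by fun_prop
  have hF0 : ∀ s, 0 ≤ F s := fun s => by positivity
  have hdper : Function.Periodic (deriv q) (2 * (k : ℝ)) := by
    intro s
    rw [← deriv_comp_add_const, show (fun x => q (x + 2 * (k : ℝ))) = q from funext hper]
  have hFper : Function.Periodic F (2 * (k : ℝ)) := by
    intro s
    simp only [hF, hper s, hdper s]
  have hperiod : ∫ s in t..(t + 2 * k), F s = ∫ s in (-(k : ℝ))..k, F s := by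
    rw [hFper.intervalIntegral_add_eq t (-(k : ℝ))]
    congr 1
    ring
  have hsub : ∫ s in t..(t + 1), F s ≤ ∫ s in t..(t + 2 * k), F s :=
    intervalIntegral.integral_mono_interval le_rfl (by linarith) (by linarith)
      (Eventually.of_forall hF0) (hFc.intervalIntegrable _ _)
  have hderiv : ∀ s : ℝ, HasDerivAt (fun s => (s - (t + 1)) * ‖q s‖ ^ 2)
      (1 * ‖q s‖ ^ 2 + (s - (t + 1)) * (2 * ⟪q s, deriv q s⟫_ℝ)) s := fun s =>
    ((hasDerivAt_id' s).sub_const _).mul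
      ((hq.differentiable one_ne_zero).differentiableAt.hasDerivAt.norm_sq)
  have hcont : Continuous fun s : ℝ =>
      1 * ‖q s‖ ^ 2 + (s - (t + 1)) * (2 * ⟪q s, deriv q s⟫_ℝ) := by fun_prop
  have hftc := intervalIntegral.integral_eq_sub_of_hasDerivAt (a := t) (b := t + 1)
    (fun s _ => hderiv s) (hcont.intervalIntegrable _ _)
  have hbound : ∫ s in t..(t + 1), (1 * ‖q s‖ ^ 2 + (s - (t + 1)) * (2 * ⟪q s, deriv q s⟫_ℝ))
      ≤ ∫ s in t..(t + 1), 2 * F s := by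
    refine intervalIntegral.integral_mono_on (by linarith) (hcont.intervalIntegrable _ _)
      ((hFc.const_mul 2).intervalIntegrable _ _) fun s hs => ?_
    have hw : |s - (t + 1)| ≤ 1 := abs_le.2 ⟨by linarith [hs.1], by linarith [hs.2]⟩
    have hprod : (s - (t + 1)) * ⟪q s, deriv q s⟫_ℝ ≤ 1 * (‖q s‖ * ‖deriv q s‖) := by
      refine (le_abs_self _).trans ?_
      rw [abs_mul]
      exact mul_le_mul hw (abs_real_inner_le_norm _ _) (abs_nonneg _) zero_le_one
    simp only [hF]
    nlinarith [sq_nonneg (‖q s‖ - ‖deriv q s‖), sq_nonneg ‖deriv q s‖]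
  rw [intervalIntegral.integral_const_mul] at hbound
  rw [← Real.sqrt_mul zero_le_two]
  apply Real.le_sqrt_of_sq_le
  linarith
end

section
/- Let G : ℝⁿ → ℝ be differentiable with G(0) = 0 and suppose there exists μ > 2 such that 0 < μ·G(x) ≤ ⟨∇G(x), x⟩ for all x ≠ 0. Let a : ℝ → ℝ be continuous and suppose m := inf{a(t)·G(x) : t ∈ ℝ, |x| = 1} > 0. Then for every k ∈ ℕ, every ζ ∈ ℝ \ {0} and every continuous 2k-periodic function q : ℝ → ℝⁿ, q not identically zero, one has ∫_{−k}^{k} a(t)·G(ζ·q(t)) dt ≥ m·|ζ|^μ·∫_{−k}^{k} |q(t)|^μ dt − 2k·m. -/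
/-!
The map `s ↦ s ^ (-μ) * G (s • u)` is nondecreasing on `[1, ∞)`, because its derivative is
`s ^ (-μ - 1) * (⟪∇G(su), su⟫ - μ G(su))`, which the Ambrosetti–Rabinowitz condition makes
nonnegative. Hence `G x ≥ ‖x‖ ^ μ * G (x / ‖x‖)` for `‖x‖ ≥ 1`. Multiplying by `a t > 0` and
bounding `a t * G (x / ‖x‖)` by the infimum `m` gives `a t * G x ≥ m ‖x‖ ^ μ` there, while for
`‖x‖ < 1` one has `a t * G x ≥ 0 ≥ m ‖x‖ ^ μ - m`. So `m ‖x‖ ^ μ - m ≤ a t * G x` for all `x`, and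
the claim is the integral of this inequality at `x = ζ q(t)` over `[-k, k]`.
-/

open Real MeasureTheory Filter Topology InnerProductSpace

/-- Superquadratic growth along rays: outside the unit ball `G` dominates the `μ`-homogeneous
extension of its restriction to the unit sphere. -/
lemma rpow_norm_mul_le_of_ambrosetti_rabinowitz
    {n : ℕ} {G : EuclideanSpace ℝ (Fin n) → ℝ} {μ : ℝ}
    (hG : Differentiable ℝ G)
    (hAR : ∀ x : EuclideanSpace ℝ (Fin n), x ≠ 0 → μ * G x ≤ ⟪gradient G x, x⟫_ℝ)
    {u : EuclideanSpace ℝ (Fin n)} (hu : u ≠ 0) {r : ℝ} (hr : 1 ≤ r) :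
    r ^ μ * G u ≤ G (r • u) := by
  have hder : ∀ s : ℝ, 0 < s → HasDerivAt (fun s : ℝ => s ^ (-μ) * G (s • u))
      (-μ * s ^ (-μ - 1) * G (s • u) + s ^ (-μ) * ⟪gradient G (s • u), u⟫_ℝ) s := by
    intro s hs
    have h1 : HasDerivAt (fun s : ℝ => s • u) u s := by
      simpa using (hasDerivAt_id s).smul_const u
    have h2 : HasDerivAt (fun s : ℝ => G (s • u)) ⟪gradient G (s • u), u⟫_ℝ s := by
      have h := (hG (s • u)).hasGradientAt.hasFDerivAt.comp_hasDerivAt s h1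
      rw [InnerProductSpace.toDual_apply_apply] at h
      exact h
    exact (Real.hasDerivAt_rpow_const (Or.inl hs.ne')).mul h2
  have hmono : MonotoneOn (fun s : ℝ => s ^ (-μ) * G (s • u)) (Set.Ici 1) := by
    refine monotoneOn_of_deriv_nonneg (convex_Ici 1) ?_ ?_ ?_
    · intro s hs
      exact (hder s (zero_lt_one.trans_le hs)).continuousAt.continuousWithinAt
    · intro s hs
      rw [interior_Ici] at hs
      exact (hder s (zero_lt_one.trans hs)).differentiableAt.differentiableWithinAt
    · intro s hs
      rw [interior_Ici] at hs
      have hs0 : 0 < s := zero_lt_one.trans hs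
      rw [(hder s hs0).deriv]
      have h := hAR (s • u) (smul_ne_zero hs0.ne' hu)
      rw [inner_smul_right] at h
      have hp : s ^ (-μ) = s ^ (-μ - 1) * s := by
        rw [Real.rpow_sub_one hs0.ne']; field_simp
      rw [hp]
      have := mul_nonneg (Real.rpow_nonneg hs0.le (-μ - 1)) (sub_nonneg.2 h)
      linarith
  have h := hmono (Set.mem_Ici.2 le_rfl) (Set.mem_Ici.2 hr) hr
  have hr0 : 0 < r := zero_lt_one.trans_le hr
  simp only [Real.one_rpow, one_smul, one_mul] at h
  calc r ^ μ * G u ≤ r ^ μ * (r ^ (-μ) * G (r • u)) :=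
        mul_le_mul_of_nonneg_left h (Real.rpow_nonneg hr0.le μ)
    _ = G (r • u) := by
        rw [← mul_assoc, ← Real.rpow_add hr0, add_neg_cancel, Real.rpow_zero, one_mul]

/-- Inequality (2.6): lower bound `∫ a G(ζq) ≥ m |ζ|^μ ∫ |q|^μ − 2km` for a continuous
`2k`-periodic function `q` that is not identically zero. -/
theorem integral_aG_scaling_lower_bound
    (n : ℕ) (G : EuclideanSpace ℝ (Fin n) → ℝ) (a : ℝ → ℝ) (μ m : ℝ)
    (hG : Differentiable ℝ G)
    (hG0 : G 0 = 0)
    (hμ : 2 < μ)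
    (hAR : ∀ x : EuclideanSpace ℝ (Fin n), x ≠ 0 →
      0 < μ * G x ∧ μ * G x ≤ ⟪gradient G x, x⟫_ℝ)
    (ha : Continuous a)
    (hmdef : m = sInf {y : ℝ | ∃ t : ℝ, ∃ x : EuclideanSpace ℝ (Fin n), ‖x‖ = 1 ∧ y = a t * G x})
    (hm : 0 < m)
    (k : ℕ) (hk : 1 ≤ k)
    (ζ : ℝ) (hζ : ζ ≠ 0)
    (q : ℝ → EuclideanSpace ℝ (Fin n))
    (hqc : Continuous q)
    (hqper : Function.Periodic q (2 * (k : ℝ)))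
    (hq0 : q ≠ 0) :
    m * |ζ| ^ μ * (∫ t in (-(k : ℝ))..(k : ℝ), ‖q t‖ ^ μ) - 2 * (k : ℝ) * m ≤
      ∫ t in (-(k : ℝ))..(k : ℝ), a t * G (ζ • q t) := by
  have hμ0 : 0 < μ := by linarith
  -- The junk values of `sInf` are all `0`, so `0 < m` forces the set to be nonempty and bounded
  -- below.
  have hbdd : BddBelow {y : ℝ | ∃ t : ℝ, ∃ x : EuclideanSpace ℝ (Fin n),
      ‖x‖ = 1 ∧ y = a t * G x} := by
    by_contra h
    rw [Real.sInf_of_not_bddBelow h] at hmdef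
    exact hm.ne' hmdef
  have hle : ∀ t : ℝ, ∀ x : EuclideanSpace ℝ (Fin n), ‖x‖ = 1 → m ≤ a t * G x := by
    intro t x hx
    rw [hmdef]
    exact csInf_le hbdd ⟨t, x, hx, rfl⟩
  have hGpos : ∀ x : EuclideanSpace ℝ (Fin n), x ≠ 0 → 0 < G x := fun x hx =>
    (mul_pos_iff_of_pos_left hμ0).1 (hAR x hx).1
  have hGnn : ∀ x : EuclideanSpace ℝ (Fin n), 0 ≤ G x := by
    intro x
    rcases eq_or_ne x 0 with rfl | hx
    · exact hG0.ge
    · exact (hGpos x hx).le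
  obtain ⟨e, he⟩ : ∃ e : EuclideanSpace ℝ (Fin n), ‖e‖ = 1 := by
    obtain ⟨y, t, x, hx, -⟩ : {y : ℝ | ∃ t : ℝ, ∃ x : EuclideanSpace ℝ (Fin n),
        ‖x‖ = 1 ∧ y = a t * G x}.Nonempty := by
      by_contra h
      rw [Set.not_nonempty_iff_eq_empty.1 h, Real.sInf_empty] at hmdef
      exact hm.ne' hmdef
    exact ⟨x, hx⟩
  have hapos : ∀ t, 0 < a t := fun t =>
    pos_of_mul_pos_left (hm.trans_le (hle t e he)) (hGnn e)
  have key : ∀ t : ℝ, ∀ x : EuclideanSpace ℝ (Fin n), m * ‖x‖ ^ μ - m ≤ a t * G x := by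
    intro t x
    rcases le_total 1 ‖x‖ with h1 | h1
    · have hx0 : ‖x‖ ≠ 0 := by linarith
      have hx : x ≠ 0 := norm_ne_zero_iff.1 hx0
      have hu1 : ‖(‖x‖⁻¹ • x)‖ = 1 := by
        rw [norm_smul, norm_inv, norm_norm, inv_mul_cancel₀ hx0]
      have hu : ‖x‖⁻¹ • x ≠ 0 := smul_ne_zero (inv_ne_zero hx0) hx
      have h2 := rpow_norm_mul_le_of_ambrosetti_rabinowitz hG (fun x hx => (hAR x hx).2) hu h1
      rw [smul_inv_smul₀ hx0] at h2
      have h3 := mul_le_mul_of_nonneg_left h2 (hapos t).le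
      have h4 := mul_le_mul_of_nonneg_left (hle t _ hu1) (Real.rpow_nonneg (norm_nonneg x) μ)
      linarith
    · have h2 := mul_nonneg (hapos t).le (hGnn x)
      have h3 := mul_le_mul_of_nonneg_left (Real.rpow_le_one (norm_nonneg x) h1 hμ0.le) hm.le
      linarith
  have hk0 : -(k : ℝ) ≤ k := by
    have : (0 : ℝ) ≤ k := k.cast_nonneg
    linarith
  have hcq : Continuous fun t => ‖q t‖ ^ μ :=
    hqc.norm.rpow_const fun _ => Or.inr hμ0.le
  have hcl : Continuous fun t => m * |ζ| ^ μ * ‖q t‖ ^ μ := continuous_const.mul hcq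
  have hcr : Continuous fun t => a t * G (ζ • q t) :=
    ha.mul (hG.continuous.comp (hqc.const_smul ζ))
  have hint := intervalIntegral.integral_mono_on (μ := volume) hk0
    ((hcl.sub (continuous_const (y := m))).intervalIntegrable _ _)
    (hcr.intervalIntegrable _ _) (fun t _ => by
      have h := key t (ζ • q t)
      rw [norm_smul, Real.norm_eq_abs, Real.mul_rpow (abs_nonneg ζ) (norm_nonneg _)] at h
      rwa [← mul_assoc] at h)
  simp only [Pi.sub_apply] at hint
  rw [intervalIntegral.integral_sub (hcl.intervalIntegrable _ _)
    (continuous_const.intervalIntegrable _ _), intervalIntegral.integral_const_mul,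
    intervalIntegral.integral_const, smul_eq_mul] at hint
  linarith
end
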